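/- arXiv:2003.07563 — 7 statements merged into one kernel-verified Lean document; each statement's English description precedes it below -/
import Mathlib

section
/- For every uniformly bounded orthonormal system Φ on [0,1] there exists a function f ∈ L¹[0,1] such that the set of points x ∈ [0,1] at which sup_{m≥1} |S_m(f,x)| = ∞ (i.e. the Fourier series of f with respect to Φ diverges unboundedly) has positive Lebesgue measure. -/
open MeasureTheory Set Filter

/-- `φ` (indexed from `1`) is an orthonormal system on `[0,1]`:
`∫_0^1 φ_n φ_m = δ_{nm}`. -/
def IsONS (φ : ℕ → ℝ → ℝ) : Prop :=
  (∀ n, 1 ≤ n → Measurable (φ n)) ∧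
  ∀ n m, 1 ≤ n → 1 ≤ m →
    (∫ t in Set.Icc (0:ℝ) 1, φ n t * φ m t) = if n = m then 1 else 0

/-- `φ` is uniformly bounded by `M` on `[0,1]`. -/
def UnifBounded (φ : ℕ → ℝ → ℝ) (M : ℝ) : Prop :=
  0 < M ∧ ∀ n, 1 ≤ n → ∀ᵐ t ∂(volume.restrict (Set.Icc (0:ℝ) 1)), |φ n t| ≤ M

/-- Fourier coefficient `c_n(f) = ∫_0^1 f φ_n`. -/
noncomputable def fourierCoef (φ : ℕ → ℝ → ℝ) (f : ℝ → ℝ) (n : ℕ) : ℝ :=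
  ∫ t in Set.Icc (0:ℝ) 1, f t * φ n t

/-- Partial sum `S_m(f,x) = ∑_{n=1}^m c_n(f) φ_n(x)`. -/
noncomputable def partialSum (φ : ℕ → ℝ → ℝ) (f : ℝ → ℝ) (m : ℕ) (x : ℝ) : ℝ :=
  ∑ n ∈ Finset.Icc 1 m, fourierCoef φ f n * φ n x

/-!
Fix a point `x` and consider the kernels `∑_{m ≤ n < m + r} e_n(x) e_n(t)`, as functions of `t`, for
`r ≤ 2 ^ K`. Over every dyadic interval of indices whose part of `∑ e_n(x) ^ 2` is not too small,
orthogonality and the uniform bound force either a large increment or a large `L¹` norm. If all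
`L¹` norms were at most `L`, the large increments would have to carry the variance at all `K + 1`
dyadic scales, while a stopping-time selection bounds their total weight independently of `K`. So
for infinitely many `m` some kernel has a large `L¹` norm, at all `x` in a set of positive measure
which depends on `K` but whose measure is bounded below.

These kernels tend weakly to `0` as `m → ∞`, while their absolute values have a weak limit of large
mean. Hence, with probability at least `1 / 2`, the average of the kernel over many independent
random points `t_j` is large for some `m`: the average of the point masses at the `t_j` has large
partial sums at `x`.

If the Fourier series of every `f ∈ L¹` were almost everywhere bounded, the Banach principle would
bound the majorant in measure, uniformly on the unit ball of `L¹`. This bound passes to limits and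
hence to averages of point masses, and Fubini's theorem yields a contradiction.
-/

/-- The sum of `w i b` over all dyadic subintervals `[b, b + 2 ^ i)`, `i ≤ k`, of the interval
`[a, a + 2 ^ k)`, that is, over the binary tree whose root is the whole interval and in which the
children of an interval are its two halves. -/
def dyadicSum (w : ℕ → ℕ → ℝ) : ℕ → ℕ → ℝ
  | 0, a => w 0 a
  | k + 1, a => w (k + 1) a + (dyadicSum w k a + dyadicSum w k (a + 2 ^ k))

section DyadicSum

variable {w : ℕ → ℕ → ℝ} {c : ℝ}

theorem mul_sub_le_dyadicSum {A : ℕ → ℝ} {N : ℕ}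
    (hw : ∀ i b, b + 2 ^ i ≤ N → A (b + 2 ^ i) - A b ≤ w i b) {k a : ℕ} (hN : a + 2 ^ k ≤ N) :
    (k + 1) * (A (a + 2 ^ k) - A a) ≤ dyadicSum w k a := by
  induction k generalizing a with
  | zero => simpa [dyadicSum] using hw 0 a hN
  | succ k ih =>
    have hroot := hw (k + 1) a hN
    rw [show a + 2 ^ (k + 1) = a + 2 ^ k + 2 ^ k by ring] at hN hroot ⊢
    have hleft := ih ((Nat.le_add_right _ _).trans hN)
    have hright := ih hN
    simp only [dyadicSum]
    push_cast
    linarith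

theorem dyadicSum_le_of_le_four_pow (hc : 0 ≤ c) (hw : ∀ i b, w i b ≤ c * 4 ^ i) (k a : ℕ) :
    dyadicSum w k a ≤ 2 * c * 4 ^ k := by
  induction k generalizing a with
  | zero =>
    have hroot := hw 0 a
    simp only [dyadicSum]
    linarith
  | succ k ih =>
    have hroot := hw (k + 1) a
    simp only [dyadicSum]
    rw [pow_succ] at hroot ⊢
    linarith [ih a, ih (a + 2 ^ k)]

theorem dyadicSum_le_of_eq_zero_or_le {T : ℕ → ℝ} (hT : Monotone T) (hc : 0 ≤ c)
    (hw : ∀ i b, w i b ≤ c * 4 ^ i) (hwT : ∀ i b, w i b = 0 ∨ c * 4 ^ i ≤ T (b + 2 ^ i) - T b)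
    (k a : ℕ) : dyadicSum w k a ≤ 2 * (T (a + 2 ^ k) - T a) := by
  induction k generalizing a with
  | zero =>
    have hmono := hT (Nat.le_add_right a (2 ^ 0))
    have hroot := hw 0 a
    simp only [dyadicSum]
    rcases hwT 0 a with hzero | hlarge <;> linarith
  | succ k ih =>
    rcases hwT (k + 1) a with hzero | hlarge
    · have hleft := ih a
      have hright := ih (a + 2 ^ k)
      rw [show a + 2 ^ (k + 1) = a + 2 ^ k + 2 ^ k by ring]
      simp only [dyadicSum, hzero]
      linarith
    · linarith [dyadicSum_le_of_le_four_pow hc hw (k + 1) a]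

end DyadicSum

section DyadicSumIntegral

variable {Ω : Type*} [MeasurableSpace Ω] {μ : Measure Ω} {w : ℕ → ℕ → Ω → ℝ}

theorem integrable_dyadicSum (hw : ∀ i b, Integrable (w i b) μ) (k a : ℕ) :
    Integrable (fun x => dyadicSum (fun i b => w i b x) k a) μ := by
  induction k generalizing a with
  | zero => exact hw 0 a
  | succ k ih => exact (hw (k + 1) a).add ((ih a).add (ih (a + 2 ^ k)))

theorem integral_dyadicSum (hw : ∀ i b, Integrable (w i b) μ) (k a : ℕ) :
    ∫ x, dyadicSum (fun i b => w i b x) k a ∂μ = dyadicSum (fun i b => ∫ x, w i b x ∂μ) k a := by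
  induction k generalizing a with
  | zero => rfl
  | succ k ih =>
    have hint := integrable_dyadicSum hw k
    simp only [dyadicSum]
    rw [← ih, ← ih, ← integral_add (hint a) (hint (a + 2 ^ k))]
    exact integral_add (hw (k + 1) a) ((hint a).add (hint (a + 2 ^ k)))

end DyadicSumIntegral

/-- The odd function `u ↦ sign u * u ^ 2`, whose increments are small near `0` but never much
smaller than the square of the increment of its argument. -/
def signedSq (u : ℝ) : ℝ := u * |u|

theorem sub_sq_le_two_mul_abs_signedSq_sub (u v : ℝ) :
    (u - v) ^ 2 ≤ 2 * |signedSq u - signedSq v| := by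
  wlog hvu : v ≤ u generalizing u v
  · rw [← neg_sub v u, neg_sq, abs_sub_comm]
    exact this v u (not_le.1 hvu).le
  suffices (u - v) ^ 2 ≤ 2 * (signedSq u - signedSq v) by
    linarith [le_abs_self (signedSq u - signedSq v)]
  simp only [signedSq]
  rcases le_total 0 u with hu | hu <;> rcases le_total 0 v with hv | hv <;>
    simp only [abs_of_nonneg, abs_of_nonpos, hu, hv] <;>
    nlinarith [sq_nonneg (u + v)]

theorem abs_signedSq_sub_le (u v : ℝ) :
    |signedSq u - signedSq v| ≤ |u - v| * (|u| + |v|) := by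
  have hsplit : signedSq u - signedSq v = (u - v) * |u| + (|u| - |v|) * v := by
    simp only [signedSq]
    ring
  have hright : |(|u| - |v|) * v| ≤ |u - v| * |v| := by
    rw [abs_mul]
    exact mul_le_mul_of_nonneg_right (abs_abs_sub_abs_le_abs_sub u v) (abs_nonneg v)
  rw [hsplit, mul_add]
  refine (abs_add_le _ _).trans (add_le_add (le_of_eq ?_) hright)
  rw [abs_mul, abs_abs]

section LipschitzSequence

variable {s : ℕ → ℝ} {Λ η : ℝ}

theorem abs_sub_le_mul_of_abs_succ_sub_le (hs : ∀ n, |s (n + 1) - s n| ≤ Λ) (a n : ℕ) :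
    |s (a + n) - s a| ≤ n * Λ := by
  have h := dist_le_range_sum_of_dist_le (f := fun i => s (a + i)) (d := fun _ => Λ) n
    fun {i} _ => by rw [dist_comm]; exact hs (a + i)
  rw [dist_comm] at h
  simpa [Real.dist_eq] using h

theorem sq_sub_le_sum_abs_of_abs_succ_sub_le (hs : ∀ n, |s (n + 1) - s n| ≤ Λ) (a n : ℕ) :
    (s (a + n) - s a) ^ 2 ≤ 2 * Λ * ∑ i ∈ Finset.range n, (|s (a + i + 1)| + |s (a + i)|) := by
  let F : ℕ → ℝ := fun i => signedSq (s (a + i))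
  have hstep (i : ℕ) : |F (i + 1) - F i| ≤ Λ * (|s (a + i + 1)| + |s (a + i)|) :=
    (abs_signedSq_sub_le _ _).trans (mul_le_mul_of_nonneg_right (hs (a + i)) (by positivity))
  calc (s (a + n) - s a) ^ 2 ≤ 2 * |F n - F 0| := sub_sq_le_two_mul_abs_signedSq_sub _ _
    _ = 2 * |∑ i ∈ Finset.range n, (F (i + 1) - F i)| := by rw [Finset.sum_range_sub]
    _ ≤ 2 * ∑ i ∈ Finset.range n, Λ * (|s (a + i + 1)| + |s (a + i)|) := by
        gcongr
        exact (Finset.abs_sum_le_sum_abs _ _).trans (Finset.sum_le_sum fun i _ => hstep i)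
    _ = _ := by rw [← Finset.mul_sum, mul_assoc]

/-- The weight `Λ ^ 2 * 4 ^ i` of a dyadic interval `[b, b + 2 ^ i)` over which the sequence `s`
has an increment of size at least `η * 2 ^ i`, and `0` for the other intervals. For a
`Λ`-Lipschitz sequence the weight dominates the square of these large increments. -/
noncomputable def jumpWeight (Λ η : ℝ) (s : ℕ → ℝ) (i b : ℕ) : ℝ :=
  if η * 2 ^ i ≤ |s (b + 2 ^ i) - s b| then Λ ^ 2 * 4 ^ i else 0

theorem jumpWeight_le (Λ η : ℝ) (s : ℕ → ℝ) (i b : ℕ) : jumpWeight Λ η s i b ≤ Λ ^ 2 * 4 ^ i := by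
  unfold jumpWeight
  split_ifs
  · exact le_rfl
  · positivity

theorem sq_sub_le_jumpWeight_add (hs : ∀ n, |s (n + 1) - s n| ≤ Λ) (hη : 0 ≤ η) (i b : ℕ) :
    (s (b + 2 ^ i) - s b) ^ 2 ≤
      jumpWeight Λ η s i b + η * 2 ^ i * (|s (b + 2 ^ i)| + |s b|) := by
  unfold jumpWeight
  split_ifs with hjump
  · have hlip : |s (b + 2 ^ i) - s b| ≤ 2 ^ i * Λ := by
      exact_mod_cast abs_sub_le_mul_of_abs_succ_sub_le hs b (2 ^ i)
    calc (s (b + 2 ^ i) - s b) ^ 2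
        ≤ (2 ^ i * Λ) ^ 2 := sq_le_sq' (abs_le.1 hlip).1 (abs_le.1 hlip).2
      _ = Λ ^ 2 * 4 ^ i := by rw [mul_pow, ← pow_mul, mul_comm i, pow_mul]; norm_num [mul_comm]
      _ ≤ _ := le_add_of_nonneg_right (by positivity)
  · rw [zero_add, ← sq_abs, sq]
    exact mul_le_mul (not_le.1 hjump).le (abs_sub _ _) (abs_nonneg _) (by positivity)

theorem dyadicSum_jumpWeight_le (hs : ∀ n, |s (n + 1) - s n| ≤ Λ) (hη : 0 < η) (k : ℕ) :
    dyadicSum (jumpWeight Λ η s) k 0 ≤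
      4 * Λ ^ 3 / η ^ 2 * ∑ i ∈ Finset.range (2 ^ k), (|s (i + 1)| + |s i|) := by
  have hΛ : 0 ≤ Λ := (abs_nonneg _).trans (hs 0)
  let T : ℕ → ℝ := fun r => 2 * Λ ^ 3 / η ^ 2 * ∑ i ∈ Finset.range r, (|s (i + 1)| + |s i|)
  have hT : Monotone T := monotone_nat_of_le_succ fun r =>
    mul_le_mul_of_nonneg_left (Finset.sum_le_sum_of_subset_of_nonneg
      (Finset.range_mono r.le_succ) fun _ _ _ => by positivity) (by positivity)
  have hjumpT (i b : ℕ) :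
      jumpWeight Λ η s i b = 0 ∨ Λ ^ 2 * 4 ^ i ≤ T (b + 2 ^ i) - T b := by
    unfold jumpWeight
    split_ifs with hjump
    · right
      have hsq : (η * 2 ^ i) ^ 2 ≤
          2 * Λ * ∑ j ∈ Finset.range (2 ^ i), (|s (b + j + 1)| + |s (b + j)|) :=
        calc (η * 2 ^ i) ^ 2 ≤ |s (b + 2 ^ i) - s b| ^ 2 := by gcongr
          _ ≤ _ := by rw [sq_abs]; exact sq_sub_le_sum_abs_of_abs_succ_sub_le hs b (2 ^ i)
      have hpow : ((2 : ℝ) ^ i) ^ 2 = 4 ^ i := by rw [← pow_mul, mul_comm, pow_mul]; norm_num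
      simp only [T, Finset.sum_range_add, mul_add, add_sub_cancel_left]
      rw [div_mul_eq_mul_div, le_div_iff₀ (by positivity)]
      rw [mul_pow, hpow] at hsq
      calc Λ ^ 2 * 4 ^ i * η ^ 2 = Λ ^ 2 * (η ^ 2 * 4 ^ i) := by ring
        _ ≤ _ := mul_le_mul_of_nonneg_left hsq (sq_nonneg Λ)
        _ = _ := by ring
    · exact Or.inl rfl
  refine (dyadicSum_le_of_eq_zero_or_le hT (sq_nonneg Λ) (jumpWeight_le Λ η s) hjumpT
    k 0).trans_eq ?_
  simp only [T, zero_add, Finset.sum_range_zero]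
  ring

end LipschitzSequence

section OrthogonalIncrements

variable {Ω : Type*} [MeasurableSpace Ω] {μ : Measure Ω} {s : ℕ → Ω → ℝ}
  {A : ℕ → ℝ} {Λ L η : ℝ} {K : ℕ}

theorem integrable_jumpWeight [IsFiniteMeasure μ] (hs : ∀ n, AEMeasurable (s n) μ) (i b : ℕ) :
    Integrable (fun x => jumpWeight Λ η (fun n => s n x) i b) μ := by
  have hset : NullMeasurableSet {x | η * 2 ^ i ≤ |s (b + 2 ^ i) x - s b x|} μ :=
    nullMeasurableSet_le aemeasurable_const ((hs _).sub (hs _)).abs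
  refine ((integrable_const (Λ ^ 2 * 4 ^ i)).indicator₀ hset).congr (ae_of_all _ fun x => ?_)
  simp only [jumpWeight, indicator_apply, mem_ofPred_eq]

theorem integral_sq_sub_le_integral_jumpWeight_add [IsFiniteMeasure μ]
    (hs : ∀ n, Integrable (s n) μ) (hΛ : ∀ n x, |s (n + 1) x - s n x| ≤ Λ) (hη : 0 ≤ η) {i b : ℕ}
    (hleft : ∫ x, |s b x| ∂μ ≤ L) (hright : ∫ x, |s (b + 2 ^ i) x| ∂μ ≤ L) :
    ∫ x, (s (b + 2 ^ i) x - s b x) ^ 2 ∂μ ≤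
      ∫ x, jumpWeight Λ η (fun n => s n x) i b ∂μ + 2 * L * η * 2 ^ i := by
  have hjump := integrable_jumpWeight (Λ := Λ) (η := η) (fun n => (hs n).aemeasurable) i b
  have hrest := (((hs (b + 2 ^ i)).abs.add (hs b).abs).const_mul (η * 2 ^ i))
  calc ∫ x, (s (b + 2 ^ i) x - s b x) ^ 2 ∂μ
      ≤ ∫ x, (jumpWeight Λ η (fun n => s n x) i b +
          η * 2 ^ i * (|s (b + 2 ^ i) x| + |s b x|)) ∂μ :=
        integral_mono_of_nonneg (ae_of_all _ fun x => sq_nonneg _) (hjump.add hrest)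
          (ae_of_all _ fun x =>
            sq_sub_le_jumpWeight_add (s := fun n => s n x) (fun n => hΛ n x) hη i b)
    _ = ∫ x, jumpWeight Λ η (fun n => s n x) i b ∂μ +
          η * 2 ^ i * (∫ x, |s (b + 2 ^ i) x| ∂μ + ∫ x, |s b x| ∂μ) := by
        rw [← integral_add (hs _).abs (hs _).abs, ← integral_const_mul]
        exact integral_add hjump hrest
    _ ≤ ∫ x, jumpWeight Λ η (fun n => s n x) i b ∂μ + η * 2 ^ i * (L + L) := by gcongr
    _ = _ := by ring

theorem integral_dyadicSum_jumpWeight_le [IsFiniteMeasure μ]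
    (hs : ∀ n, Integrable (s n) μ) (hΛ : ∀ n x, |s (n + 1) x - s n x| ≤ Λ) (hΛ0 : 0 ≤ Λ)
    (hη : 0 < η) (hL : ∀ r ≤ 2 ^ K, ∫ x, |s r x| ∂μ ≤ L) :
    ∫ x, dyadicSum (jumpWeight Λ η fun n => s n x) K 0 ∂μ ≤ 8 * Λ ^ 3 * L / η ^ 2 * 2 ^ K := by
  have hpair (i : ℕ) : Integrable (fun x => |s (i + 1) x| + |s i x|) μ :=
    (hs (i + 1)).abs.add (hs i).abs
  calc ∫ x, dyadicSum (jumpWeight Λ η fun n => s n x) K 0 ∂μ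
      ≤ ∫ x, 4 * Λ ^ 3 / η ^ 2 * ∑ i ∈ Finset.range (2 ^ K), (|s (i + 1) x| + |s i x|) ∂μ :=
        integral_mono (integrable_dyadicSum
          (integrable_jumpWeight fun n => (hs n).aemeasurable) K 0)
          ((integrable_finsetSum _ fun i _ => hpair i).const_mul _)
          fun x => dyadicSum_jumpWeight_le (fun n => hΛ n x) hη K
    _ = 4 * Λ ^ 3 / η ^ 2 *
          ∑ i ∈ Finset.range (2 ^ K), (∫ x, |s (i + 1) x| ∂μ + ∫ x, |s i x| ∂μ) := by
        rw [integral_const_mul, integral_finsetSum _ fun i _ => hpair i]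
        simp_rw [integral_add (hs _).abs (hs _).abs]
    _ ≤ 4 * Λ ^ 3 / η ^ 2 * ∑ _i ∈ Finset.range (2 ^ K), (L + L) := by
        gcongr with _ hi <;> exact hL _ (by have := Finset.mem_range.1 hi; lia)
    _ = _ := by
        rw [Finset.sum_const, Finset.card_range, nsmul_eq_mul]
        push_cast
        ring

/-- The large increments (counted by `jumpWeight`) carry the variance at each of the `K + 1`
dyadic scales, whereas the stopping argument bounds their total weight independently of `K`. -/
theorem exists_lt_integral_abs_of_orthogonal_increments [IsFiniteMeasure μ]
    (hs : ∀ n, Integrable (s n) μ) (hΛ : ∀ n x, |s (n + 1) x - s n x| ≤ Λ) (hΛ0 : 0 ≤ Λ)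
    (hA : ∀ a n, ∫ x, (s (a + n) x - s a x) ^ 2 ∂μ = A (a + n) - A a) (hL0 : 0 < L)
    (hK : 2048 * (Λ * L) ^ 3 < K + 1) (hAK : 2 ^ K / 2 ≤ A (2 ^ K) - A 0) :
    ∃ r ≤ 2 ^ K, L < ∫ x, |s r x| ∂μ := by
  by_contra! hL
  set η : ℝ := 1 / (8 * L) with hη
  have hη0 : 0 < η := by positivity
  have hint := integrable_jumpWeight (Λ := Λ) (η := η) fun n => (hs n).aemeasurable
  have hscale (i b : ℕ) (hb : b + 2 ^ i ≤ 2 ^ K) :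
      (A (b + 2 ^ i) - 2 * L * η * (b + 2 ^ i : ℕ)) - (A b - 2 * L * η * b) ≤
        ∫ x, jumpWeight Λ η (fun n => s n x) i b ∂μ := by
    have h := integral_sq_sub_le_integral_jumpWeight_add hs hΛ hη0.le
      (hL b ((Nat.le_add_right _ _).trans hb)) (hL _ hb)
    rw [hA] at h
    push_cast
    linarith
  have hlower := mul_sub_le_dyadicSum (A := fun b => A b - 2 * L * η * b) hscale
    (zero_add (2 ^ K)).le
  rw [← integral_dyadicSum hint, zero_add] at hlower
  have hbounds := hlower.trans (integral_dyadicSum_jumpWeight_le hs hΛ hΛ0 hη0 hL)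
  have hLη : 2 * L * η = 1 / 4 := by rw [hη]; field_simp; norm_num
  have hcoef : 8 * Λ ^ 3 * L / η ^ 2 = 512 * (Λ * L) ^ 3 := by rw [hη]; field_simp; ring
  rw [hLη, hcoef] at hbounds
  push_cast at hbounds
  have hgain : (K + 1) * ((2 : ℝ) ^ K / 4) ≤ 512 * (Λ * L) ^ 3 * 2 ^ K :=
    (mul_le_mul_of_nonneg_left (by linarith) (by positivity)).trans hbounds
  nlinarith [pow_pos (two_pos (α := ℝ)) K]

end OrthogonalIncrements

theorem integrable_of_abs_le {Ω : Type*} [MeasurableSpace Ω] {μ : Measure Ω} [IsFiniteMeasure μ]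
    {f : Ω → ℝ} (hf : Measurable f) {C : ℝ} (hC : ∀ x, |f x| ≤ C) : Integrable f μ :=
  .of_bound hf.aestronglyMeasurable C (ae_of_all _ hC)

/-- `f i` tends weakly to `g` along `l`: the integrals over every measurable set converge. For a
uniformly bounded family and a finite measure this is weak-* convergence in `L^∞`. -/
def WeakTendsto {Ω ι : Type*} [MeasurableSpace Ω] (μ : Measure Ω) (f : ι → Ω → ℝ) (l : Filter ι)
    (g : Ω → ℝ) : Prop :=
  ∀ s, MeasurableSet s → Tendsto (fun i => ∫ x in s, f i x ∂μ) l (nhds (∫ x in s, g x ∂μ))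

namespace WeakTendsto

variable {Ω ι : Type*} [MeasurableSpace Ω] {μ : Measure Ω} {l : Filter ι}
  {f f' : ι → Ω → ℝ} {g g' : Ω → ℝ}

theorem add (h : WeakTendsto μ f l g) (h' : WeakTendsto μ f' l g')
    (hf : ∀ i, Integrable (f i) μ) (hf' : ∀ i, Integrable (f' i) μ)
    (hg : Integrable g μ) (hg' : Integrable g' μ) :
    WeakTendsto μ (fun i x => f i x + f' i x) l fun x => g x + g' x := by
  intro s hs
  simp_rw [integral_add (hf _).integrableOn (hf' _).integrableOn,
    integral_add hg.integrableOn hg'.integrableOn]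
  exact (h s hs).add (h' s hs)

theorem finsetSum {κ : Type*} {F : κ → ι → Ω → ℝ} {G : κ → Ω → ℝ} (J : Finset κ)
    (h : ∀ j ∈ J, WeakTendsto μ (F j) l (G j)) (hF : ∀ j ∈ J, ∀ i, Integrable (F j i) μ)
    (hG : ∀ j ∈ J, Integrable (G j) μ) :
    WeakTendsto μ (fun i x => ∑ j ∈ J, F j i x) l fun x => ∑ j ∈ J, G j x := by
  intro s hs
  rw [integral_finsetSum J fun j hj => (hG j hj).integrableOn]
  refine (tendsto_finsetSum J fun j hj => h j hj s hs).congr fun i => ?_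
  rw [integral_finsetSum J fun j hj => (hF j hj i).integrableOn]

theorem const_mul (c : ℝ) (h : WeakTendsto μ f l g) :
    WeakTendsto μ (fun i x => c * f i x) l fun x => c * g x := by
  intro s hs
  simp_rw [integral_const_mul]
  exact (h s hs).const_mul c

theorem of_isPiSystem [IsFiniteMeasure μ] {C : ℝ} {S : Set (Set Ω)}
    (hS : ‹MeasurableSpace Ω› = MeasurableSpace.generateFrom S) (hpi : IsPiSystem S)
    (hf : ∀ i, Measurable (f i)) (hfC : ∀ i x, |f i x| ≤ C) (hg : Integrable g μ)
    (huniv : Tendsto (fun i => ∫ x, f i x ∂μ) l (nhds (∫ x, g x ∂μ)))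
    (h : ∀ s ∈ S, Tendsto (fun i => ∫ x in s, f i x ∂μ) l (nhds (∫ x in s, g x ∂μ))) :
    WeakTendsto μ f l g := by
  have hfint (i : ι) : Integrable (f i) μ := integrable_of_abs_le (hf i) (hfC i)
  intro s hs
  induction s, hs using MeasurableSpace.induction_on_inter hS hpi with
  | empty => simpa using tendsto_const_nhds
  | basic s hs => exact h s hs
  | compl s hs ih =>
    simp_rw [setIntegral_compl hs hg, setIntegral_compl hs (hfint _)]
    exact huniv.sub ih
  | iUnion s hd hs ih =>
    rw [integral_iUnion hs hd hg.integrableOn]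
    simp_rw [integral_iUnion hs hd (hfint _).integrableOn]
    refine tendsto_tsum_of_dominated_convergence (bound := fun n => C * μ.real (s n))
      (Summable.mul_left _ (ENNReal.summable_toReal ?_)) ih (Eventually.of_forall fun i n => ?_)
    · rw [← measure_iUnion hd hs]
      exact measure_ne_top _ _
    · exact norm_setIntegral_le_of_norm_le_const (measure_lt_top _ _) fun x _ => hfC i x

end WeakTendsto

section WeakTendstoPi

variable {κ ι : Type*} [Fintype κ] {Ω : κ → Type*} [∀ j, MeasurableSpace (Ω j)]
  {μ : ∀ j, Measure (Ω j)} [∀ j, IsFiniteMeasure (μ j)]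

theorem setIntegral_univ_pi_prod (f : ∀ j, Ω j → ℝ) (s : ∀ j, Set (Ω j)) :
    ∫ t in univ.pi s, ∏ j, f j (t j) ∂Measure.pi μ = ∏ j, ∫ x in s j, f j x ∂μ j := by
  rw [Measure.restrict_pi_pi, integral_fintype_prod_eq_prod]

theorem abs_prod_le_pow_card {C : ℝ} {f : κ → ℝ} (hf : ∀ j, |f j| ≤ C) :
    |∏ j, f j| ≤ C ^ Fintype.card κ := by
  calc |∏ j, f j| = ∏ j, |f j| := Finset.abs_prod _ _
    _ ≤ ∏ _j : κ, C := Finset.prod_le_prod (fun j _ => abs_nonneg _) fun j _ => hf j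
    _ = C ^ Fintype.card κ := by simp

theorem measurable_prod_eval {f : ∀ j, Ω j → ℝ} (hf : ∀ j, Measurable (f j)) :
    Measurable fun t : ∀ j, Ω j => ∏ j, f j (t j) :=
  Finset.measurable_prod _ fun j _ => (hf j).comp (measurable_pi_apply j)

theorem WeakTendsto.pi_prod {l : Filter ι} {f : ι → ∀ j, Ω j → ℝ} {g : ∀ j, Ω j → ℝ} {C : ℝ}
    (hf : ∀ i j, Measurable (f i j)) (hg : ∀ j, Measurable (g j))
    (hfC : ∀ i j x, |f i j x| ≤ C) (hgC : ∀ j x, |g j x| ≤ C)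
    (h : ∀ j, WeakTendsto (μ j) (fun i => f i j) l (g j)) :
    WeakTendsto (Measure.pi μ) (fun i t => ∏ j, f i j (t j)) l fun t => ∏ j, g j (t j) := by
  have hbox (s : ∀ j, Set (Ω j)) (hs : ∀ j, MeasurableSet (s j)) :
      Tendsto (fun i => ∫ t in univ.pi s, ∏ j, f i j (t j) ∂Measure.pi μ) l
        (nhds (∫ t in univ.pi s, ∏ j, g j (t j) ∂Measure.pi μ)) := by
    simp_rw [setIntegral_univ_pi_prod]
    exact tendsto_finsetProd _ fun j _ => h j _ (hs j)
  refine .of_isPiSystem generateFrom_pi.symm isPiSystem_pi (fun i => measurable_prod_eval (hf i))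
    (fun i t => abs_prod_le_pow_card fun j => hfC i j (t j))
    (integrable_of_abs_le (measurable_prod_eval hg) fun t =>
      abs_prod_le_pow_card fun j => hgC j (t j)) ?_ ?_
  · simpa using hbox (fun _ => univ) fun _ => .univ
  · rintro _ ⟨s, hs, rfl⟩
    exact hbox s fun j => hs j (mem_univ j)

end WeakTendstoPi

theorem exists_tendsto_inner {H ι : Type*} [NormedAddCommGroup H] [InnerProductSpace ℝ H]
    [CompleteSpace H] (l : Ultrafilter ι) {F : ι → H} {R : ℝ} (hF : ∀ i, ‖F i‖ ≤ R) :
    ∃ w : H, ∀ h, Tendsto (fun i => inner ℝ (F i) h) l (nhds (inner ℝ w h)) := by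
  let D : ι → WeakDual ℝ H := fun i => (InnerProductSpace.toDual ℝ H (F i)).toWeakDual
  obtain ⟨D', -, hD'⟩ := isCompact_iff_ultrafilter_le_nhds.1
    (WeakDual.isCompact_closedBall (𝕜 := ℝ) (0 : StrongDual ℝ H) R) (l.map D) (by
      refine le_principal_iff.2 (mem_map.2 (univ_mem' fun i => ?_))
      simpa [D] using hF i)
  refine ⟨(InnerProductSpace.toDual ℝ H).symm (WeakDual.toStrongDual D'), fun h => ?_⟩
  rw [InnerProductSpace.toDual_symm_apply]
  exact ((WeakDual.eval_continuous h).tendsto D').comp hD'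

section WeakLimit

variable {Ω ι : Type*} [MeasurableSpace Ω] {μ : Measure Ω} [IsFiniteMeasure μ]

theorem exists_weakTendsto_L2 (l : Ultrafilter ι) {F : ι → Lp ℝ 2 μ} {R : ℝ}
    (hF : ∀ i, ‖F i‖ ≤ R) : ∃ w : Lp ℝ 2 μ, WeakTendsto μ (fun i => F i) l w := by
  obtain ⟨w, hw⟩ := exists_tendsto_inner l hF
  refine ⟨w, fun s hs => ?_⟩
  have hinner (u : Lp ℝ 2 μ) :
      inner ℝ u (indicatorConstLp 2 hs (measure_ne_top μ s) 1) = ∫ x in s, u x ∂μ := by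
    rw [real_inner_comm, L2.inner_indicatorConstLp_one]
  simpa only [hinner] using hw (indicatorConstLp 2 hs (measure_ne_top μ s) 1)

theorem exists_weakTendsto_of_mem_Icc (l : Ultrafilter ι) {f : ι → Ω → ℝ} {a b : ℝ} (hab : a ≤ b)
    (hf : ∀ i, Measurable (f i)) (hfab : ∀ i x, f i x ∈ Icc a b) :
    ∃ w : Ω → ℝ, Measurable w ∧ (∀ x, w x ∈ Icc a b) ∧ WeakTendsto μ f l w := by
  have hbound (i : ι) (x : Ω) : ‖f i x‖ ≤ max |a| |b| :=
    abs_le_max_abs_abs (hfab i x).1 (hfab i x).2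
  have hmem (i : ι) : MemLp (f i) 2 μ :=
    .of_bound (hf i).aestronglyMeasurable _ (ae_of_all _ (hbound i))
  have hfint (i : ι) : Integrable (f i) μ := (hmem i).integrable one_le_two
  obtain ⟨w, hw⟩ := exists_weakTendsto_L2 l fun i =>
    Lp.norm_le_of_ae_bound (f := (hmem i).toLp (f i)) (le_max_of_le_left (abs_nonneg a))
      ((hmem i).coeFn_toLp.mono fun x hx => hx ▸ hbound i x)
  have hwint : Integrable w μ := (Lp.memLp w).integrable one_le_two
  replace hw : WeakTendsto μ f l w := fun s hs => (hw s hs).congr fun i =>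
    integral_congr_ae (ae_restrict_of_ae (hmem i).coeFn_toLp)
  have hwa : (fun _ => a) ≤ᵐ[μ] w := ae_le_of_forall_setIntegral_le (integrable_const a) hwint
    fun s hs _ => ge_of_tendsto' (hw s hs) fun i =>
      integral_mono (integrable_const a) (hfint i).integrableOn fun x => (hfab i x).1
  have hwb : w ≤ᵐ[μ] fun _ => b := ae_le_of_forall_setIntegral_le hwint (integrable_const b)
    fun s hs _ => le_of_tendsto' (hw s hs) fun i =>
      integral_mono (hfint i).integrableOn (integrable_const b) fun x => (hfab i x).2
  refine ⟨fun x => projIcc a b hab (w x), ?_, fun x => (projIcc a b hab (w x)).2, fun s hs => ?_⟩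
  · exact (continuous_subtype_val.comp continuous_projIcc).measurable.comp
      (Lp.stronglyMeasurable w).measurable
  · convert hw s hs using 2
    refine integral_congr_ae (ae_restrict_of_ae ?_)
    filter_upwards [hwa, hwb] with x ha hb
    rw [projIcc_of_mem hab ⟨ha, hb⟩]

end WeakLimit

section Tilting

variable {Ω ι : Type*} [MeasurableSpace Ω] {μ : Measure Ω} {l : Filter ι}

/-- Pointwise bounds need not pass to weak limits, but they do if `g'` is the limit of the `g i`
after a change of density. -/
theorem ae_le_of_forall_le_of_weakTendsto_mul [Countable ι] [l.NeBot] {p g : ι → Ω → ℝ}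
    {p' g' : Ω → ℝ} {c : ℝ} (hgm : ∀ i, Measurable (g i)) (hg'm : Measurable g')
    (hp : ∀ i, Integrable (p i) μ) (hgp : ∀ i, Integrable (fun x => g i x * p i x) μ)
    (hp' : Integrable p' μ) (hgp' : Integrable (fun x => g' x * p' x) μ)
    (hp0 : ∀ i x, 0 ≤ p i x) (hp'0 : ∀ x, 0 < p' x) (hlim : WeakTendsto μ p l p')
    (hlim' : WeakTendsto μ (fun i x => g i x * p i x) l fun x => g' x * p' x) :
    ∀ᵐ x ∂μ, (∀ i, g i x ≤ c) → g' x ≤ c := by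
  let G : Set Ω := {x | (∀ i, g i x ≤ c) ∧ c < g' x}
  have hG : MeasurableSet G :=
    (measurableSet_setOfPred.2 (.forall fun i => measurableSet_setOfPred.1 (measurableSet_le (hgm i)
      measurable_const))).inter (measurableSet_lt measurable_const hg'm)
  have hle : ∫ x in G, g' x * p' x ∂μ ≤ ∫ x in G, c * p' x ∂μ :=
    le_of_tendsto_of_tendsto' (hlim' G hG) (hlim.const_mul c G hG) fun i =>
      setIntegral_mono_on (hgp i).integrableOn ((hp i).const_mul c).integrableOn hG fun x hx =>
        mul_le_mul_of_nonneg_right (hx.1 i) (hp0 i x)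
  have hpos {x : Ω} (hx : x ∈ G) : 0 < g' x * p' x - c * p' x :=
    sub_pos.2 (mul_lt_mul_of_pos_right hx.2 (hp'0 x))
  have hint : IntegrableOn (fun x => g' x * p' x - c * p' x) G μ :=
    (hgp'.sub (hp'.const_mul c)).integrableOn
  have hzero : μ G = 0 := by
    by_contra hne
    have := (setIntegral_pos_iff_support_of_nonneg_ae
      (ae_restrict_of_forall_mem hG fun x hx => (hpos hx).le) hint).2
      ((pos_iff_ne_zero.2 hne).trans_le (measure_mono fun x hx => ⟨(hpos hx).ne', hx⟩))
    rw [integral_sub hgp'.integrableOn (hp'.const_mul c).integrableOn] at this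
    linarith
  filter_upwards [measure_eq_zero_iff_ae_notMem.1 hzero] with x hx hgx
  exact not_lt.1 fun hc => hx ⟨hgx, hc⟩

variable {κ : Type*} [Fintype κ]

theorem prod_update_mul_eval {Ω : Type*} [DecidableEq κ] (g u : Ω → ℝ) (t : κ → Ω) (i : κ) :
    ∏ j, Function.update (fun _ : κ => u) i (fun x => g x * u x) j (t j) =
      g (t i) * ∏ j, u (t j) := by
  have hne (j : κ) (hj : j ∈ Finset.univ.erase i) :
      Function.update (fun _ : κ => u) i (fun x => g x * u x) j (t j) = u (t j) := by
    rw [Function.update_of_ne (Finset.ne_of_mem_erase hj)]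
  rw [← Finset.mul_prod_erase _ _ (Finset.mem_univ i), Finset.prod_congr rfl hne,
    Function.update_self, mul_assoc, Finset.mul_prod_erase _ (fun j => u (t j)) (Finset.mem_univ i)]

variable [IsFiniteMeasure μ]

theorem integrable_eval_mul_prod {v v' : Ω → ℝ} {C : ℝ} (hvm : Measurable v)
    (hv'm : Measurable v') (hv : ∀ x, |v x| ≤ C) (hv' : ∀ x, |v' x * v x| ≤ C) (j : κ) :
    Integrable (fun t : κ → Ω => v' (t j) * ∏ k, v (t k)) (Measure.pi fun _ => μ) := by
  classical
  refine integrable_of_abs_le (C := C ^ Fintype.card κ)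
    ((hv'm.comp (measurable_pi_apply j)).mul (measurable_prod_eval fun _ => hvm)) fun t => ?_
  simp only [← prod_update_mul_eval]
  exact abs_prod_le_pow_card fun k => (Function.forall_update_iff _
    fun _ (h : Ω → ℝ) => ∀ x, |h x| ≤ C).2 ⟨hv', fun _ _ => hv⟩ k (t k)

variable {u g : ι → Ω → ℝ} {u' g' : Ω → ℝ} {C : ℝ}

theorem WeakTendsto.sum_mul_prod (hum : ∀ i, Measurable (u i)) (hgm : ∀ i, Measurable (g i))
    (hu'm : Measurable u') (hg'm : Measurable g')
    (hu : ∀ i x, |u i x| ≤ C) (hgu : ∀ i x, |g i x * u i x| ≤ C)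
    (hu' : ∀ x, |u' x| ≤ C) (hgu' : ∀ x, |g' x * u' x| ≤ C)
    (hlim : WeakTendsto μ u l u')
    (hlim' : WeakTendsto μ (fun i x => g i x * u i x) l fun x => g' x * u' x) :
    WeakTendsto (Measure.pi fun _ : κ => μ) (fun i t => (∑ j, g i (t j)) * ∏ j, u i (t j)) l
      fun t => (∑ j, g' (t j)) * ∏ j, u' (t j) := by
  classical
  have hupdm {v v' : Ω → ℝ} (hv : Measurable v) (hv' : Measurable v') (j : κ) :
      ∀ k, Measurable (Function.update (fun _ : κ => v) j v' k) :=
    (Function.forall_update_iff _ fun _ h => Measurable h).2 ⟨hv', fun _ _ => hv⟩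
  have hupdC {v v' : Ω → ℝ} (hv : ∀ x, |v x| ≤ C) (hv' : ∀ x, |v' x| ≤ C) (j : κ) :
      ∀ k x, |Function.update (fun _ : κ => v) j v' k x| ≤ C :=
    (Function.forall_update_iff _ fun _ (h : Ω → ℝ) => ∀ x, |h x| ≤ C).2 ⟨hv', fun _ _ => hv⟩
  have hterm (j : κ) := WeakTendsto.pi_prod (μ := fun _ : κ => μ) (l := l)
    (fun i => hupdm (v' := fun x => g i x * u i x) (hum i) ((hgm i).mul (hum i)) j)
    (hupdm (v' := fun x => g' x * u' x) hu'm (hg'm.mul hu'm) j)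
    (fun i => hupdC (hu i) (hgu i) j) (hupdC hu' hgu' j) fun k => by
      rcases eq_or_ne k j with rfl | hkj
      · simpa using hlim'
      · simpa [hkj] using hlim
  simp_rw [Finset.sum_mul]
  exact .finsetSum _ (fun j _ => by simpa only [prod_update_mul_eval] using hterm j)
    (fun j _ i => integrable_eval_mul_prod (hum i) (hgm i) (hu i) (hgu i) j)
    fun j _ => integrable_eval_mul_prod hu'm hg'm hu' hgu' j

theorem ae_sum_le_of_forall_sum_le_of_weakTendsto_mul [Countable ι] [l.NeBot] {c : ℝ}
    (hum : ∀ i, Measurable (u i)) (hgm : ∀ i, Measurable (g i))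
    (hu'm : Measurable u') (hg'm : Measurable g')
    (hu : ∀ i x, |u i x| ≤ C) (hgu : ∀ i x, |g i x * u i x| ≤ C)
    (hu' : ∀ x, |u' x| ≤ C) (hgu' : ∀ x, |g' x * u' x| ≤ C)
    (hu0 : ∀ i x, 0 ≤ u i x) (hu'0 : ∀ x, 0 < u' x) (hlim : WeakTendsto μ u l u')
    (hlim' : WeakTendsto μ (fun i x => g i x * u i x) l fun x => g' x * u' x) :
    ∀ᵐ t ∂Measure.pi fun _ : κ => μ, (∀ i, ∑ j, g i (t j) ≤ c) → ∑ j, g' (t j) ≤ c := by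
  have hsumm {v : Ω → ℝ} (hv : Measurable v) : Measurable fun t : κ → Ω => ∑ j, v (t j) :=
    Finset.measurable_sum _ fun j _ => hv.comp (measurable_pi_apply j)
  have hprod {v : Ω → ℝ} (hvm : Measurable v) (hv : ∀ x, |v x| ≤ C) :
      Integrable (fun t : κ → Ω => ∏ j, v (t j)) (Measure.pi fun _ => μ) :=
    integrable_of_abs_le (measurable_prod_eval fun _ => hvm) fun t =>
      abs_prod_le_pow_card fun j => hv (t j)
  have hsum {v v' : Ω → ℝ} (hvm : Measurable v) (hv'm : Measurable v') (hv : ∀ x, |v x| ≤ C)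
      (hv' : ∀ x, |v' x * v x| ≤ C) : Integrable
        (fun t : κ → Ω => (∑ j, v' (t j)) * ∏ k, v (t k)) (Measure.pi fun _ => μ) := by
    simp_rw [Finset.sum_mul]
    exact integrable_finsetSum _ fun j _ => integrable_eval_mul_prod hvm hv'm hv hv' j
  exact ae_le_of_forall_le_of_weakTendsto_mul (fun i => hsumm (hgm i)) (hsumm hg'm)
    (fun i => hprod (hum i) (hu i)) (fun i => hsum (hum i) (hgm i) (hu i) (hgu i))
    (hprod hu'm hu') (hsum hu'm hg'm hu' hgu')
    (fun i t => Finset.prod_nonneg fun j _ => hu0 i (t j))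
    (fun t => Finset.prod_pos fun j _ => hu'0 (t j))
    (.pi_prod (fun i _ => hum i) (fun _ => hu'm) (fun i _ => hu i) (fun _ => hu') fun _ => hlim)
    (.sum_mul_prod hum hgm hu'm hg'm hu hgu hu' hgu' hlim hlim')

/-- Tilting `μ` by `1 + sign (g i) / 2` turns the weak limit `0` of `g i` into half the weak limit
of `|g i|`. -/
theorem exists_weakTendsto_mul_half {l : Ultrafilter ι} {w : Ω → ℝ}
    (hg : ∀ i, Measurable (g i)) (hgint : ∀ i, Integrable (g i) μ) (hw : Integrable w μ)
    (hzero : WeakTendsto μ g l fun _ => 0) (habs : WeakTendsto μ (fun i x => |g i x|) l w) :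
    ∃ (u : ι → Ω → ℝ) (u' : Ω → ℝ), (∀ i, Measurable (u i)) ∧ Measurable u' ∧
      (∀ i x, u i x ∈ Icc (1 / 2 : ℝ) (3 / 2)) ∧ (∀ x, u' x ∈ Icc (1 / 2 : ℝ) (3 / 2)) ∧
      WeakTendsto μ u l u' ∧
      WeakTendsto μ (fun i x => g i x * u i x) l fun x => 1 / 2 * w x := by
  let u : ι → Ω → ℝ := fun i x => if 0 ≤ g i x then 3 / 2 else 1 / 2
  have hum (i : ι) : Measurable (u i) :=
    .ite (measurableSet_le measurable_const (hg i)) measurable_const measurable_const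
  have humem (i : ι) (x : Ω) : u i x ∈ Icc (1 / 2 : ℝ) (3 / 2) := by
    dsimp only [u]
    split_ifs <;> norm_num
  obtain ⟨u', hu'm, hu', hlim⟩ := exists_weakTendsto_of_mem_Icc (μ := μ) l (by norm_num) hum humem
  have hgu (i : ι) (x : Ω) : g i x * u i x = g i x + 1 / 2 * |g i x| := by
    rcases le_or_gt 0 (g i x) with h | h
    · simp only [u, h, if_true, abs_of_nonneg]; ring
    · simp only [u, h.not_ge, if_false, abs_of_neg h]; ring
  refine ⟨u, u', hum, hu'm, humem, hu', hlim, ?_⟩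
  simp only [hgu]
  simpa only [zero_add] using hzero.add (habs.const_mul (1 / 2)) hgint
    (fun i => (hgint i).abs.const_mul _) (integrable_zero _ _ _) (hw.const_mul _)

theorem ae_sum_le_three_mul_of_weakTendsto [Countable ι] {l : Ultrafilter ι} {w : Ω → ℝ} {Λ c : ℝ}
    (hg : ∀ i, Measurable (g i)) (hgΛ : ∀ i x, |g i x| ≤ Λ) (hw : Measurable w)
    (hwΛ : ∀ x, w x ∈ Icc 0 Λ) (hzero : WeakTendsto μ g l fun _ => 0)
    (habs : WeakTendsto μ (fun i x => |g i x|) l w) :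
    ∀ᵐ t ∂Measure.pi fun _ : κ => μ, (∀ i, ∑ j, g i (t j) ≤ c) → ∑ j, w (t j) ≤ 3 * c := by
  obtain ⟨u, u', hum, hu'm, hu, hu', hlim, hlim'⟩ := exists_weakTendsto_mul_half hg
    (fun i => integrable_of_abs_le (hg i) (hgΛ i))
    (integrable_of_abs_le hw fun x => (abs_of_nonneg (hwΛ x).1).trans_le (hwΛ x).2) hzero habs
  have hu'0 (x : Ω) : 0 < u' x := one_half_pos.trans_le (hu' x).1
  have hcancel (x : Ω) : 1 / 2 * w x / u' x * u' x = 1 / 2 * w x := div_mul_cancel₀ _ (hu'0 x).ne'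
  have habsu {y : ℝ} (hy : y ∈ Icc (1 / 2 : ℝ) (3 / 2)) : |y| ≤ 3 / 2 :=
    abs_le.2 ⟨by linarith [hy.1], hy.2⟩
  have htilt := ae_sum_le_of_forall_sum_le_of_weakTendsto_mul (κ := κ) (c := c)
    (C := max (3 / 2) (Λ * (3 / 2))) (g' := fun x => 1 / 2 * w x / u' x) hum hg hu'm
    ((hw.const_mul _).div hu'm) (fun i x => le_max_of_le_left (habsu (hu i x)))
    (fun i x => le_max_of_le_right <| (abs_mul _ _).trans_le <|
      mul_le_mul (hgΛ i x) (habsu (hu i x)) (abs_nonneg _) ((abs_nonneg _).trans (hgΛ i x)))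
    (fun x => le_max_of_le_left (habsu (hu' x)))
    (fun x => le_max_of_le_right <| by
      rw [hcancel, abs_of_nonneg] <;> linarith [(hwΛ x).1, (hwΛ x).2])
    (fun i x => one_half_pos.le.trans (hu i x).1) hu'0 hlim (by simpa only [hcancel] using hlim')
  have hthird (x : Ω) : w x / 3 ≤ 1 / 2 * w x / u' x := by
    rw [le_div_iff₀ (hu'0 x)]
    nlinarith [(hwΛ x).1, (hu' x).2]
  filter_upwards [htilt] with t ht hgt
  have hsum := (Finset.sum_le_sum fun j _ => hthird (t j)).trans (ht hgt)
  rw [← Finset.sum_div] at hsum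
  linarith

end Tilting

section ProductMeasure

variable {Ω ι κ : Type*} [Fintype κ] [MeasurableSpace Ω] {μ : Measure Ω} [IsProbabilityMeasure μ]

theorem measure_pi_sum_le_le_variance_div [Nonempty κ] {w : Ω → ℝ} (hw : MemLp w 2 μ) {δ : ℝ}
    (hδ : 0 < δ) :
    Measure.pi (fun _ : κ => μ) {t | ∑ j, w (t j) ≤ Fintype.card κ * (∫ x, w x ∂μ - δ)} ≤
      ENNReal.ofReal (ProbabilityTheory.variance w μ / (Fintype.card κ * δ ^ 2)) := by
  have hcard : (0 : ℝ) < Fintype.card κ := by exact_mod_cast Fintype.card_pos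
  have heval (j : κ) : MemLp (fun t : κ → Ω => w (t j)) 2 (Measure.pi fun _ => μ) :=
    hw.comp_measurePreserving (measurePreserving_eval _ j)
  set X : (κ → Ω) → ℝ := ∑ j, fun t => w (t j) with hX
  have hXapply (t : κ → Ω) : X t = ∑ j, w (t j) := Finset.sum_apply t _ _
  have hexp : ∫ t, X t ∂(Measure.pi fun _ => μ) = Fintype.card κ * ∫ x, w x ∂μ := by
    simp_rw [hXapply]
    rw [integral_finsetSum _ fun j _ => (heval j).integrable one_le_two]
    simp [integral_comp_eval (μ := fun _ : κ => μ) hw.aestronglyMeasurable]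
  have hvar : ProbabilityTheory.variance X (Measure.pi fun _ => μ) =
      Fintype.card κ * ProbabilityTheory.variance w μ := by
    rw [hX, ProbabilityTheory.variance_sum_pi fun _ => hw]
    simp
  have hXmem : MemLp X 2 (Measure.pi fun _ => μ) := memLp_finsetSum' _ fun j _ => heval j
  have hcheb := ProbabilityTheory.meas_ge_le_variance_div_sq hXmem (mul_pos hcard hδ)
  refine (measure_mono fun t ht => ?_).trans (hcheb.trans_eq ?_)
  · simp only [mem_ofPred_eq] at ht ⊢
    rw [hexp, hXapply, abs_sub_comm]
    exact le_trans (by linarith) (le_abs_self _)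
  · rw [hvar]
    congr 1
    field_simp

/-- By Chebyshev's inequality, the weak limit of `|g i|` has a large average over most samples, and
for such a sample some `g i` has a large average as well. -/
theorem measure_pi_forall_sum_le_le_half [Countable ι] [Nonempty κ] {l : Ultrafilter ι}
    {g : ι → Ω → ℝ} {Λ L : ℝ} (hg : ∀ i, Measurable (g i)) (hgΛ : ∀ i x, |g i x| ≤ Λ)
    (hzero : WeakTendsto μ g l fun _ => 0) (hL : 0 < L) (hgL : ∀ᶠ i in l, L ≤ ∫ x, |g i x| ∂μ)
    (hκ : 2 * Λ ^ 2 ≤ Fintype.card κ * L ^ 2) :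
    Measure.pi (fun _ : κ => μ) {t | ∀ i, ∑ j, g i (t j) ≤ Fintype.card κ * (L / 6)} ≤ 2⁻¹ := by
  have hΛ : 0 ≤ Λ := by
    obtain ⟨x⟩ := nonempty_of_isProbabilityMeasure μ
    obtain ⟨i⟩ := nonempty_of_neBot (l : Filter ι)
    exact (abs_nonneg _).trans (hgΛ i x)
  obtain ⟨w, hw, hwΛ, habs⟩ := exists_weakTendsto_of_mem_Icc (μ := μ) l hΛ (fun i => (hg i).abs)
    fun i x => ⟨abs_nonneg _, hgΛ i x⟩
  have hwmem : MemLp w 2 μ := .of_bound hw.aestronglyMeasurable Λ <|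
    ae_of_all _ fun x => (abs_of_nonneg (hwΛ x).1).trans_le (hwΛ x).2
  have hwL : L ≤ ∫ x, w x ∂μ := by
    have hint := habs univ .univ
    simp only [setIntegral_univ] at hint
    exact ge_of_tendsto hint hgL
  have hvar : ProbabilityTheory.variance w μ ≤ (Λ / 2) ^ 2 := by
    simpa using ProbabilityTheory.variance_le_sq_of_bounded (ae_of_all μ hwΛ) hw.aemeasurable
  have hsub : ∀ᵐ t ∂Measure.pi fun _ : κ => μ,
      (∀ i, ∑ j, g i (t j) ≤ Fintype.card κ * (L / 6)) →
        ∑ j, w (t j) ≤ Fintype.card κ * (∫ x, w x ∂μ - L / 2) := by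
    filter_upwards [ae_sum_le_three_mul_of_weakTendsto hg hgΛ hw hwΛ hzero habs] with t ht hgt
    nlinarith [ht hgt]
  refine (measure_mono_ae hsub).trans ((measure_pi_sum_le_le_variance_div hwmem
    (half_pos hL)).trans (ENNReal.ofReal_le_of_le_toReal ((div_le_iff₀ (by positivity)).2 ?_)))
  rw [ENNReal.toReal_inv, ENNReal.toReal_ofNat]
  linarith

end ProductMeasure

section MeasureBounds

variable {Ω : Type*} [MeasurableSpace Ω] {μ : Measure Ω}

theorem le_measure_limsup [IsFiniteMeasure μ] {c : ENNReal} {A : ℕ → Set Ω}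
    (hA : ∀ m, MeasurableSet (A m)) (hc : ∀ m, c ≤ μ (A m)) : c ≤ μ (limsup A atTop) := by
  have hU (k : ℕ) : MeasurableSet (⋃ m ≥ k, A m) := .iUnion fun m => .iUnion fun _ => hA m
  have hanti : Antitone fun k => ⋃ m ≥ k, A m := fun _ _ hk =>
    biUnion_subset_biUnion_left fun _ hm => le_trans hk hm
  rw [limsup_eq_iInf_iSup_of_nat]
  change c ≤ μ (⋂ k, ⋃ m ≥ k, A m)
  rw [hanti.measure_iInter (fun k => (hU k).nullMeasurableSet) ⟨0, measure_ne_top _ _⟩]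
  exact le_iInf fun k => (hc k).trans (measure_mono (subset_biUnion_of_mem (mem_Ici.2 le_rfl)))

theorem integral_le_add_mul_measureReal_le [IsProbabilityMeasure μ] {f : Ω → ℝ} {a B : ℝ}
    (hf : Measurable f) (hint : Integrable f μ) (ha : 0 ≤ a) (hB : ∀ x, f x ≤ B) :
    ∫ x, f x ∂μ ≤ a + B * μ.real {x | a ≤ f x} := by
  have hmeas : MeasurableSet {x | a ≤ f x} := measurableSet_le measurable_const hf
  have hind : Integrable ({x | a ≤ f x}.indicator fun _ => B) μ :=
    (integrable_const B).indicator hmeas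
  calc ∫ x, f x ∂μ ≤ ∫ x, (a + {x | a ≤ f x}.indicator (fun _ => B) x) ∂μ := by
        refine integral_mono hint ((integrable_const a).add hind) fun x => ?_
        by_cases hx : a ≤ f x
        · simpa [hx] using add_le_add ha (hB x)
        · simpa [hx] using (not_le.1 hx).le
    _ = a + B * μ.real {x | a ≤ f x} := by
        rw [integral_add (integrable_const a) hind, integral_indicator hmeas]
        simp [mul_comm]

theorem mul_measure_le_mul_measure_univ {β : Type*} [MeasurableSpace β] {ν : Measure β}
    [SFinite μ] [SFinite ν] {Z : Set (Ω × β)} (hZ : MeasurableSet Z) {X : Set Ω} {δ ε : ENNReal}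
    (hX : ∀ x ∈ X, δ ≤ ν {t | (x, t) ∈ Z}) (hε : ∀ᵐ t ∂ν, μ {x | (x, t) ∈ Z} ≤ ε) :
    δ * μ X ≤ ε * ν univ :=
  calc δ * μ X ≤ δ * μ {x | δ ≤ ν {t | (x, t) ∈ Z}} := by gcongr; exact hX
    _ ≤ ∫⁻ x, ν {t | (x, t) ∈ Z} ∂μ :=
      mul_meas_ge_le_lintegral (measurable_measure_prodMk_left hZ) δ
    _ = ∫⁻ t, μ {x | (x, t) ∈ Z} ∂ν :=
      (Measure.prod_apply hZ).symm.trans (Measure.prod_apply_symm hZ)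
    _ ≤ ∫⁻ _, ε ∂ν := lintegral_mono_ae hε
    _ = ε * ν univ := lintegral_const ε

end MeasureBounds

/-- The sequence of measurable functions `e` is orthonormal in `L²(μ)` and bounded by `M` at every
point, not only almost everywhere, so that its values at single points can serve as coefficients. -/
structure BoundedONS {Ω : Type*} [MeasurableSpace Ω] (μ : Measure Ω) (M : ℝ) (e : ℕ → Ω → ℝ) :
    Prop where
  measurable : ∀ n, Measurable (e n)
  abs_le : ∀ n x, |e n x| ≤ M
  integral_mul : ∀ n m, ∫ x, e n x * e m x ∂μ = if n = m then 1 else 0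

/-- The kernel `∑_{m ≤ n < m + r} e_n(x) e_n(t)` of a difference of two partial sum operators. -/
def blockKernel {Ω : Type*} (e : ℕ → Ω → ℝ) (r m : ℕ) (x t : Ω) : ℝ :=
  ∑ n ∈ Finset.range r, e (m + n) x * e (m + n) t

theorem blockKernel_add {Ω : Type*} (e : ℕ → Ω → ℝ) (a r m : ℕ) (x t : Ω) :
    blockKernel e (a + r) m x t = blockKernel e a m x t + blockKernel e r (m + a) x t := by
  simp only [blockKernel, Finset.sum_range_add, add_assoc]

namespace BoundedONS

variable {Ω : Type*} [MeasurableSpace Ω] {μ : Measure Ω} {M : ℝ} {e : ℕ → Ω → ℝ}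

theorem integrable [IsFiniteMeasure μ] (he : BoundedONS μ M e) (n : ℕ) : Integrable (e n) μ :=
  integrable_of_abs_le (he.measurable n) (he.abs_le n)

theorem memLp [IsFiniteMeasure μ] (he : BoundedONS μ M e) (n : ℕ) (p : ENNReal) :
    MemLp (e n) p μ :=
  .of_bound (he.measurable n).aestronglyMeasurable M (ae_of_all _ (he.abs_le n))

theorem integrable_mul [IsFiniteMeasure μ] (he : BoundedONS μ M e) (n m : ℕ) :
    Integrable (fun x => e n x * e m x) μ :=
  (he.integrable n).mul_bdd (he.measurable m).aestronglyMeasurable (ae_of_all _ (he.abs_le m))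

theorem integral_sq (he : BoundedONS μ M e) (n : ℕ) : ∫ x, e n x ^ 2 ∂μ = 1 := by
  simp_rw [sq, he.integral_mul, if_pos]

theorem sq_le (he : BoundedONS μ M e) (n : ℕ) (x : Ω) : e n x ^ 2 ≤ M ^ 2 :=
  sq_le_sq.2 ((he.abs_le n x).trans (le_abs_self M))

theorem one_le_bound [IsProbabilityMeasure μ] (he : BoundedONS μ M e) : 1 ≤ M := by
  obtain ⟨x⟩ := nonempty_of_isProbabilityMeasure μ
  have hM : 0 ≤ M := (abs_nonneg _).trans (he.abs_le 0 x)
  have hsq : ∫ x, e 0 x ^ 2 ∂μ ≤ ∫ _, M ^ 2 ∂μ :=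
    integral_mono (by simpa only [sq] using he.integrable_mul 0 0) (integrable_const _) (he.sq_le 0)
  rw [he.integral_sq, integral_const, probReal_univ, one_smul] at hsq
  exact (one_le_sq_iff₀ hM).1 hsq

theorem orthonormal [IsFiniteMeasure μ] (he : BoundedONS μ M e) :
    Orthonormal ℝ fun n => (he.memLp n 2).toLp (e n) := by
  refine orthonormal_iff_ite.2 fun n m => ?_
  rw [L2.inner_def, ← he.integral_mul n m]
  refine integral_congr_ae ?_
  filter_upwards [(he.memLp n 2).coeFn_toLp, (he.memLp m 2).coeFn_toLp] with x hn hm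
  simp [hn, hm, mul_comm]

theorem weakTendsto_zero [IsFiniteMeasure μ] (he : BoundedONS μ M e) :
    WeakTendsto μ e atTop fun _ => 0 := by
  intro s hs
  have hsum := he.orthonormal.inner_products_summable
    (indicatorConstLp 2 hs (measure_ne_top μ s) 1)
  have hcoef (n : ℕ) : inner ℝ ((he.memLp n 2).toLp (e n))
      (indicatorConstLp 2 hs (measure_ne_top μ s) 1) = ∫ x in s, e n x ∂μ := by
    rw [real_inner_comm, L2.inner_indicatorConstLp_one]
    exact integral_congr_ae (ae_restrict_of_ae (he.memLp n 2).coeFn_toLp)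
  simp_rw [hcoef] at hsum
  rw [integral_zero, tendsto_zero_iff_norm_tendsto_zero]
  simpa [Real.sqrt_sq_eq_abs] using hsum.tendsto_atTop_zero.sqrt

theorem integral_sq_sum [IsFiniteMeasure μ] (he : BoundedONS μ M e) (c : ℕ → ℝ) (s : Finset ℕ) :
    ∫ x, (∑ n ∈ s, c n * e n x) ^ 2 ∂μ = ∑ n ∈ s, c n ^ 2 := by
  have hint (n m : ℕ) : Integrable (fun x => c n * c m * (e n x * e m x)) μ :=
    (he.integrable_mul n m).const_mul _
  have hexpand (x : Ω) : (∑ n ∈ s, c n * e n x) ^ 2 =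
      ∑ n ∈ s, ∑ m ∈ s, c n * c m * (e n x * e m x) := by
    rw [sq, Finset.sum_mul_sum]
    exact Finset.sum_congr rfl fun n _ => Finset.sum_congr rfl fun m _ => by ring
  simp_rw [hexpand]
  rw [integral_finsetSum _ fun n _ => integrable_finsetSum _ fun m _ => hint n m]
  refine Finset.sum_congr rfl fun n hn => ?_
  rw [integral_finsetSum _ fun m _ => hint n m]
  simp [integral_const_mul, he.integral_mul, hn, sq]

theorem ofReal_le_measure_sum_sq_ge [IsProbabilityMeasure μ] (he : BoundedONS μ M e)
    {s : Finset ℕ} (hs : s.Nonempty) : ENNReal.ofReal (1 / (2 * M ^ 2)) ≤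
      μ {x | (s.card : ℝ) / 2 ≤ ∑ n ∈ s, e n x ^ 2} := by
  have hM := he.one_le_bound
  have hcard : (0 : ℝ) < s.card := by exact_mod_cast hs.card_pos
  have hint (n : ℕ) : Integrable (fun x => e n x ^ 2) μ := by
    simpa only [sq] using he.integrable_mul n n
  have htotal : ∫ x, ∑ n ∈ s, e n x ^ 2 ∂μ = s.card := by
    rw [integral_finsetSum _ fun n _ => hint n]
    simp [he.integral_sq]
  have hmarkov := integral_le_add_mul_measureReal_le (μ := μ) (a := s.card / 2)
    (B := s.card * M ^ 2) (Finset.measurable_sum s fun n _ => (he.measurable n).pow_const 2)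
    (integrable_finsetSum s fun n _ => hint n) (by positivity) fun x => by
      simpa using Finset.sum_le_card_nsmul s (fun n => e n x ^ 2) (M ^ 2) fun n _ => he.sq_le n x
  rw [htotal] at hmarkov
  refine ENNReal.ofReal_le_of_le_toReal ((div_le_iff₀ (by positivity)).2 ?_)
  refine le_of_mul_le_mul_left ?_ hcard
  rw [measureReal_def] at hmarkov
  linarith

theorem ofReal_le_measure_frequently_sum_sq_ge [IsProbabilityMeasure μ] (he : BoundedONS μ M e)
    {r : ℕ} (hr : r ≠ 0) : ENNReal.ofReal (1 / (2 * M ^ 2)) ≤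
      μ {x | ∃ᶠ m in atTop, (r : ℝ) / 2 ≤ ∑ n ∈ Finset.range r, e (m + n) x ^ 2} := by
  let A (m : ℕ) : Set Ω := {x | (r : ℝ) / 2 ≤ ∑ n ∈ Finset.range r, e (m + n) x ^ 2}
  have hA (m : ℕ) : MeasurableSet (A m) := measurableSet_le measurable_const
    (Finset.measurable_sum _ fun n _ => (he.measurable _).pow_const 2)
  have hlimsup : limsup A atTop = {x | ∃ᶠ m in atTop, x ∈ A m} := by
    ext x
    exact mem_limsup_iff_frequently_mem
  refine (le_measure_limsup hA fun m => ?_).trans_eq (congrArg μ hlimsup)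
  simpa [A] using he.ofReal_le_measure_sum_sq_ge (s := (Finset.range r).map (addLeftEmbedding m))
    (by simpa using hr)

theorem abs_blockKernel_le [IsProbabilityMeasure μ] (he : BoundedONS μ M e) (r m : ℕ) (x t : Ω) :
    |blockKernel e r m x t| ≤ r * M ^ 2 := by
  have hM := he.one_le_bound
  calc |blockKernel e r m x t| ≤ ∑ n ∈ Finset.range r, |e (m + n) x * e (m + n) t| :=
        Finset.abs_sum_le_sum_abs _ _
    _ ≤ ∑ _n ∈ Finset.range r, M ^ 2 := Finset.sum_le_sum fun n _ => by
        rw [abs_mul, sq]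
        exact mul_le_mul (he.abs_le _ _) (he.abs_le _ _) (abs_nonneg _) (by linarith)
    _ = r * M ^ 2 := by simp

theorem measurable_blockKernel (he : BoundedONS μ M e) (r m : ℕ) (x : Ω) :
    Measurable (blockKernel e r m x) :=
  Finset.measurable_sum _ fun _ _ => (he.measurable _).const_mul _

theorem weakTendsto_blockKernel_zero [IsFiniteMeasure μ] (he : BoundedONS μ M e) (r : ℕ) (x : Ω) :
    WeakTendsto μ (fun m => blockKernel e r m x) atTop fun _ => 0 := by
  intro s hs
  have hterm (n : ℕ) :
      Tendsto (fun m => e (m + n) x * ∫ t in s, e (m + n) t ∂μ) atTop (nhds 0) := by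
    have hcoef := (he.weakTendsto_zero s hs).comp (tendsto_add_atTop_nat n)
    rw [integral_zero] at hcoef
    exact bdd_le_mul_tendsto_zero' M (Eventually.of_forall fun m => he.abs_le _ _) hcoef
  simp only [blockKernel, integral_zero,
    integral_finsetSum _ fun _ _ => ((he.integrable _).const_mul _).integrableOn,
    integral_const_mul]
  simpa using tendsto_finsetSum (Finset.range r) fun n _ => hterm n

theorem integral_blockKernel_sq [IsFiniteMeasure μ] (he : BoundedONS μ M e) (r m : ℕ) (x : Ω) :
    ∫ t, blockKernel e r m x t ^ 2 ∂μ = ∑ n ∈ Finset.range r, e (m + n) x ^ 2 := by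
  simpa [blockKernel] using
    he.integral_sq_sum (fun n => e n x) ((Finset.range r).map (addLeftEmbedding m))

theorem exists_lt_integral_abs_blockKernel [IsProbabilityMeasure μ] (he : BoundedONS μ M e)
    {K m : ℕ} {L : ℝ} {x : Ω} (hL : 0 < L) (hK : 2048 * (M ^ 2 * L) ^ 3 < K + 1)
    (hx : (2 : ℝ) ^ K / 2 ≤ ∑ n ∈ Finset.range (2 ^ K), e (m + n) x ^ 2) :
    ∃ r ≤ 2 ^ K, L < ∫ t, |blockKernel e r m x t| ∂μ := by
  refine exists_lt_integral_abs_of_orthogonal_increments (s := fun r => blockKernel e r m x)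
    (A := fun r => ∑ n ∈ Finset.range r, e (m + n) x ^ 2)
    (fun r => integrable_of_abs_le (he.measurable_blockKernel r m x) (he.abs_blockKernel_le r m x))
    (fun r t => ?_) (sq_nonneg M) (fun a r => ?_) hL hK (by simpa using hx)
  · simpa [blockKernel_add] using he.abs_blockKernel_le 1 (m + r) x t
  · simp only [blockKernel_add, add_sub_cancel_left, he.integral_blockKernel_sq,
      Finset.sum_range_add, add_assoc]

end BoundedONS

section PartialSums

variable {Ω κ : Type*} [Fintype κ]

/-- The partial sum of order `m` of the series `∑ c_n e_n`, indexed from `0`. -/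
def seriesSum (e : ℕ → Ω → ℝ) (c : ℕ → ℝ) (m : ℕ) (x : Ω) : ℝ :=
  ∑ n ∈ Finset.range m, c n * e n x

/-- The Fourier coefficients with respect to `e` of the average of the unit point masses at the
points `t j`. -/
noncomputable def empiricalCoeffs (e : ℕ → Ω → ℝ) (t : κ → Ω) (n : ℕ) : ℝ :=
  (Fintype.card κ : ℝ)⁻¹ * ∑ j, e n (t j)

theorem sum_blockKernel [Nonempty κ] (e : ℕ → Ω → ℝ) (t : κ → Ω) (r m : ℕ) (x : Ω) :
    ∑ j, blockKernel e r m x (t j) = Fintype.card κ *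
      (seriesSum e (empiricalCoeffs e t) (m + r) x - seriesSum e (empiricalCoeffs e t) m x) := by
  simp only [blockKernel, seriesSum, empiricalCoeffs, Finset.sum_range_add, add_sub_cancel_left]
  rw [Finset.sum_comm, Finset.mul_sum]
  refine Finset.sum_congr rfl fun n _ => ?_
  rw [← Finset.mul_sum]
  field_simp

variable [MeasurableSpace Ω] {μ : Measure Ω}

theorem measurable_seriesSum {e : ℕ → Ω → ℝ} (he : ∀ n, Measurable (e n)) (c : ℕ → ℝ) (m : ℕ) :
    Measurable (seriesSum e c m) :=
  Finset.measurable_sum _ fun n _ => (he n).const_mul (c n)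

theorem measurable_seriesSum_empiricalCoeffs {e : ℕ → Ω → ℝ} (he : ∀ n, Measurable (e n))
    (m : ℕ) : Measurable fun z : Ω × (κ → Ω) => seriesSum e (empiricalCoeffs e z.2) m z.1 := by
  unfold seriesSum empiricalCoeffs
  fun_prop

theorem measurableSet_exists_lt_abs_seriesSum_empiricalCoeffs {e : ℕ → Ω → ℝ}
    (he : ∀ n, Measurable (e n)) (C : ℝ) : MeasurableSet
      {z : Ω × (κ → Ω) | ∃ m, C < |seriesSum e (empiricalCoeffs e z.2) m z.1|} := by
  simp only [ofPred_exists]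
  exact .iUnion fun m => measurableSet_lt measurable_const
    (measurable_seriesSum_empiricalCoeffs he m).abs

namespace BoundedONS

variable [IsProbabilityMeasure μ] {M : ℝ} {e : ℕ → Ω → ℝ}

theorem exists_ultrafilter_lt_integral_abs_blockKernel (he : BoundedONS μ M e) {K : ℕ} {L : ℝ}
    {x : Ω} (hL : 0 < L) (hK : 2048 * (M ^ 2 * L) ^ 3 < K + 1)
    (hx : ∃ᶠ m in atTop, (2 : ℝ) ^ K / 2 ≤ ∑ n ∈ Finset.range (2 ^ K), e (m + n) x ^ 2) :
    ∃ r ≤ 2 ^ K, ∃ l : Ultrafilter ℕ, l ≤ (atTop : Filter ℕ) ∧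
      ∀ᶠ m in l, L < ∫ t, |blockKernel e r m x t| ∂μ := by
  obtain ⟨l, hl⟩ := exists_ultrafilter_iff.2 (frequently_mem_iff_neBot.1 hx)
  have hlarge : ∀ᶠ m in l, ∃ r ∈ Iic (2 ^ K), L < ∫ t, |blockKernel e r m x t| ∂μ :=
    mem_of_superset (le_principal_iff.1 (hl.trans inf_le_right)) fun m hm =>
      he.exists_lt_integral_abs_blockKernel hL hK hm
  obtain ⟨r, hr, hrl⟩ := (Ultrafilter.eventually_exists_mem_iff (finite_Iic _)).1 hlarge
  exact ⟨r, hr, l, hl.trans inf_le_left, hrl⟩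

theorem half_le_measure_pi_exists_lt_abs_seriesSum [Nonempty κ] (he : BoundedONS μ M e) {K : ℕ}
    {C : ℝ} {x : Ω} (hC : 0 < C) (hK : 2048 * (M ^ 2 * (12 * C)) ^ 3 < K + 1)
    (hκ : 2 * (2 ^ K * M ^ 2) ^ 2 ≤ Fintype.card κ * (12 * C) ^ 2)
    (hx : ∃ᶠ m in atTop, (2 : ℝ) ^ K / 2 ≤ ∑ n ∈ Finset.range (2 ^ K), e (m + n) x ^ 2) :
    2⁻¹ ≤ Measure.pi (fun _ : κ => μ)
      {t | ∃ m, C < |seriesSum e (empiricalCoeffs e t) m x|} := by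
  obtain ⟨r, hr, l, hl, hrl⟩ :=
    he.exists_ultrafilter_lt_integral_abs_blockKernel (L := 12 * C) (by positivity) hK hx
  have hbound (m : ℕ) (t : Ω) : |blockKernel e r m x t| ≤ 2 ^ K * M ^ 2 :=
    (he.abs_blockKernel_le r m x t).trans
      (mul_le_mul_of_nonneg_right (by exact_mod_cast hr) (sq_nonneg M))
  have hsmall := measure_pi_forall_sum_le_le_half (l := l)
    (fun m => he.measurable_blockKernel r m x) hbound
    (fun s hs => (he.weakTendsto_blockKernel_zero r x s hs).mono_left hl) (by positivity)
    (hrl.mono fun _ h => h.le) hκ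
  have hmeas : MeasurableSet {t : κ → Ω | ∃ m, C < |seriesSum e (empiricalCoeffs e t) m x|} :=
    measurable_prodMk_left (measurableSet_exists_lt_abs_seriesSum_empiricalCoeffs he.measurable C)
  have hcompl : Measure.pi (fun _ : κ => μ)
      {t | ∃ m, C < |seriesSum e (empiricalCoeffs e t) m x|}ᶜ ≤ 2⁻¹ := by
    refine (measure_mono fun t ht m => ?_).trans hsmall
    simp only [mem_compl_iff, mem_ofPred_eq, not_exists, not_lt] at ht
    rw [sum_blockKernel]
    refine mul_le_mul_of_nonneg_left ?_ (Nat.cast_nonneg _)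
    linarith [(_root_.abs_le.1 (ht m)).1, (_root_.abs_le.1 (ht (m + r))).2]
  rw [prob_compl_eq_one_sub hmeas, tsub_le_iff_tsub_le, ENNReal.one_sub_inv_two] at hcompl
  exact hcompl

theorem exists_half_le_measure_pi_exists_lt_abs_seriesSum (he : BoundedONS μ M e) (C : ℝ) :
    ∃ (p : ℕ) (X : Set Ω), p ≠ 0 ∧ ENNReal.ofReal (1 / (2 * M ^ 2)) ≤ μ X ∧
      ∀ x ∈ X, 2⁻¹ ≤ Measure.pi (fun _ : Fin p => μ)
        {t | ∃ m, C < |seriesSum e (empiricalCoeffs e t) m x|} := by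
  have hM := he.one_le_bound
  have hC : 0 < max C 1 := lt_max_of_lt_right one_pos
  obtain ⟨K, hK⟩ := exists_nat_gt (2048 * (M ^ 2 * (12 * max C 1)) ^ 3)
  obtain ⟨p, hp⟩ := exists_nat_gt (2 * (2 ^ K * M ^ 2) ^ 2 / (12 * max C 1) ^ 2)
  have hp0 : (0 : ℝ) < p := lt_of_le_of_lt (by positivity) hp
  have : NeZero p := ⟨by exact_mod_cast hp0.ne'⟩
  have hκ : 2 * (2 ^ K * M ^ 2) ^ 2 ≤ Fintype.card (Fin p) * (12 * max C 1) ^ 2 := by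
    rw [Fintype.card_fin]
    exact ((div_lt_iff₀ (by positivity)).1 hp).le
  refine ⟨p, _, NeZero.ne p, he.ofReal_le_measure_frequently_sum_sq_ge (r := 2 ^ K) (by simp),
    fun x hx => ?_⟩
  refine (he.half_le_measure_pi_exists_lt_abs_seriesSum hC (hK.trans (lt_add_one _)) hκ
    (by simpa using hx)).trans (measure_mono fun t ht => ?_)
  obtain ⟨m, hm⟩ := ht
  exact ⟨m, (le_max_left C 1).trans_lt hm⟩

end BoundedONS

end PartialSums

section BanachPrinciple

variable {Ω ι : Type*} [MeasurableSpace Ω] {μ : Measure Ω}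

theorem measure_exists_lt_abs_le_of_tendsto {F : ℕ → ι → Ω → ℝ} {G : ι → Ω → ℝ} {C : ℝ}
    {ε : ENNReal} (hFG : ∀ m x, Tendsto (fun k => F k m x) atTop (nhds (G m x)))
    (hF : ∀ k, μ {x | ∃ m, C < |F k m x|} ≤ ε) : μ {x | ∃ m, C < |G m x|} ≤ ε := by
  let A (k : ℕ) : Set Ω := {x | ∃ m, C < |F k m x|}
  have hmono : Monotone fun k => ⋂ j ≥ k, A j := fun _ _ hk =>
    biInter_subset_biInter_left fun _ hj => le_trans hk hj
  have hsub : {x | ∃ m, C < |G m x|} ⊆ ⋃ k, ⋂ j ≥ k, A j := by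
    rintro x ⟨m, hm⟩
    obtain ⟨k, hk⟩ := eventually_atTop.1 ((hFG m x).abs.eventually_const_lt hm)
    exact mem_iUnion.2 ⟨k, mem_iInter₂.2 fun j hj => ⟨m, hk j hj⟩⟩
  refine (measure_mono hsub).trans ?_
  rw [hmono.measure_iUnion]
  exact iSup_le fun k => (measure_mono (iInter₂_subset k le_rfl)).trans (hF k)

theorem exists_nat_measure_exists_lt_abs_le [IsFiniteMeasure μ] [Countable ι] {F : ι → Ω → ℝ}
    (hF : ∀ m, Measurable (F m)) (hbdd : ∀ᵐ x ∂μ, BddAbove (range fun m => |F m x|))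
    {ε : ENNReal} (hε : ε ≠ 0) : ∃ k : ℕ, μ {x | ∃ m, k < |F m x|} ≤ ε := by
  let A (k : ℕ) : Set Ω := {x | ∃ m, k < |F m x|}
  have hA (k : ℕ) : MeasurableSet (A k) := by
    simp only [A, ofPred_exists]
    exact .iUnion fun m => measurableSet_lt measurable_const (hF m).abs
  have hanti : Antitone A := fun k l hkl x ⟨m, hm⟩ => ⟨m, (Nat.cast_le.2 hkl).trans_lt hm⟩
  have hnull : μ (⋂ k, A k) = 0 := by
    refine measure_mono_null (fun x hx => ?_) (ae_iff.1 hbdd)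
    rintro ⟨B, hB⟩
    obtain ⟨k, hk⟩ := exists_nat_ge B
    obtain ⟨m, hm⟩ := mem_iInter.1 hx k
    exact (hk.trans_lt hm).not_ge (hB (mem_range_self m))
  have hlim := tendsto_measure_iInter_atTop (fun k => (hA k).nullMeasurableSet) hanti
    ⟨0, measure_ne_top μ _⟩
  rw [hnull] at hlim
  exact (hlim.eventually_le_const (pos_iff_ne_zero.2 hε)).exists

variable {E : Type*} [NormedAddCommGroup E] [NormedSpace ℝ E] {T : ι → Ω → E →L[ℝ] ℝ}

theorem isClosed_setOf_measure_exists_lt_abs_le (T : ι → Ω → E →L[ℝ] ℝ) (C : ℝ) (ε : ENNReal) :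
    IsClosed {f | μ {x | ∃ m, C < |T m x f|} ≤ ε} :=
  IsSeqClosed.isClosed fun _ f hu huf => measure_exists_lt_abs_le_of_tendsto
    (fun m x => ((T m x).continuous.tendsto f).comp huf) hu

theorem measure_exists_lt_abs_le_add {C δ : ℝ} (hδ : 0 < δ) (f₀ f : E) :
    μ {x | ∃ m, 2 * C / δ < |T m x f|} ≤
      μ {x | ∃ m, C < |T m x (f₀ + δ • f)|} + μ {x | ∃ m, C < |T m x f₀|} := by
  refine (measure_mono ?_).trans (measure_union_le _ _)
  rintro x ⟨m, hm⟩
  by_contra hx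
  simp only [mem_union, mem_ofPred_eq, not_or, not_exists, not_lt, map_add, map_smul,
    smul_eq_mul] at hx
  have htri : δ * |T m x f| ≤ C + C := by
    calc δ * |T m x f| = |T m x f₀ + δ * T m x f - T m x f₀| := by
          rw [add_sub_cancel_left, abs_mul, abs_of_pos hδ]
      _ ≤ |T m x f₀ + δ * T m x f| + |T m x f₀| := abs_sub _ _
      _ ≤ C + C := add_le_add (hx.1 m) (hx.2 m)
  rw [div_lt_iff₀' hδ] at hm
  linarith

theorem exists_forall_norm_le_one_measure_exists_lt_abs_le [IsFiniteMeasure μ] [Countable ι]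
    [CompleteSpace E] (hT : ∀ m f, Measurable fun x => T m x f)
    (hbdd : ∀ f, ∀ᵐ x ∂μ, BddAbove (range fun m => |T m x f|)) {ε : ENNReal} (hε : ε ≠ 0) :
    ∃ C : ℝ, ∀ f, ‖f‖ ≤ 1 → μ {x | ∃ m, C < |T m x f|} ≤ ε := by
  let A (k : ℕ) : Set E := {f | μ {x | ∃ m, k < |T m x f|} ≤ ε / 2}
  have hAunion : ⋃ k, A k = univ := eq_univ_of_forall fun f => mem_iUnion.2 <|
    exists_nat_measure_exists_lt_abs_le (fun m => hT m f) (hbdd f) (ENNReal.half_pos hε).ne'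
  obtain ⟨k, f₀, hf₀⟩ := nonempty_interior_of_iUnion_of_closed
    (fun k : ℕ => isClosed_setOf_measure_exists_lt_abs_le T k (ε / 2)) hAunion
  obtain ⟨δ, hδ, hball⟩ := Metric.nhds_basis_closedBall.mem_iff.1 (mem_interior_iff_mem_nhds.1 hf₀)
  refine ⟨2 * k / δ, fun f hf => (measure_exists_lt_abs_le_add hδ f₀ f).trans ?_⟩
  have hmem : f₀ + δ • f ∈ Metric.closedBall f₀ δ := by
    rw [mem_closedBall_iff_norm, add_sub_cancel_left, norm_smul, Real.norm_of_nonneg hδ.le]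
    exact mul_le_of_le_one_right hδ.le hf
  exact (add_le_add (hball hmem) (hball (Metric.mem_closedBall_self hδ.le))).trans_eq
    (ENNReal.add_halves ε)

end BanachPrinciple

section FourierCoefficients

variable {Ω : Type*} [MeasurableSpace Ω] {μ : Measure Ω} {M : ℝ} {e : ℕ → Ω → ℝ}

/-- The Fourier coefficients of `f` with respect to `e`, indexed from `0`. -/
noncomputable def fourierCoeffs (μ : Measure Ω) (e : ℕ → Ω → ℝ) (f : Ω → ℝ) (n : ℕ) : ℝ :=
  ∫ t, f t * e n t ∂μ

namespace BoundedONS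

variable [IsFiniteMeasure μ]

/-- The Fourier coefficients as a continuous linear operator on `L¹(μ)`; the target carries the
topology of coordinatewise convergence. -/
noncomputable def l1Coeffs (he : BoundedONS μ M e) : Lp ℝ 1 μ →L[ℝ] (ℕ → ℝ) :=
  .pi fun n => ((ContinuousLinearMap.mul ℝ ℝ).lpPairing μ 1 ⊤).flip ((he.memLp n ⊤).toLp (e n))

theorem l1Coeffs_apply (he : BoundedONS μ M e) (f : Lp ℝ 1 μ) :
    he.l1Coeffs f = fourierCoeffs μ e f := by
  ext n
  change (ContinuousLinearMap.mul ℝ ℝ).lpPairing μ 1 ⊤ f ((he.memLp n ⊤).toLp (e n)) = _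
  rw [ContinuousLinearMap.lpPairing_eq_integral]
  refine integral_congr_ae ?_
  filter_upwards [(he.memLp n ⊤).coeFn_toLp] with t ht
  rw [ht, ContinuousLinearMap.mul_apply']

theorem setAverage_mem_image_l1Coeffs (he : BoundedONS μ M e) {s : Set Ω} (hs : MeasurableSet s)
    (hμs : μ s ≠ 0) :
    (fun n => ⨍ u in s, e n u ∂μ) ∈ he.l1Coeffs '' Metric.closedBall 0 1 := by
  have hreal : μ.real s ≠ 0 := (measureReal_ne_zero_iff).2 hμs
  refine ⟨(μ.real s)⁻¹ • indicatorConstLp 1 hs (measure_ne_top μ s) 1, ?_, ?_⟩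
  · rw [mem_closedBall_zero_iff, norm_smul, norm_indicatorConstLp one_ne_zero ENNReal.one_ne_top]
    simp [abs_of_nonneg, hreal]
  · ext n
    rw [map_smul, l1Coeffs_apply, Pi.smul_apply, fourierCoeffs, setAverage_eq,
      ← integral_indicator hs]
    congr 1
    refine integral_congr_ae ?_
    filter_upwards [indicatorConstLp_coeFn (p := 1) (hs := hs) (hμs := measure_ne_top μ s)
      (c := (1 : ℝ))] with u hu
    by_cases hus : u ∈ s <;> simp [hu, hus]

end BoundedONS

theorem ae_forall_mem_nhds_measure_preimage_pos {X : Type*} [TopologicalSpace X]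
    [HereditarilyLindelofSpace X] [MeasurableSpace X] [OpensMeasurableSpace X] {Φ : Ω → X}
    (hΦ : Measurable Φ) : ∀ᵐ t ∂μ, ∀ V ∈ nhds (Φ t), 0 < μ (Φ ⁻¹' V) := by
  filter_upwards [ae_of_ae_map hΦ.aemeasurable Measure.support_mem_ae] with t ht V hV
  obtain ⟨U, hUV, hU, htU⟩ := mem_nhds_iff.1 hV
  have hpos := (Measure.mem_support_iff_forall _).1 ht U (hU.mem_nhds htU)
  rw [Measure.map_apply hΦ hU.measurableSet] at hpos
  exact hpos.trans_le (measure_mono (preimage_mono hUV))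

theorem measure_exists_lt_abs_seriesSum_le_of_mem_closure {S : Set (ℕ → ℝ)} {C : ℝ} {ε : ENNReal}
    (hS : ∀ c ∈ S, μ {x | ∃ m, C < |seriesSum e c m x|} ≤ ε) {c : ℕ → ℝ} (hc : c ∈ closure S) :
    μ {x | ∃ m, C < |seriesSum e c m x|} ≤ ε := by
  obtain ⟨u, huS, huc⟩ := mem_closure_iff_seq_limit.1 hc
  refine measure_exists_lt_abs_le_of_tendsto (F := fun k m x => seriesSum e (u k) m x)
    (fun m x => ?_) fun k => hS _ (huS k)
  exact tendsto_finsetSum _ fun n _ => (tendsto_pi_nhds.1 huc n).mul_const _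

namespace BoundedONS

/-- A point mass is a limit of normalized indicator functions of the sets on which finitely many
`e n` are almost constant. -/
theorem ae_mem_closure_image_l1Coeffs [IsFiniteMeasure μ] (he : BoundedONS μ M e) :
    ∀ᵐ t ∂μ, (fun n => e n t) ∈ closure (he.l1Coeffs '' Metric.closedBall 0 1) := by
  have hΦ : Measurable fun t n => e n t := measurable_pi_lambda _ he.measurable
  filter_upwards [ae_forall_mem_nhds_measure_preimage_pos hΦ] with t ht
  let V (k : ℕ) : Set (ℕ → ℝ) :=
    (Finset.range k : Set ℕ).pi fun n => Metric.closedBall (e n t) (1 / (k + 1))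
  have hV (k : ℕ) : MeasurableSet (V k) :=
    .pi (Finset.countable_toSet _) fun _ _ => measurableSet_closedBall
  have hpos (k : ℕ) : μ ((fun t n => e n t) ⁻¹' V k) ≠ 0 :=
    (ht _ (set_pi_mem_nhds (Finset.finite_toSet _) fun _ _ =>
      Metric.closedBall_mem_nhds _ Nat.one_div_pos_of_nat)).ne'
  refine mem_closure_of_tendsto (f := fun k n => ⨍ u in (fun t n => e n t) ⁻¹' V k, e n u ∂μ)
    (b := atTop) (tendsto_pi_nhds.2 fun n => ?_)
    (Eventually.of_forall fun k => he.setAverage_mem_image_l1Coeffs (hΦ (hV k)) (hpos k))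
  refine tendsto_iff_dist_tendsto_zero.2 (squeeze_zero' (Eventually.of_forall fun _ => dist_nonneg)
    ((eventually_gt_atTop n).mono fun k hk => ?_) tendsto_one_div_add_atTop_nhds_zero_nat)
  refine (convex_closedBall (e n t) _).set_average_mem Metric.isClosed_closedBall (hpos k)
    (measure_ne_top _ _) ?_ (he.integrable n).integrableOn
  exact (ae_restrict_iff' (hΦ (hV k))).2 (ae_of_all _ fun u hu => hu n (by simpa using hk))

theorem ae_empiricalCoeffs_mem_closure [IsProbabilityMeasure μ] {κ : Type*} [Fintype κ] [Nonempty κ]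
    (he : BoundedONS μ M e) : ∀ᵐ t ∂Measure.pi fun _ : κ => μ,
      empiricalCoeffs e t ∈ closure (he.l1Coeffs '' Metric.closedBall 0 1) := by
  have hconvex : Convex ℝ (closure (he.l1Coeffs '' Metric.closedBall 0 1)) :=
    ((convex_closedBall 0 1).linear_image he.l1Coeffs.toLinearMap).closure
  have hpoint : ∀ᵐ t ∂Measure.pi fun _ : κ => μ, ∀ j,
      (fun n => e n (t j)) ∈ closure (he.l1Coeffs '' Metric.closedBall 0 1) :=
    ae_all_iff.2 fun j => (measurePreserving_eval (fun _ : κ => μ) j).quasiMeasurePreserving.ae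
      he.ae_mem_closure_image_l1Coeffs
  filter_upwards [hpoint] with t ht
  have hmem := hconvex.sum_mem (t := Finset.univ) (w := fun _ => (Fintype.card κ : ℝ)⁻¹)
    (fun _ _ => by positivity) (by simp) fun j _ => ht j
  convert hmem using 1
  ext n
  simp [empiricalCoeffs, Finset.mul_sum]

theorem exists_forall_measure_exists_lt_abs_seriesSum_le [IsFiniteMeasure μ]
    (he : BoundedONS μ M e)
    (hbdd : ∀ f, ∀ᵐ x ∂μ, BddAbove (range fun m => |seriesSum e (he.l1Coeffs f) m x|))
    {ε : ENNReal} (hε : ε ≠ 0) : ∃ C : ℝ, ∀ c ∈ he.l1Coeffs '' Metric.closedBall 0 1,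
      μ {x | ∃ m, C < |seriesSum e c m x|} ≤ ε := by
  let T (m : ℕ) (x : Ω) : Lp ℝ 1 μ →L[ℝ] ℝ :=
    ∑ n ∈ Finset.range m, e n x • (ContinuousLinearMap.proj n).comp he.l1Coeffs
  have hT (m : ℕ) (x : Ω) (f : Lp ℝ 1 μ) : T m x f = seriesSum e (he.l1Coeffs f) m x := by
    simp [T, seriesSum, mul_comm]
  obtain ⟨C, hC⟩ := exists_forall_norm_le_one_measure_exists_lt_abs_le (T := T)
    (fun m f => by simpa only [hT] using measurable_seriesSum he.measurable _ m)
    (fun f => by simpa only [hT] using hbdd f) hε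
  refine ⟨C, forall_mem_image.2 fun f hf => ?_⟩
  simpa only [hT] using hC f (mem_closedBall_zero_iff.1 hf)

end BoundedONS

end FourierCoefficients

namespace BoundedONS

variable {Ω : Type*} [MeasurableSpace Ω] {μ : Measure Ω} [IsProbabilityMeasure μ] {M : ℝ}
  {e : ℕ → Ω → ℝ}

theorem exists_not_ae_bddAbove_abs_seriesSum (he : BoundedONS μ M e) :
    ∃ f, ¬∀ᵐ x ∂μ, BddAbove (range fun m => |seriesSum e (he.l1Coeffs f) m x|) := by
  by_contra! hbdd
  have hM : 0 < M := one_pos.trans_le he.one_le_bound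
  obtain ⟨ε, hε, hεκ⟩ : ∃ ε : ENNReal, 0 < ε ∧ ε < 2⁻¹ * ENNReal.ofReal (1 / (2 * M ^ 2)) :=
    exists_between (ENNReal.mul_pos (by simp) (ENNReal.ofReal_pos.2 (by positivity)).ne')
  obtain ⟨C, hC⟩ := he.exists_forall_measure_exists_lt_abs_seriesSum_le hbdd hε.ne'
  obtain ⟨p, X, hp, hμX, hX⟩ := he.exists_half_le_measure_pi_exists_lt_abs_seriesSum C
  have : NeZero p := ⟨hp⟩
  have hsmall : ∀ᵐ t ∂Measure.pi fun _ : Fin p => μ,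
      μ {x | ∃ m, C < |seriesSum e (empiricalCoeffs e t) m x|} ≤ ε := by
    filter_upwards [he.ae_empiricalCoeffs_mem_closure] with t ht
    exact measure_exists_lt_abs_seriesSum_le_of_mem_closure hC ht
  have hle : 2⁻¹ * μ X ≤ ε := by
    simpa using mul_measure_le_mul_measure_univ
      (measurableSet_exists_lt_abs_seriesSum_empiricalCoeffs he.measurable C) hX hsmall
  exact hεκ.not_ge ((mul_le_mul_right hμX _).trans hle)

end BoundedONS

section General

variable {Ω : Type*} [MeasurableSpace Ω] {μ : Measure Ω} {M : ℝ} {e : ℕ → Ω → ℝ}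

theorem exists_boundedONS_ae_eq [IsProbabilityMeasure μ] (hmeas : ∀ n, AEMeasurable (e n) μ)
    (hbdd : ∀ n, ∀ᵐ x ∂μ, |e n x| ≤ M)
    (horth : ∀ n m, ∫ x, e n x * e m x ∂μ = if n = m then 1 else 0) :
    ∃ e', BoundedONS μ M e' ∧ ∀ n, e n =ᵐ[μ] e' n := by
  have hM : 0 ≤ M := by
    obtain ⟨x, hx⟩ := (hbdd 0).exists
    exact (abs_nonneg _).trans hx
  have hclip (n : ℕ) : e n =ᵐ[μ] fun x => max (-M) (min M ((hmeas n).mk (e n) x)) := by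
    filter_upwards [(hmeas n).ae_eq_mk, hbdd n] with x hmk hx
    rw [← hmk, min_eq_right (abs_le.1 hx).2, max_eq_right (abs_le.1 hx).1]
  refine ⟨_, ⟨fun n => ?_, fun n x => ?_, fun n m => ?_⟩, hclip⟩
  · exact measurable_const.max (measurable_const.min (hmeas n).measurable_mk)
  · exact abs_le.2 ⟨le_max_left _ _, max_le (by linarith) (min_le_left _ _)⟩
  · rw [← horth n m]
    exact integral_congr_ae ((hclip n).mul (hclip m)).symm

theorem ae_forall_seriesSum_fourierCoeffs_eq {e' : ℕ → Ω → ℝ} (h : ∀ n, e n =ᵐ[μ] e' n)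
    (f : Ω → ℝ) : ∀ᵐ x ∂μ, ∀ m,
      seriesSum e (fourierCoeffs μ e f) m x = seriesSum e' (fourierCoeffs μ e' f) m x := by
  have hcoeffs : fourierCoeffs μ e f = fourierCoeffs μ e' f :=
    funext fun n => integral_congr_ae ((EventuallyEq.refl _ f).mul (h n))
  filter_upwards [ae_all_iff.2 h] with x hx m
  simp only [seriesSum, hcoeffs, hx]

theorem bochkarev_divergence_general [IsProbabilityMeasure μ] (hmeas : ∀ n, AEMeasurable (e n) μ)
    (hbdd : ∀ n, ∀ᵐ x ∂μ, |e n x| ≤ M)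
    (horth : ∀ n m, ∫ x, e n x * e m x ∂μ = if n = m then 1 else 0) :
    ∃ f : Ω → ℝ, Measurable f ∧ Integrable f μ ∧
      0 < μ {x | ∀ B : ℝ, ∃ m, B < |seriesSum e (fourierCoeffs μ e f) m x|} := by
  obtain ⟨e', he', hee'⟩ := exists_boundedONS_ae_eq hmeas hbdd horth
  obtain ⟨f, hf⟩ := he'.exists_not_ae_bddAbove_abs_seriesSum
  refine ⟨f, (Lp.stronglyMeasurable f).measurable, L1.integrable_coeFn f, ?_⟩
  contrapose! hf
  filter_upwards [ae_forall_seriesSum_fourierCoeffs_eq hee' f, measure_eq_zero_iff_ae_notMem.1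
    (nonpos_iff_eq_zero.1 hf)] with x hx hxB
  simp only [hx, not_forall, not_exists, not_lt] at hxB
  obtain ⟨B, hB⟩ := hxB
  exact ⟨B, forall_mem_range.2 (by simpa only [he'.l1Coeffs_apply] using hB)⟩

end General

theorem partialSum_eq_seriesSum (φ : ℕ → ℝ → ℝ) (f : ℝ → ℝ) (m : ℕ) (x : ℝ) :
    partialSum φ f m x = seriesSum (fun n => φ (n + 1))
      (fourierCoeffs (volume.restrict (Icc 0 1)) (fun n => φ (n + 1)) f) m x := by
  rw [partialSum, ← Finset.Ico_add_one_right_eq_Icc, seriesSum, Finset.range_eq_Ico]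
  exact (Finset.sum_Ico_add' (fun n => fourierCoef φ f n * φ n x) 0 m 1).symm

theorem forall_exists_one_le_lt_abs_partialSum_iff {φ : ℕ → ℝ → ℝ} {f : ℝ → ℝ} {x : ℝ} :
    (∀ B : ℝ, ∃ m, 1 ≤ m ∧ B < |partialSum φ f m x|) ↔ ∀ B : ℝ, ∃ m, B < |partialSum φ f m x| := by
  refine ⟨fun h B => (h B).imp fun _ hm => hm.2, fun h B => ?_⟩
  obtain ⟨m, hm⟩ := h (max B 0)
  refine ⟨m, Nat.one_le_iff_ne_zero.2 ?_, (le_max_left B 0).trans_lt hm⟩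
  rintro rfl
  simp [partialSum] at hm

/-- Bochkarev's theorem: for every uniformly bounded orthonormal system there is an
integrable function whose Fourier series diverges unboundedly on a set of positive measure. -/
theorem bochkarev_divergence (φ : ℕ → ℝ → ℝ) (M : ℝ)
    (hONS : IsONS φ) (hUB : UnifBounded φ M) :
    ∃ f : ℝ → ℝ, Measurable f ∧ IntegrableOn f (Set.Icc (0:ℝ) 1) ∧
      0 < volume {x ∈ Set.Icc (0:ℝ) 1 |
        ∀ B : ℝ, ∃ m : ℕ, 1 ≤ m ∧ B < |partialSum φ f m x|} := by
  have : IsProbabilityMeasure (volume.restrict (Icc (0 : ℝ) 1)) := ⟨by simp⟩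
  obtain ⟨f, hf, hint, hpos⟩ := bochkarev_divergence_general (e := fun n => φ (n + 1))
    (fun n => (hONS.1 _ n.succ_pos).aemeasurable) (fun n => hUB.2 _ n.succ_pos)
    (fun n m => by simpa using hONS.2 _ _ n.succ_pos m.succ_pos)
  simp only [Measure.restrict_apply' measurableSet_Icc, inter_comm, ← partialSum_eq_seriesSum,
    ← forall_exists_one_le_lt_abs_partialSum_iff] at hpos
  exact ⟨f, hf, hint, hpos⟩
end

section
/- Let p, q : [0,1] → [1,∞) be measurable exponents. Then L^{q(·)}[0,1] ⊆ L^{p(·)}[0,1] if and only if p(t) ≤ q(t) for almost every t ∈ [0,1]; moreover, if p(t) ≤ q(t) a.e., then ‖f‖_{p(·)} ≤ 2‖f‖_{q(·)} for every measurable f on [0,1]. -/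
open MeasureTheory Set Filter

/-- The Luxemburg norm of `f` in the variable exponent Lebesgue space `L^{q(·)}[0,1]`:
`inf {λ > 0 : ∫_0^1 (|f|/λ)^{q(x)} dx ≤ 1}`, with `inf ∅ = ∞`. -/
noncomputable def vpNorm (q f : ℝ → ℝ) : ENNReal :=
  sInf {l : ENNReal | ∃ r : ℝ, 0 < r ∧ l = ENNReal.ofReal r ∧
    (∫⁻ x in Set.Icc (0:ℝ) 1, ENNReal.ofReal ((|f x| / r) ^ (q x))) ≤ 1}

/-!
If `0 ≤ p ≤ q`, then `a ^ p ≤ 1 + a ^ q` for `a ≥ 0`, so over a finite measure the modular of `p` is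
at most the total mass plus the modular of `q`. Rescaling the function by a large constant brings it
below one: with the constant `(1 + μ univ) ^ (1 / s)` if `s ≤ p`, and by dominated convergence if
only `0 < p`.

Conversely, if `q < p` on a set of positive measure, then `s * q ≤ p ≤ M` on some set `B` of
positive measure, with `s > 1` and `M < ∞`. As `B` has subsets of arbitrarily small positive
measure, there is an integrable `h ≥ 0` with `∫⁻ x in B, h x ^ s = ∞`, and `f x = h x ^ (1 / q x)`
has finite `q`-norm. If its `p`-norm were finite, then by the first part so would be its norm on `B`
for the exponent `s * q`. As `s * q ≤ M` there, the modular of `f` for `s * q` would be finite too,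
but it equals `∫⁻ x in B, h x ^ s`.
-/

open scoped ENNReal NNReal Topology

lemma rpow_le_one_add_rpow {a s t : ℝ} (ha : 0 ≤ a) (hs : 0 ≤ s) (hst : s ≤ t) :
    a ^ s ≤ 1 + a ^ t := by
  rcases le_total a 1 with ha1 | ha1
  · exact (Real.rpow_le_one ha ha1 hs).trans (le_add_of_nonneg_right (Real.rpow_nonneg ha t))
  · exact (Real.rpow_le_rpow_of_exponent_le ha1 hst).trans (le_add_of_nonneg_left zero_le_one)

section Luxemburg

variable {α : Type*} [MeasurableSpace α] {μ : Measure α} {p q f : α → ℝ} {r s M : ℝ}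

/-- The modular `ρ_q(f / r) = ∫ (|f| / r) ^ q ∂μ` of the variable exponent space `L^{q(·)}(μ)`. The
scale `r` is an argument, since the Luxemburg norm is an infimum over scales. -/
noncomputable def luxemburgModular (μ : Measure α) (q f : α → ℝ) (r : ℝ) : ℝ≥0∞ :=
  ∫⁻ x, ENNReal.ofReal ((|f x| / r) ^ q x) ∂μ

/-- The Luxemburg norm of `f` in `L^{q(·)}(μ)`, the infimum of the scales at which the modular is at
most one (`∞` if there is none). It extends `vpNorm` to an arbitrary measure. -/
noncomputable def luxemburgNorm (μ : Measure α) (q f : α → ℝ) : ℝ≥0∞ :=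
  sInf {l : ℝ≥0∞ | ∃ r : ℝ, 0 < r ∧ l = ENNReal.ofReal r ∧ luxemburgModular μ q f r ≤ 1}

lemma vpNorm_eq_luxemburgNorm (q f : ℝ → ℝ) :
    vpNorm q f = luxemburgNorm (volume.restrict (Icc 0 1)) q f :=
  rfl

lemma luxemburgNorm_le_ofReal (hr : 0 < r) (h : luxemburgModular μ q f r ≤ 1) :
    luxemburgNorm μ q f ≤ ENNReal.ofReal r :=
  sInf_le ⟨r, hr, rfl, h⟩

lemma luxemburgNorm_lt_top_iff :
    luxemburgNorm μ q f < ⊤ ↔ ∃ r, 0 < r ∧ luxemburgModular μ q f r ≤ 1 := by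
  constructor
  · intro h
    obtain ⟨_, ⟨r, hr, -, hle⟩, -⟩ := sInf_lt_iff.1 h
    exact ⟨r, hr, hle⟩
  · rintro ⟨r, hr, hle⟩
    exact (luxemburgNorm_le_ofReal hr hle).trans_lt ENNReal.ofReal_lt_top

lemma luxemburgNorm_mono_measure {ν : Measure α} (hμν : μ ≤ ν) :
    luxemburgNorm μ q f ≤ luxemburgNorm ν q f := by
  refine le_sInf ?_
  rintro _ ⟨r, hr, rfl, hle⟩
  exact luxemburgNorm_le_ofReal hr ((lintegral_mono' hμν le_rfl).trans hle)

lemma luxemburgModular_le_measure_univ_add (hp : ∀ᵐ x ∂μ, 0 ≤ p x) (hpq : ∀ᵐ x ∂μ, p x ≤ q x)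
    (hr : 0 ≤ r) : luxemburgModular μ p f r ≤ μ univ + luxemburgModular μ q f r :=
  calc luxemburgModular μ p f r
      ≤ ∫⁻ x, (1 + ENNReal.ofReal ((|f x| / r) ^ q x)) ∂μ := by
        refine lintegral_mono_ae ?_
        filter_upwards [hp, hpq] with x hpx hpqx
        have ha : 0 ≤ |f x| / r := by positivity
        rw [← ENNReal.ofReal_one, ← ENNReal.ofReal_add zero_le_one (Real.rpow_nonneg ha _)]
        exact ENNReal.ofReal_le_ofReal (rpow_le_one_add_rpow ha hpx hpqx)
    _ = μ univ + luxemburgModular μ q f r := by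
        rw [lintegral_add_left measurable_const, lintegral_const, one_mul, luxemburgModular]

lemma luxemburgModular_mul_le {c : ℝ} (hs : ∀ᵐ x ∂μ, s ≤ p x) (hc : 1 ≤ c) (hr : 0 ≤ r) :
    luxemburgModular μ p f (c * r) ≤ ENNReal.ofReal (c ^ s)⁻¹ * luxemburgModular μ p f r := by
  rw [luxemburgModular, luxemburgModular, ← lintegral_const_mul' _ _ ENNReal.ofReal_ne_top]
  refine lintegral_mono_ae ?_
  filter_upwards [hs] with x hsx
  rw [← ENNReal.ofReal_mul (by positivity)]
  refine ENNReal.ofReal_le_ofReal ?_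
  calc (|f x| / (c * r)) ^ p x = (c ^ p x)⁻¹ * (|f x| / r) ^ p x := by
        rw [div_mul_eq_div_div_swap, Real.div_rpow (by positivity) (by positivity),
          div_eq_inv_mul]
    _ ≤ (c ^ s)⁻¹ * (|f x| / r) ^ p x := by gcongr

lemma luxemburgModular_le_mul_luxemburgModular {r' : ℝ} (hp : ∀ᵐ x ∂μ, 0 ≤ p x)
    (hM : ∀ᵐ x ∂μ, p x ≤ M) (hr : 0 ≤ r) (hr' : 0 < r') :
    luxemburgModular μ p f r ≤
      ENNReal.ofReal (max (r' / r) 1 ^ M) * luxemburgModular μ p f r' := by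
  rw [luxemburgModular, luxemburgModular, ← lintegral_const_mul' _ _ ENNReal.ofReal_ne_top]
  refine lintegral_mono_ae ?_
  filter_upwards [hp, hM] with x hpx hMx
  rw [← ENNReal.ofReal_mul (by positivity)]
  refine ENNReal.ofReal_le_ofReal ?_
  calc (|f x| / r) ^ p x = (r' / r) ^ p x * (|f x| / r') ^ p x := by
        rw [← Real.mul_rpow (by positivity) (by positivity), mul_comm,
          div_mul_div_cancel₀ hr'.ne']
    _ ≤ max (r' / r) 1 ^ p x * (|f x| / r') ^ p x := by gcongr; exact le_max_left _ _
    _ ≤ max (r' / r) 1 ^ M * (|f x| / r') ^ p x := by gcongr; exact le_max_right _ _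

lemma luxemburgModular_lt_top_of_luxemburgNorm_lt_top (hp : ∀ᵐ x ∂μ, 0 ≤ p x)
    (hM : ∀ᵐ x ∂μ, p x ≤ M) (hr : 0 ≤ r) (hf : luxemburgNorm μ p f < ⊤) :
    luxemburgModular μ p f r < ⊤ := by
  obtain ⟨r', hr', hle⟩ := luxemburgNorm_lt_top_iff.1 hf
  exact (luxemburgModular_le_mul_luxemburgModular hp hM hr hr').trans_lt
    (ENNReal.mul_lt_top ENNReal.ofReal_lt_top (hle.trans_lt ENNReal.one_lt_top))

lemma luxemburgNorm_le_rpow_mul_luxemburgNorm [IsFiniteMeasure μ] (hs : 0 < s)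
    (hsp : ∀ᵐ x ∂μ, s ≤ p x) (hpq : ∀ᵐ x ∂μ, p x ≤ q x) (f : α → ℝ) :
    luxemburgNorm μ p f ≤ (1 + μ univ) ^ (1 / s) * luxemburgNorm μ q f := by
  set c : ℝ := (1 + μ.real univ) ^ (1 / s)
  have hm : 1 ≤ 1 + μ.real univ := le_add_of_nonneg_right measureReal_nonneg
  have hc : 1 ≤ c := Real.one_le_rpow hm (by positivity)
  have hcs : c ^ s = 1 + μ.real univ := by
    rw [← Real.rpow_mul (by positivity), one_div_mul_cancel hs.ne', Real.rpow_one]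
  have hmass : ENNReal.ofReal (1 + μ.real univ) = 1 + μ univ := by
    rw [ENNReal.ofReal_add zero_le_one measureReal_nonneg, ENNReal.ofReal_one, ofReal_measureReal]
  have hcoe : (1 + μ univ) ^ (1 / s) = ENNReal.ofReal c := by
    rw [← hmass, ENNReal.ofReal_rpow_of_nonneg (by positivity) (by positivity)]
  have hc0 : ENNReal.ofReal c ≠ 0 := (ENNReal.ofReal_pos.2 (by positivity)).ne'
  rw [hcoe, mul_comm, ← ENNReal.div_le_iff hc0 ENNReal.ofReal_ne_top]
  refine le_sInf ?_
  rintro _ ⟨r, hr, rfl, hle⟩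
  rw [ENNReal.div_le_iff hc0 ENNReal.ofReal_ne_top, mul_comm,
    ← ENNReal.ofReal_mul (by positivity)]
  refine luxemburgNorm_le_ofReal (by positivity) ?_
  have hp : ∀ᵐ x ∂μ, 0 ≤ p x := hsp.mono fun x hx => hs.le.trans hx
  calc luxemburgModular μ p f (c * r)
      ≤ ENNReal.ofReal (c ^ s)⁻¹ * luxemburgModular μ p f r :=
        luxemburgModular_mul_le hsp hc hr.le
    _ ≤ ENNReal.ofReal (c ^ s)⁻¹ * (μ univ + luxemburgModular μ q f r) := by
        gcongr; exact luxemburgModular_le_measure_univ_add hp hpq hr.le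
    _ ≤ (1 + μ univ)⁻¹ * (1 + μ univ) := by
        rw [hcs, ENNReal.ofReal_inv_of_pos (by positivity), hmass, add_comm 1]
        gcongr
    _ ≤ 1 := ENNReal.inv_mul_le_one _

lemma tendsto_luxemburgModular_atTop (hpm : AEMeasurable p μ) (hfm : AEMeasurable f μ)
    (hp : ∀ᵐ x ∂μ, 0 < p x) (hr : 0 < r) (hfin : luxemburgModular μ p f r ≠ ⊤) :
    Tendsto (luxemburgModular μ p f) atTop (𝓝 0) := by
  rw [← lintegral_zero (μ := μ)]
  refine tendsto_lintegral_filter_of_dominated_convergence'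
    (fun x => ENNReal.ofReal ((|f x| / r) ^ p x)) (.of_forall fun R => by fun_prop) ?_ hfin ?_
  · filter_upwards [eventually_ge_atTop r] with R hrR
    filter_upwards [hp] with x hpx
    have hR : 0 < R := hr.trans_le hrR
    gcongr
  · filter_upwards [hp] with x hpx
    have hdiv : Tendsto (fun R : ℝ => |f x| / R) atTop (𝓝 0) :=
      tendsto_const_nhds.div_atTop tendsto_id
    simpa [Real.zero_rpow hpx.ne'] using
      ENNReal.tendsto_ofReal (hdiv.rpow_const (p := p x) (.inr hpx.le))

lemma luxemburgNorm_lt_top_of_ae_le [IsFiniteMeasure μ] (hpm : AEMeasurable p μ)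
    (hfm : AEMeasurable f μ) (hp : ∀ᵐ x ∂μ, 0 < p x) (hpq : ∀ᵐ x ∂μ, p x ≤ q x)
    (hfq : luxemburgNorm μ q f < ⊤) : luxemburgNorm μ p f < ⊤ := by
  obtain ⟨r, hr, hle⟩ := luxemburgNorm_lt_top_iff.1 hfq
  have hfin : luxemburgModular μ p f r < ⊤ :=
    calc luxemburgModular μ p f r ≤ μ univ + luxemburgModular μ q f r :=
          luxemburgModular_le_measure_univ_add (hp.mono fun _ => le_of_lt) hpq hr.le
      _ < ⊤ := ENNReal.add_lt_top.2 ⟨measure_lt_top μ univ, hle.trans_lt ENNReal.one_lt_top⟩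
  have hsmall := (tendsto_luxemburgModular_atTop hpm hfm hp hr hfin.ne).eventually_le_const one_pos
  obtain ⟨R, hR, hR0⟩ := (hsmall.and (eventually_gt_atTop 0)).exists
  exact luxemburgNorm_lt_top_iff.2 ⟨R, hR0, hR⟩

lemma luxemburgModular_mul_rpow_one_div (hs : 0 ≤ s) (hq : ∀ᵐ x ∂μ, 0 < q x) (h : α → ℝ≥0) :
    luxemburgModular μ (fun x => s * q x) (fun x => (h x : ℝ) ^ (1 / q x)) 1 =
      ∫⁻ x, (h x : ℝ≥0∞) ^ s ∂μ := by
  refine lintegral_congr_ae ?_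
  filter_upwards [hq] with x hqx
  have hexp : 1 / q x * (s * q x) = s := by field_simp
  rw [div_one, abs_of_nonneg (by positivity), ← Real.rpow_mul (by positivity), hexp,
    ← ENNReal.ofReal_rpow_of_nonneg (by positivity) hs, ENNReal.ofReal_coe_nnreal]

lemma exists_measure_ne_zero_of_not_ae_le (hpm : Measurable p) (hqm : Measurable q)
    (hq : ∀ᵐ x ∂μ, 0 < q x) (hpq : ¬ ∀ᵐ x ∂μ, p x ≤ q x) :
    ∃ s M : ℝ, 1 < s ∧ ∃ B, MeasurableSet B ∧ μ B ≠ 0 ∧ ∀ x ∈ B, s * q x ≤ p x ∧ p x ≤ M := by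
  let s : ℕ → ℝ := fun m => 1 + 1 / ((m : ℝ) + 1)
  let B : ℕ × ℕ → Set α := fun n => {x | s n.1 * q x ≤ p x ∧ p x ≤ n.2}
  suffices hB : ∃ n, μ (B n) ≠ 0 by
    obtain ⟨n, hn⟩ := hB
    refine ⟨s n.1, n.2, lt_add_of_pos_right _ (by positivity), B n, ?_, hn, fun _ hx => hx⟩
    exact (measurableSet_le (by fun_prop) hpm).inter (measurableSet_le hpm measurable_const)
  by_contra! hnull
  refine hpq ?_
  filter_upwards [hq, ae_all_iff.2 fun n => measure_eq_zero_iff_ae_notMem.1 (hnull n)]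
    with x hqx hxB
  by_contra! hlt
  obtain ⟨m, hm⟩ := exists_nat_one_div_lt (sub_pos.2 ((one_lt_div hqx).2 hlt))
  obtain ⟨l, hl⟩ := exists_nat_ge (p x)
  refine hxB (m, l) ⟨?_, hl⟩
  rw [← le_div_iff₀ hqx]
  exact (lt_sub_iff_add_lt'.1 hm).le

end Luxemburg

section SmallSets

variable {α : Type*} [TopologicalSpace α] [SecondCountableTopology α] [MeasurableSpace α]
  [OpensMeasurableSpace α] {μ : Measure α} [μ.OuterRegular] [NullSingletonClass μ] {B : Set α}
  {s : ℝ}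

lemma exists_measurableSet_subset_measure_lt (hB : MeasurableSet B) (hμB : μ B ≠ 0) {ε : ℝ≥0∞}
    (hε : 0 < ε) : ∃ E ⊆ B, MeasurableSet E ∧ μ E ≠ 0 ∧ μ E < ε := by
  obtain ⟨x, -, hx⟩ := exists_mem_forall_mem_nhdsWithin_pos_measure hμB
  obtain ⟨U, hxU, hU, hμU⟩ := Set.exists_isOpen_lt_of_lt (μ := μ) {x} ε (by simpa)
  refine ⟨B ∩ U, inter_subset_left, hB.inter hU.measurableSet, (hx _ ?_).ne',
    (measure_mono inter_subset_right).trans_lt hμU⟩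
  exact inter_mem_nhdsWithin B (hU.mem_nhds (singleton_subset_iff.1 hxU))

lemma exists_mul_measure_le_and_le_rpow_mul_measure (hB : MeasurableSet B) (hμB : μ B ≠ 0)
    (hs : 1 < s) {ε C : ℝ≥0∞} (hε : 0 < ε) (hε' : ε ≠ ⊤) (hC : C ≠ ⊤) :
    ∃ E ⊆ B, MeasurableSet E ∧ ∃ c, c * μ E ≤ ε ∧ C ≤ c ^ s * μ E := by
  have hs' : 0 < s - 1 := sub_pos.2 hs
  set T : ℝ≥0∞ := (C / ε) ^ (s - 1)⁻¹
  have hT : T ≠ ⊤ := ENNReal.rpow_ne_top_of_nonneg (by positivity) (ENNReal.div_ne_top hC hε.ne')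
  obtain ⟨E, hEB, hE, hμE, hET⟩ :=
    exists_measurableSet_subset_measure_lt hB hμB (ENNReal.div_pos hε.ne' hT)
  have hμE' : μ E ≠ ⊤ := hET.ne_top
  set c : ℝ≥0∞ := ε / μ E
  have hc0 : c ≠ 0 := (ENNReal.div_pos hε.ne' hμE').ne'
  have hc : c ≠ ⊤ := ENNReal.div_ne_top hε' hμE
  have hcE : c * μ E = ε := ENNReal.div_mul_cancel hμE hμE'
  have hTc : T ≤ c := by
    rw [ENNReal.le_div_iff_mul_le (.inl hμE) (.inl hμE'), mul_comm,
      ← ENNReal.le_div_iff_mul_le (.inr hε.ne') (.inl hT)]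
    exact hET.le
  refine ⟨E, hEB, hE, c, hcE.le, ?_⟩
  calc C = C / ε * ε := (ENNReal.div_mul_cancel hε.ne' hε').symm
    _ = T ^ (s - 1) * ε := by rw [ENNReal.rpow_inv_rpow hs'.ne']
    _ ≤ c ^ (s - 1) * ε := by gcongr
    _ = c ^ s * μ E := by
      rw [ENNReal.rpow_sub _ _ hc0 hc, ENNReal.rpow_one, ← hcE, ← mul_assoc,
        ENNReal.div_mul_cancel hc0 hc]

lemma exists_lintegral_le_one_and_setLIntegral_rpow_eq_top (hB : MeasurableSet B) (hμB : μ B ≠ 0)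
    (hs : 1 < s) :
    ∃ h : α → ℝ≥0, Measurable h ∧ ∫⁻ x, h x ∂μ ≤ 1 ∧ ∫⁻ x in B, (h x : ℝ≥0∞) ^ s ∂μ = ⊤ := by
  obtain ⟨ε, hε, hε1⟩ := ENNReal.exists_pos_sum_of_countable one_ne_zero ℕ
  choose E hEB hE c hcε hnc using fun n : ℕ =>
    exists_mul_measure_le_and_le_rpow_mul_measure hB hμB hs (ENNReal.coe_pos.2 (hε n))
      ENNReal.coe_ne_top (ENNReal.natCast_ne_top n)
  have hm (n : ℕ) : Measurable ((E n).indicator fun _ => c n) := measurable_const.indicator (hE n)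
  let g : α → ℝ≥0∞ := fun x => ∑' n, (E n).indicator (fun _ => c n) x
  have hg : Measurable g := Measurable.tsum hm
  have hg1 : ∫⁻ x, g x ∂μ ≤ 1 :=
    calc ∫⁻ x, g x ∂μ = ∑' n, c n * μ (E n) := by
          rw [lintegral_tsum fun n => (hm n).aemeasurable]
          exact tsum_congr fun n => lintegral_indicator_const (hE n) (c n)
      _ ≤ ∑' n, (ε n : ℝ≥0∞) := ENNReal.tsum_le_tsum hcε
      _ ≤ 1 := hε1.le
  have hgs : ∫⁻ x in B, g x ^ s ∂μ = ⊤ := by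
    refine ENNReal.eq_top_of_forall_nnreal_le fun R => ?_
    obtain ⟨n, hn⟩ := exists_nat_ge R
    calc (R : ℝ≥0∞) ≤ c n ^ s * μ (E n) := le_trans (by exact_mod_cast hn) (hnc n)
      _ = ∫⁻ _ in E n, c n ^ s ∂μ := (setLIntegral_const _ _).symm
      _ ≤ ∫⁻ x in E n, g x ^ s ∂μ := by
          refine setLIntegral_mono (hg.pow_const s) fun x hx => ?_
          gcongr
          exact (indicator_of_mem hx fun _ => c n).ge.trans (ENNReal.le_tsum n)
      _ ≤ ∫⁻ x in B, g x ^ s ∂μ := lintegral_mono_set (hEB n)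
  have hcoe : ∀ᵐ x ∂μ, ((g x).toNNReal : ℝ≥0∞) = g x :=
    (ae_lt_top hg (hg1.trans_lt ENNReal.one_lt_top).ne).mono fun _ hx => ENNReal.coe_toNNReal hx.ne
  refine ⟨fun x => (g x).toNNReal, hg.ennreal_toNNReal, (lintegral_congr_ae hcoe).trans_le hg1, ?_⟩
  exact (lintegral_congr_ae <| (ae_restrict_of_ae hcoe).mono fun _ hx => by rw [hx]).trans hgs

lemma exists_luxemburgNorm_lt_top_and_eq_top [IsFiniteMeasure μ] {p q : α → ℝ} (hpm : Measurable p)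
    (hqm : Measurable q) (hq : ∀ᵐ x ∂μ, 0 < q x) (hpq : ¬ ∀ᵐ x ∂μ, p x ≤ q x) :
    ∃ f : α → ℝ, Measurable f ∧ luxemburgNorm μ q f < ⊤ ∧ luxemburgNorm μ p f = ⊤ := by
  obtain ⟨s, M, hs, B, hB, hμB, hsM⟩ := exists_measure_ne_zero_of_not_ae_le hpm hqm hq hpq
  obtain ⟨h, hm, h1, htop⟩ := exists_lintegral_le_one_and_setLIntegral_rpow_eq_top hB hμB hs
  have hs0 : 0 < s := one_pos.trans hs
  let f : α → ℝ := fun x => (h x : ℝ) ^ (1 / q x)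
  have hqf : luxemburgModular μ q f 1 = ∫⁻ x, h x ∂μ := by
    simpa only [one_mul, ENNReal.rpow_one] using luxemburgModular_mul_rpow_one_div zero_le_one hq h
  refine ⟨f, by fun_prop, luxemburgNorm_lt_top_iff.2 ⟨1, one_pos, ?_⟩, ?_⟩
  · exact hqf.trans_le h1
  by_contra hne
  have hqB : ∀ᵐ x ∂μ.restrict B, 0 < q x := ae_restrict_of_ae hq
  have hsqB : ∀ᵐ x ∂μ.restrict B, 0 < s * q x := hqB.mono fun _ => mul_pos hs0
  have hspB : ∀ᵐ x ∂μ.restrict B, s * q x ≤ p x :=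
    ae_restrict_of_forall_mem hB fun x hx => (hsM x hx).1
  have hsMB : ∀ᵐ x ∂μ.restrict B, s * q x ≤ M :=
    ae_restrict_of_forall_mem hB fun x hx => (hsM x hx).1.trans (hsM x hx).2
  have hpB : luxemburgNorm (μ.restrict B) p f < ⊤ :=
    (luxemburgNorm_mono_measure Measure.restrict_le_self).trans_lt (lt_top_iff_ne_top.2 hne)
  have hsqf : luxemburgNorm (μ.restrict B) (fun x => s * q x) f < ⊤ :=
    luxemburgNorm_lt_top_of_ae_le (by fun_prop) (by fun_prop) hsqB hspB hpB
  have hfin : luxemburgModular (μ.restrict B) (fun x => s * q x) f 1 < ⊤ :=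
    luxemburgModular_lt_top_of_luxemburgNorm_lt_top (hsqB.mono fun _ => le_of_lt) hsMB zero_le_one
      hsqf
  exact hfin.ne ((luxemburgModular_mul_rpow_one_div hs0.le hqB h).trans htop)

theorem variable_exponent_embedding_general [IsFiniteMeasure μ] {p q : α → ℝ}
    (hpm : Measurable p) (hqm : Measurable q) (hp : ∀ᵐ x ∂μ, 0 < p x) (hq : ∀ᵐ x ∂μ, 0 < q x) :
    ((∀ f : α → ℝ, Measurable f → luxemburgNorm μ q f < ⊤ → luxemburgNorm μ p f < ⊤) ↔
      ∀ᵐ x ∂μ, p x ≤ q x) ∧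
    ((∀ᵐ x ∂μ, p x ≤ q x) → ∀ s : ℝ, 0 < s → (∀ᵐ x ∂μ, s ≤ p x) →
      ∀ f : α → ℝ, luxemburgNorm μ p f ≤ (1 + μ univ) ^ (1 / s) * luxemburgNorm μ q f) := by
  refine ⟨⟨fun hemb => ?_, fun hpq f hf => ?_⟩, fun hpq s hs hsp => ?_⟩
  · by_contra hpq
    obtain ⟨f, hf, hfq, hfp⟩ := exists_luxemburgNorm_lt_top_and_eq_top hpm hqm hq hpq
    exact (hemb f hf hfq).ne hfp
  · exact luxemburgNorm_lt_top_of_ae_le hpm.aemeasurable hf.aemeasurable hp hpq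
  · exact luxemburgNorm_le_rpow_mul_luxemburgNorm hs hsp hpq

end SmallSets

/-- Embedding of variable exponent Lebesgue spaces: `L^{q(·)}[0,1] ⊆ L^{p(·)}[0,1]`
iff `p ≤ q` a.e. on `[0,1]`, in which case `‖f‖_{p(·)} ≤ 2‖f‖_{q(·)}` for every
measurable `f`. -/
theorem variable_exponent_embedding (p q : ℝ → ℝ)
    (hpm : Measurable p) (hqm : Measurable q)
    (hp1 : ∀ t ∈ Set.Icc (0:ℝ) 1, 1 ≤ p t) (hq1 : ∀ t ∈ Set.Icc (0:ℝ) 1, 1 ≤ q t) :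
    ((∀ f : ℝ → ℝ, Measurable f → vpNorm q f < ⊤ → vpNorm p f < ⊤) ↔
      (∀ᵐ t ∂(volume.restrict (Set.Icc (0:ℝ) 1)), p t ≤ q t)) ∧
    ((∀ᵐ t ∂(volume.restrict (Set.Icc (0:ℝ) 1)), p t ≤ q t) →
      ∀ f : ℝ → ℝ, Measurable f → vpNorm p f ≤ 2 * vpNorm q f) := by
  have hp : ∀ᵐ t ∂volume.restrict (Icc (0 : ℝ) 1), 1 ≤ p t :=
    ae_restrict_of_forall_mem measurableSet_Icc hp1
  have hq : ∀ᵐ t ∂volume.restrict (Icc (0 : ℝ) 1), 1 ≤ q t :=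
    ae_restrict_of_forall_mem measurableSet_Icc hq1
  obtain ⟨hiff, hnorm⟩ := variable_exponent_embedding_general hpm hqm
    (hp.mono fun _ => one_pos.trans_le) (hq.mono fun _ => one_pos.trans_le)
  simp only [vpNorm_eq_luxemburgNorm]
  exact ⟨hiff, fun hpq f _ => by simpa [one_add_one_eq_two] using hnorm hpq 1 one_pos hp f⟩
end

section
/- Let Φ be a uniformly bounded orthonormal system on [0,1], let α > 0, and suppose that for each i ∈ ℕ there is a function g_i ∈ L¹[0,1] with ‖g_i‖_1 ≤ 2^{−i} and m({x ∈ (0,1) : S*(g_i, x) > 2^i}) > α. Then there is a strictly increasing sequence of indices i_1 < i_2 < ⋯ such that the function f(x) = Σ_{k=1}^∞ g_{i_k}(x) belongs to L¹[0,1] and the set of points x at which sup_{m≥1} |S_m(f,x)| = ∞ has positive Lebesgue measure. -/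
open MeasureTheory Set Filter

/-!
For `A : ℕ → Bool` let `f_A` be the sum of those `g_i` with `A i = true`, and apply the Baire
category theorem in the Cantor space `ℕ → Bool`. The Fourier coefficients of `f_A`, hence also
`S_m(f_A, x)` for each `m` and `x`, depend continuously on `A`, so the set of `A` for which
`S*(f_A, ·) > N` on a set of measure more than `α / 2` is open. It is dense: if `A₁` and `A₀` arise
from `A` by switching the `i`-th digit on and off, then `S_m(f_{A₁}) - S_m(f_{A₀}) = S_m(g_i)`, and
once `2 ^ i ≥ 2 N`, one of `S*(f_{A₁}, ·)`, `S*(f_{A₀}, ·)` exceeds `N` on a set of measure more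
than `α / 2`. A generic `A` has infinitely many digits `true` and lies in these sets for all `N`, so
`S*(f_A, ·) = ∞` on a set of measure at least `α / 2`.
-/

open scoped NNReal ENNReal Topology

section Topology

theorem tendsto_update_cofinite {ι : Type*} [DecidableEq ι] {X : ι → Type*}
    [∀ i, TopologicalSpace (X i)] (A b : ∀ i, X i) :
    Tendsto (fun i => Function.update A i (b i)) cofinite (𝓝 A) := by
  refine tendsto_pi_nhds.2 fun j => tendsto_const_nhds.congr' ?_
  filter_upwards [eventually_cofinite_ne j] with i hi
  exact (Function.update_of_ne hi.symm _ _).symm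

theorem dense_of_frequently_update_mem {ι : Type*} [DecidableEq ι] {X : ι → Type*}
    [∀ i, TopologicalSpace (X i)] {S : Set (∀ i, X i)}
    (h : ∀ A, ∃ᶠ i in cofinite, ∃ b, Function.update A i b ∈ S) : Dense S := by
  intro A
  have hchoice : ∀ i, ∃ b, (∃ b', Function.update A i b' ∈ S) → Function.update A i b ∈ S :=
    fun i => by
      by_cases hi : ∃ b', Function.update A i b' ∈ S
      · exact hi.imp fun _ hb _ => hb
      · exact ⟨A i, fun hi' => absurd hi' hi⟩
  choose b hb using hchoice
  exact mem_closure_of_frequently_of_tendsto ((h A).mono hb) (tendsto_update_cofinite A b)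

theorem eventually_residual_infinite_setOf_eq_true :
    ∀ᶠ A : ℕ → Bool in residual (ℕ → Bool), {i | A i = true}.Infinite := by
  have hopen : ∀ n, IsOpen {A : ℕ → Bool | ∃ i, n ≤ i ∧ A i = true} := fun n => by
    simp only [ofPred_exists, ofPred_and]
    exact isOpen_iUnion fun i => isOpen_const.inter
      ((isOpen_discrete {true}).preimage (continuous_apply (A := fun _ : ℕ => Bool) i))
  have hdense : ∀ n, Dense {A : ℕ → Bool | ∃ i, n ≤ i ∧ A i = true} := fun n => by
    refine dense_of_frequently_update_mem fun A => Eventually.frequently ?_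
    rw [Nat.cofinite_eq_atTop]
    filter_upwards [eventually_ge_atTop n] with i hi
    exact ⟨true, i, hi, Function.update_self ..⟩
  filter_upwards [eventually_countable_forall.2 fun n =>
    residual_of_dense_open (hopen n) (hdense n)] with A hA
  exact infinite_of_forall_exists_gt fun n => (hA (n + 1)).imp fun _ h => ⟨h.2, h.1⟩

end Topology

section Measure

variable {Ω : Type*} [MeasurableSpace Ω] {μ : Measure Ω}

theorem half_lt_measure_or_half_lt_measure {s t r : Set Ω} {a : ℝ≥0∞} (hr : a < μ r)
    (h : r ⊆ s ∪ t) : a / 2 < μ s ∨ a / 2 < μ t := by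
  by_contra! hst
  refine hr.not_ge ?_
  calc μ r ≤ μ s + μ t := (measure_mono h).trans (measure_union_le s t)
    _ ≤ a / 2 + a / 2 := add_le_add hst.1 hst.2
    _ = a := ENNReal.add_halves a

theorem le_measure_forall_exists_lt {κ : Type*} [Countable κ] [IsFiniteMeasure μ] {v : κ → Ω → ℝ}
    (hv : ∀ m, AEMeasurable (v m) μ) {c : ℝ≥0∞} (h : ∀ N : ℕ, c ≤ μ {x | ∃ m, N < v m x}) :
    c ≤ μ {x | ∀ B, ∃ m, B < v m x} := by
  have hmeas : ∀ N : ℕ, NullMeasurableSet {x | ∃ m, N < v m x} μ := fun N => by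
    simp only [ofPred_exists]
    exact .iUnion fun m => nullMeasurableSet_lt aemeasurable_const (hv m)
  have hanti : Antitone fun N : ℕ => {x | ∃ m, N < v m x} :=
    fun _ _ hN _ ⟨m, hm⟩ => ⟨m, (Nat.cast_le.2 hN).trans_lt hm⟩
  calc c ≤ ⨅ N : ℕ, μ {x | ∃ m, N < v m x} := le_iInf h
    _ = μ (⋂ N : ℕ, {x | ∃ m, N < v m x}) :=
      (hanti.measure_iInter hmeas ⟨0, measure_ne_top _ _⟩).symm
    _ ≤ μ {x | ∀ B, ∃ m, B < v m x} := measure_mono fun x hx B => by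
      obtain ⟨N, hN⟩ := exists_nat_ge B
      exact (mem_iInter.1 hx N).imp fun _ hm => hN.trans_lt hm

theorem lowerSemicontinuous_measure_setOf_mem {X : Type*} [TopologicalSpace X]
    [FirstCountableTopology X] {U : Ω → Set X} (hU : ∀ ω, IsOpen (U ω)) :
    LowerSemicontinuous fun x => μ {ω | x ∈ U ω} := by
  intro x c (hc : c < μ {ω | x ∈ U ω})
  obtain ⟨V, hV⟩ := (𝓝 x).exists_antitone_basis
  have hmono : Monotone fun n => {ω | V n ⊆ U ω} := fun _ _ hmn _ h => (hV.antitone hmn).trans h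
  have hunion : {ω | x ∈ U ω} = ⋃ n, {ω | V n ⊆ U ω} := by
    ext ω
    simp only [mem_ofPred_eq, mem_iUnion, ← hV.mem_iff, (hU ω).mem_nhds_iff]
  rw [hunion, hmono.measure_iUnion, lt_iSup_iff] at hc
  obtain ⟨n, hn⟩ := hc
  filter_upwards [hV.mem n] with y hy
  exact hn.trans_le (measure_mono fun _ h => h hy)

end Measure

section Subseries

variable {ι : Type*}

section AddCommMonoid

variable {E : Type*} [AddCommMonoid E] [TopologicalSpace E]

/-- The subseries of `∑ i, u i` over the indices selected by the point `A` of the Cantor space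
`ι → Bool`, with the usual convention that it is `0` if it does not converge. -/
noncomputable def subseries (u : ι → E) (A : ι → Bool) : E := ∑' i, bif A i then u i else 0

theorem tsum_nth_eq_subseries (u : ℕ → E) {A : ℕ → Bool} (hA : {i | A i = true}.Infinite) :
    ∑' k, u (Nat.nth (fun i => A i = true) k) = subseries u A := by
  have hsupp : (Function.support fun i => bif A i then u i else 0) ⊆
      range (Nat.nth fun i => A i = true) := by
    rw [Nat.range_nth_of_infinite hA]
    intro i hi
    by_contra hAi
    simp_all
  rw [subseries, ← (Nat.nth_injective hA).tsum_eq hsupp]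
  exact tsum_congr fun k => by rw [Nat.nth_mem_of_infinite hA k, cond_true]

end AddCommMonoid

section NormedAddCommGroup

variable {E : Type*} [NormedAddCommGroup E]

theorem norm_cond_zero_le (b : Bool) (v : E) : ‖bif b then v else 0‖ ≤ ‖v‖ := by
  cases b <;> simp

variable [CompleteSpace E] {u : ι → E}

theorem continuous_subseries (hu : Summable fun i => ‖u i‖) : Continuous (subseries u) :=
  continuous_tsum (fun i => (continuous_of_discreteTopology
    (f := fun b : Bool => bif b then u i else 0)).comp (continuous_apply i)) hu
    fun i A => norm_cond_zero_le (A i) (u i)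

theorem subseries_update_true_sub_update_false [DecidableEq ι] (hu : Summable fun i => ‖u i‖)
    (A : ι → Bool) (i : ι) :
    subseries u (Function.update A i true) - subseries u (Function.update A i false) = u i := by
  have hsum : ∀ B : ι → Bool, Summable fun j => bif B j then u j else 0 := fun B =>
    .of_norm_bounded hu fun j => norm_cond_zero_le (B j) (u j)
  rw [subseries, subseries, ← (hsum _).tsum_sub (hsum _), tsum_eq_single i]
  · simp
  · intro j hj
    simp [Function.update_of_ne hj]

end NormedAddCommGroup

end Subseries

section GenericSubseries

variable {Ω κ E : Type*} [MeasurableSpace Ω] {μ : Measure Ω} [NormedAddCommGroup E]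
  [CompleteSpace E] {u : ℕ → κ → Ω → E}

theorem isOpen_setOf_lt_measure_exists_lt_norm_subseries
    (hsum : ∀ m x, Summable fun i => ‖u i m x‖) (B : ℝ) (c : ℝ≥0∞) :
    IsOpen {A | c < μ {x | ∃ m, B < ‖subseries (u · m x) A‖}} := by
  refine (lowerSemicontinuous_measure_setOf_mem (μ := μ)
    (U := fun x => {A | ∃ m, B < ‖subseries (u · m x) A‖}) fun x => ?_).isOpen_preimage c
  simp only [ofPred_exists]
  exact isOpen_iUnion fun m => isOpen_lt continuous_const (continuous_subseries (hsum m x)).norm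

theorem dense_setOf_half_lt_measure_exists_lt_norm_subseries
    (hsum : ∀ m x, Summable fun i => ‖u i m x‖) {L : ℕ → ℝ} (hL : Tendsto L atTop atTop) {a : ℝ≥0∞}
    (hdiv : ∀ i, a < μ {x | ∃ m, L i < ‖u i m x‖}) (B : ℝ) :
    Dense {A | a / 2 < μ {x | ∃ m, B < ‖subseries (u · m x) A‖}} := by
  refine dense_of_frequently_update_mem fun A => Eventually.frequently ?_
  rw [Nat.cofinite_eq_atTop]
  filter_upwards [hL.eventually_ge_atTop (B + B)] with i hi
  have hcover : {x | ∃ m, L i < ‖u i m x‖} ⊆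
      {x | ∃ m, B < ‖subseries (u · m x) (Function.update A i true)‖} ∪
        {x | ∃ m, B < ‖subseries (u · m x) (Function.update A i false)‖} := by
    rintro x ⟨m, hm⟩
    rw [← subseries_update_true_sub_update_false (hsum m x) A i] at hm
    exact (lt_or_lt_of_add_lt_add (hi.trans_lt (hm.trans_le (norm_sub_le _ _)))).imp
      (fun h => ⟨m, h⟩) fun h => ⟨m, h⟩
  exact (half_lt_measure_or_half_lt_measure (hdiv i) hcover).elim
    (fun h => ⟨true, h⟩) fun h => ⟨false, h⟩

variable [Countable κ] [SecondCountableTopology E] [MeasurableSpace E] [BorelSpace E]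
  [IsFiniteMeasure μ]

theorem eventually_residual_half_le_measure_subseries_unbounded
    (hu : ∀ i m, AEMeasurable (u i m) μ) (hsum : ∀ m x, Summable fun i => ‖u i m x‖)
    {L : ℕ → ℝ} (hL : Tendsto L atTop atTop) {a : ℝ≥0∞}
    (hdiv : ∀ i, a < μ {x | ∃ m, L i < ‖u i m x‖}) :
    ∀ᶠ A in residual (ℕ → Bool),
      a / 2 ≤ μ {x | ∀ B : ℝ, ∃ m, B < ‖subseries (u · m x) A‖} := by
  have hmeas : ∀ A m, AEMeasurable (fun x => subseries (u · m x) A) μ := fun A m =>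
    AEMeasurable.tsum fun i => by cases A i <;> simp [hu]
  filter_upwards [eventually_countable_forall.2 fun N : ℕ => residual_of_dense_open
    (isOpen_setOf_lt_measure_exists_lt_norm_subseries hsum N (a / 2))
    (dense_setOf_half_lt_measure_exists_lt_norm_subseries hsum hL hdiv N)] with A hA
  exact le_measure_forall_exists_lt (fun m => (hmeas A m).norm) fun N => (hA N).le

theorem exists_strictMono_half_le_measure_tsum_unbounded
    (hu : ∀ i m, AEMeasurable (u i m) μ) (hsum : ∀ m x, Summable fun i => ‖u i m x‖)
    {L : ℕ → ℝ} (hL : Tendsto L atTop atTop) {a : ℝ≥0∞}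
    (hdiv : ∀ i, a < μ {x | ∃ m, L i < ‖u i m x‖}) :
    ∃ idx : ℕ → ℕ, StrictMono idx ∧
      a / 2 ≤ μ {x | ∀ B : ℝ, ∃ m, B < ‖∑' k, u (idx k) m x‖} := by
  obtain ⟨A, hinf, hA⟩ := (dense_of_mem_residual (eventually_residual_infinite_setOf_eq_true.and
    (eventually_residual_half_le_measure_subseries_unbounded hu hsum hL hdiv))).nonempty
  refine ⟨Nat.nth fun i => A i = true, Nat.nth_strictMono hinf, ?_⟩
  simpa only [← tsum_nth_eq_subseries _ hinf] using hA

end GenericSubseries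

section SeriesInL1

variable {Ω ι : Type*} [MeasurableSpace Ω] {μ : Measure Ω} [Countable ι]

theorem integrable_tsum_of_summable_integral_norm {E : Type*} [NormedAddCommGroup E]
    [CompleteSpace E] {g : ι → Ω → E} (hg : ∀ i, Integrable (g i) μ)
    (hs : Summable fun i => ∫ t, ‖g i t‖ ∂μ) : Integrable (fun t => ∑' i, g i t) μ := by
  have hfin : ∑' i, ‖(hg i).toL1 (g i)‖ₑ ≠ ∞ := by
    rw [tsum_enorm_ne_top_iff_summable_norm]
    simpa only [L1.norm_of_fun_eq_integral_norm] using hs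
  refine (L1.integrable_coeFn (∑' i, (hg i).toL1 (g i))).congr ?_
  filter_upwards [Lp.coeFn_tsum hfin, ae_all_iff.2 fun i => (hg i).coeFn_toL1] with t hsum hcoe
  rw [hsum]
  exact tsum_congr hcoe

theorem hasSum_integral_tsum_mul {𝕜 : Type*} [RCLike 𝕜] {g : ι → Ω → 𝕜}
    (hg : ∀ i, Integrable (g i) μ) (hs : Summable fun i => ∫ t, ‖g i t‖ ∂μ)
    {ψ : Ω → 𝕜} (hψ : MemLp ψ ∞ μ) :
    HasSum (fun i => ∫ t, g i t * ψ t ∂μ) (∫ t, (∑' i, g i t) * ψ t ∂μ) := by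
  have hint : ∀ i, Integrable (fun t => g i t * ψ t) μ := fun i => (hg i).mul_of_top_left hψ
  obtain ⟨C, hC⟩ : ∃ C : ℝ≥0, ∀ᵐ t ∂μ, ‖ψ t‖₊ ≤ C :=
    eLpNormEssSup_lt_top_iff_isBoundedUnder.1 (by simpa only [eLpNorm_exponent_top] using hψ.2)
  simp only [← tsum_mul_right]
  refine hasSum_integral_of_summable_integral_norm hint ?_
  refine .of_nonneg_of_le (fun i => integral_nonneg fun _ => norm_nonneg _) (fun i => ?_)
    (hs.mul_right (C : ℝ))
  rw [← integral_mul_const]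
  refine integral_mono_ae (hint i).norm ((hg i).norm.mul_const (C : ℝ)) ?_
  filter_upwards [hC] with t ht
  rw [norm_mul]
  exact mul_le_mul_of_nonneg_left ht (norm_nonneg _)

end SeriesInL1

section PartialSums

variable {φ : ℕ → ℝ → ℝ}

theorem aemeasurable_partialSum {μ : Measure ℝ} (hφ : ∀ n, 1 ≤ n → AEMeasurable (φ n) μ)
    (f : ℝ → ℝ) (m : ℕ) : AEMeasurable (partialSum φ f m) μ :=
  Finset.aemeasurable_fun_sum _ fun n hn => (hφ n (Finset.mem_Icc.1 hn).1).const_mul _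

theorem hasSum_partialSum {ι : Type*} [Countable ι]
    (hφ : ∀ n, 1 ≤ n → MemLp (φ n) ∞ (volume.restrict (Icc 0 1))) {g : ι → ℝ → ℝ}
    (hg : ∀ i, IntegrableOn (g i) (Icc 0 1)) (hs : Summable fun i => ∫ t in Icc 0 1, |g i t|)
    (m : ℕ) (x : ℝ) :
    HasSum (fun i => partialSum φ (g i) m x) (partialSum φ (fun t => ∑' i, g i t) m x) :=
  hasSum_sum fun n hn =>
    (hasSum_integral_tsum_mul hg hs (hφ n (Finset.mem_Icc.1 hn).1)).mul_right _

end PartialSums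

theorem gluing_lemma_general {φ : ℕ → ℝ → ℝ}
    (hφ : ∀ n, 1 ≤ n → MemLp (φ n) ∞ (volume.restrict (Icc 0 1))) {g : ℕ → ℝ → ℝ}
    (hg : ∀ i, IntegrableOn (g i) (Icc 0 1)) (hs : Summable fun i => ∫ t in Icc 0 1, |g i t|)
    {L : ℕ → ℝ} (hL : Tendsto L atTop atTop) {a : ℝ≥0∞}
    (hdiv : ∀ i, a < volume {x ∈ Icc (0 : ℝ) 1 | ∃ m, 1 ≤ m ∧ L i < |partialSum φ (g i) m x|}) :
    ∃ idx : ℕ → ℕ, StrictMono idx ∧ IntegrableOn (fun x => ∑' k, g (idx k) x) (Icc 0 1) ∧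
      a / 2 ≤ volume {x ∈ Icc (0 : ℝ) 1 | ∀ B : ℝ, ∃ m, 1 ≤ m ∧
        B < |partialSum φ (fun x => ∑' k, g (idx k) x) m x|} := by
  have hvol : ∀ p : ℝ → Prop, volume {x ∈ Icc (0 : ℝ) 1 | p x} =
      volume.restrict (Icc 0 1) {x | p x} := fun p => by
    rw [Measure.restrict_apply' measurableSet_Icc, inter_comm]
    rfl
  simp only [hvol] at hdiv ⊢
  obtain ⟨idx, hidx, hpos⟩ := exists_strictMono_half_le_measure_tsum_unbounded
    (u := fun i (m : {m : ℕ // 1 ≤ m}) => partialSum φ (g i) m)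
    (fun i m => aemeasurable_partialSum (fun n hn => (hφ n hn).1.aemeasurable) (g i) m)
    (fun m x => (hasSum_partialSum hφ hg hs m x).summable.norm) hL
    (by simpa only [Subtype.exists, exists_prop, Real.norm_eq_abs] using hdiv)
  have hs' : Summable fun k => ∫ t in Icc 0 1, |g (idx k) t| := hs.comp_injective hidx.injective
  refine ⟨idx, hidx, integrable_tsum_of_summable_integral_norm (fun k => hg (idx k)) hs', ?_⟩
  simpa only [(hasSum_partialSum hφ (fun k => hg (idx k)) hs' _ _).tsum_eq, Subtype.exists,
    exists_prop, Real.norm_eq_abs] using hpos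

/-- Bochkarev's gluing lemma: if for each `i` there is `g_i` with `‖g_i‖_1 ≤ 2^{-i}`
and `m({x ∈ (0,1) : S*(g_i,x) > 2^i}) > α > 0`, then for a suitable subsequence
`i_1 < i_2 < ⋯` the function `f = ∑_k g_{i_k}` is in `L¹[0,1]` and its Fourier series
diverges unboundedly on a set of positive measure. -/
theorem gluing_lemma (φ : ℕ → ℝ → ℝ) (M : ℝ)
    (hONS : IsONS φ) (hUB : UnifBounded φ M) (α : ℝ) (hα : 0 < α)
    (g : ℕ → ℝ → ℝ) (hgm : ∀ i, Measurable (g i))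
    (hgi : ∀ i, IntegrableOn (g i) (Set.Icc (0:ℝ) 1))
    (hg1 : ∀ i : ℕ, (∫ t in Set.Icc (0:ℝ) 1, |g i t|) ≤ ((2:ℝ) ^ i)⁻¹)
    (hgdiv : ∀ i : ℕ, ENNReal.ofReal α < volume {x ∈ Set.Ioo (0:ℝ) 1 |
      ∃ m : ℕ, 1 ≤ m ∧ (2:ℝ) ^ i < |partialSum φ (g i) m x|}) :
    ∃ idx : ℕ → ℕ, StrictMono idx ∧
      IntegrableOn (fun x => ∑' k, g (idx k) x) (Set.Icc (0:ℝ) 1) ∧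
      0 < volume {x ∈ Set.Icc (0:ℝ) 1 | ∀ B : ℝ, ∃ m : ℕ, 1 ≤ m ∧
        B < |partialSum φ (fun x => ∑' k, g (idx k) x) m x|} := by
  have hs : Summable fun i => ∫ t in Icc 0 1, |g i t| :=
    .of_nonneg_of_le (fun i => integral_nonneg fun _ => abs_nonneg _)
      (fun i => (hg1 i).trans_eq (by simp)) summable_geometric_two
  obtain ⟨idx, hidx, hint, hdiv⟩ := gluing_lemma_general
    (fun n hn => memLp_top_of_bound (hONS.1 n hn).aestronglyMeasurable M (hUB.2 n hn)) hgi hs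
    (tendsto_pow_atTop_atTop_of_one_lt one_lt_two)
    fun i => (hgdiv i).trans_le (measure_mono fun _ hx => ⟨Ioo_subset_Icc_self hx.1, hx.2⟩)
  exact ⟨idx, hidx, hint, (ENNReal.half_pos (ENNReal.ofReal_pos.2 hα).ne').trans_le hdiv⟩
end

section
/- Let h : (0,1] → ℝ be nonincreasing, let a > 0, and suppose there is a sequence t_k ↓ 0 with 2t_{k+1} < t_k and h(t_k) ≥ a·ln(e/t_k) for all k ∈ ℕ. Then for every real c > e^{1/a} one has ∫_{t_{k+1}}^{t_k} c^{h(t)} dt ≥ (t_k/2)·(e/t_k)^{a·ln c} for every k, this lower bound tends to +∞ as k → ∞, and consequently ∫_0^1 c^{h(t)} dt = +∞. -/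
open MeasureTheory Set Filter

/-!
On the interval `(t_{k+1}, t_k]`, whose length exceeds `t_k / 2`, monotonicity gives
`c ^ h(x) ≥ c ^ (a ln (e / t_k)) = (e / t_k) ^ (a ln c)`. The resulting bound is a constant times
`t_k ^ (1 - a ln c)`, which is unbounded because `c > e ^ (1 / a)` says exactly `a ln c > 1`.
-/

open scoped ENNReal Topology

theorem mul_measure_Ioc_le_setLIntegral_of_antitoneOn {α : Type*} [MeasurableSpace α]
    [LinearOrder α] [TopologicalSpace α] [ClosedIicTopology α] [OpensMeasurableSpace α]
    {f : α → ℝ≥0∞} {u v : α} (hf : AntitoneOn f (Ioc u v)) (μ : Measure α) :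
    f v * μ (Ioc u v) ≤ ∫⁻ x in Ioc u v, f x ∂μ := by
  rw [← setLIntegral_const]
  exact setLIntegral_mono' measurableSet_Ioc fun x hx =>
    hf hx (right_mem_Ioc.2 (hx.1.trans_le hx.2)) hx.2

theorem rpow_mul_log_comm {x y : ℝ} (hx : 0 < x) (hy : 0 < y) (a : ℝ) :
    x ^ (a * Real.log y) = y ^ (a * Real.log x) := by
  rw [Real.rpow_def_of_pos hx, Real.rpow_def_of_pos hy, mul_left_comm, mul_left_comm (Real.log y),
    mul_comm (Real.log x)]

theorem tendsto_mul_div_rpow_nhdsGT_zero {b p : ℝ} (hb : 0 < b) (hp : 1 < p) :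
    Tendsto (fun t => t * (b / t) ^ p) (𝓝[>] 0) atTop := by
  have hpow : Tendsto (fun t : ℝ => b ^ p * t ^ (1 - p)) (𝓝[>] 0) atTop :=
    (tendsto_rpow_neg_nhdsGT_zero (sub_neg.2 hp)).const_mul_atTop (Real.rpow_pos_of_pos hb p)
  refine hpow.congr' ?_
  filter_upwards [self_mem_nhdsWithin] with t ht
  rw [Real.div_rpow hb.le (le_of_lt ht), Real.rpow_sub ht, Real.rpow_one]
  ring

theorem one_lt_mul_log_iff {a c : ℝ} (ha : 0 < a) (hc : 0 < c) :
    1 < a * Real.log c ↔ Real.exp (1 / a) < c := by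
  rw [← div_lt_iff₀' ha, Real.lt_log_iff_exp_lt hc]

section LowerBound

variable {h : ℝ → ℝ} {a c r u v : ℝ}

theorem ofReal_sub_mul_rpow_le_setLIntegral_rpow (hanti : AntitoneOn h (Ioc u v)) (hc : 1 ≤ c)
    (hr : 0 < r) (hlb : a * Real.log r ≤ h v) :
    ENNReal.ofReal ((v - u) * r ^ (a * Real.log c)) ≤
      ∫⁻ x in Ioc u v, ENNReal.ofReal (c ^ h x) := by
  have hc₀ : 0 < c := zero_lt_one.trans_le hc
  have hf : AntitoneOn (fun x => ENNReal.ofReal (c ^ h x)) (Ioc u v) :=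
    (ENNReal.ofReal_mono.comp (Real.monotone_rpow_of_base_ge_one hc)).comp_antitoneOn hanti
  calc ENNReal.ofReal ((v - u) * r ^ (a * Real.log c))
      = ENNReal.ofReal (c ^ (a * Real.log r)) * volume (Ioc u v) := by
        rw [rpow_mul_log_comm hr hc₀, mul_comm, ENNReal.ofReal_mul (Real.rpow_nonneg hc₀.le _),
          Real.volume_Ioc]
    _ ≤ ENNReal.ofReal (c ^ h v) * volume (Ioc u v) := by gcongr
    _ ≤ ∫⁻ x in Ioc u v, ENNReal.ofReal (c ^ h x) :=
        mul_measure_Ioc_le_setLIntegral_of_antitoneOn hf volume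

theorem ofReal_half_mul_rpow_le_setLIntegral_rpow (hanti : AntitoneOn h (Ioc u v))
    (huv : 2 * u ≤ v) (hc : 1 ≤ c) (hr : 0 < r) (hlb : a * Real.log r ≤ h v) :
    ENNReal.ofReal (v / 2 * r ^ (a * Real.log c)) ≤
      ∫⁻ x in Ioc u v, ENNReal.ofReal (c ^ h x) := by
  have hlen : v / 2 ≤ v - u := by linarith
  calc ENNReal.ofReal (v / 2 * r ^ (a * Real.log c))
      ≤ ENNReal.ofReal ((v - u) * r ^ (a * Real.log c)) := by gcongr
    _ ≤ ∫⁻ x in Ioc u v, ENNReal.ofReal (c ^ h x) :=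
        ofReal_sub_mul_rpow_le_setLIntegral_rpow hanti hc hr hlb

end LowerBound

/-- If `h` is nonincreasing on `(0,1]`, `a > 0`, and `t_k ↓ 0` satisfies `2t_{k+1} < t_k`
and `h(t_k) ≥ a·ln(e/t_k)`, then for every `c > e^{1/a}` one has
`∫_{t_{k+1}}^{t_k} c^{h(t)} dt ≥ (t_k/2)·(e/t_k)^{a ln c}`, this lower bound tends to `+∞`,
and hence `∫_0^1 c^{h(t)} dt = +∞`. -/
theorem integral_exponential_blowup (h : ℝ → ℝ) (hanti : AntitoneOn h (Set.Ioc (0:ℝ) 1))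
    (a : ℝ) (ha : 0 < a) (t : ℕ → ℝ) (ht : ∀ k, t k ∈ Set.Ioc (0:ℝ) 1)
    (hhalf : ∀ k, 2 * t (k + 1) < t k) (htend : Tendsto t atTop (nhds 0))
    (hlb : ∀ k, a * Real.log (Real.exp 1 / t k) ≤ h (t k))
    (c : ℝ) (hc : Real.exp (1 / a) < c) :
    (∀ k, ENNReal.ofReal ((t k / 2) * (Real.exp 1 / t k) ^ (a * Real.log c)) ≤
        ∫⁻ x in Set.Ioc (t (k + 1)) (t k), ENNReal.ofReal (c ^ (h x))) ∧
      Tendsto (fun k => (t k / 2) * (Real.exp 1 / t k) ^ (a * Real.log c))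
        atTop atTop ∧
      (∫⁻ x in Set.Ioc (0:ℝ) 1, ENNReal.ofReal (c ^ (h x))) = ⊤ := by
  have hc₁ : 1 < c := (Real.one_lt_exp_iff.2 (one_div_pos.2 ha)).trans hc
  have hp : 1 < a * Real.log c := (one_lt_mul_log_iff ha (zero_lt_one.trans hc₁)).2 hc
  have hsub (k : ℕ) : Ioc (t (k + 1)) (t k) ⊆ Ioc 0 1 := Ioc_subset_Ioc (ht (k + 1)).1.le (ht k).2
  have hbound (k : ℕ) : ENNReal.ofReal ((t k / 2) * (Real.exp 1 / t k) ^ (a * Real.log c)) ≤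
      ∫⁻ x in Ioc (t (k + 1)) (t k), ENNReal.ofReal (c ^ h x) :=
    ofReal_half_mul_rpow_le_setLIntegral_rpow (hanti.mono (hsub k)) (hhalf k).le hc₁.le
      (div_pos (Real.exp_pos 1) (ht k).1) (hlb k)
  have ht₀ : Tendsto t atTop (𝓝[>] 0) :=
    tendsto_nhdsWithin_iff.2 ⟨htend, Eventually.of_forall fun k => (ht k).1⟩
  have hlim : Tendsto (fun k => (t k / 2) * (Real.exp 1 / t k) ^ (a * Real.log c))
      atTop atTop := by
    simpa only [Function.comp_def, div_mul_eq_mul_div] using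
      ((tendsto_mul_div_rpow_nhdsGT_zero (Real.exp_pos 1) hp).comp ht₀).atTop_div_const two_pos
  refine ⟨hbound, hlim, top_unique ?_⟩
  exact le_of_tendsto' (ENNReal.tendsto_ofReal_nhds_top.2 hlim) fun k =>
    (hbound k).trans (lintegral_mono_set (hsub k))
end

section
/- Let C > 0, let E ⊆ [0,1] be a measurable set with 0 < m(E) ≤ 1, and let p : [0,1] → [1,∞) be a measurable exponent satisfying 1 ≤ p(x) ≤ 1 + C/ln(e/m(E)) for a.e. x ∈ E. Then (1/2)·m(E) ≤ ‖χ_E‖_{p(·)} ≤ 2e^C·m(E). -/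
open MeasureTheory Set Filter

/-!
Write `m = m(E) ≤ 1`. For `r < 1` the modular of `χ_E / r` is at least `m / r`, because
`r⁻¹ ^ p ≥ r⁻¹`; so it exceeds `1` as soon as `r < m`. Conversely, the hypothesis on `p` reads
`(p - 1) (1 - log m) ≤ C`, so `m⁻¹ ^ (p - 1) ≤ e ^ C` on `E`; hence `(e ^ C m)⁻¹ ^ p ≤ m⁻¹` there
and the modular of `χ_E / (e ^ C m)` is at most `1`.
-/

section Modular

variable {α : Type*} [MeasurableSpace α] {μ : Measure α} {q : α → ℝ} {E : Set α} {b c : ℝ}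

/-- The modular `∫ |f| ^ q(x) dμ` of the variable exponent Lebesgue space `L^{q(·)}(μ)`, whose
sublevel set at height `1` is the unit ball of the Luxemburg norm. Exponents are real-valued, so
the exponent `∞` is not covered. -/
noncomputable def vpModular (μ : Measure α) (q f : α → ℝ) : ENNReal :=
  ∫⁻ x, ENNReal.ofReal (|f x| ^ q x) ∂μ

lemma vpModular_indicator_const (hE : NullMeasurableSet E μ) (hq : ∀ᵐ x ∂μ, q x ≠ 0) :
    vpModular μ q (E.indicator fun _ => c) = ∫⁻ x in E, ENNReal.ofReal (|c| ^ q x) ∂μ := by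
  rw [vpModular, ← lintegral_indicator₀ hE]
  refine lintegral_congr_ae ?_
  filter_upwards [hq] with x hx
  by_cases hxE : x ∈ E <;> simp [hxE, Real.zero_rpow hx]

lemma vpModular_indicator_const_le (hE : NullMeasurableSet E μ) (hq : ∀ᵐ x ∂μ, q x ≠ 0)
    (hb : ∀ᵐ x ∂μ.restrict E, |c| ^ q x ≤ b) :
    vpModular μ q (E.indicator fun _ => c) ≤ ENNReal.ofReal b * μ E := by
  rw [vpModular_indicator_const hE hq, ← setLIntegral_const]
  exact lintegral_mono_ae (hb.mono fun _ => ENNReal.ofReal_le_ofReal)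

lemma le_vpModular_indicator_const (hE : NullMeasurableSet E μ)
    (hb : ∀ᵐ x ∂μ.restrict E, b ≤ |c| ^ q x) :
    ENNReal.ofReal b * μ E ≤ vpModular μ q (E.indicator fun _ => c) := by
  rw [← setLIntegral_const]
  refine (lintegral_mono_ae ?_).trans (setLIntegral_le_lintegral E _)
  filter_upwards [hb, ae_restrict_mem₀ hE] with x hx hxE
  rw [indicator_of_mem hxE]
  exact ENNReal.ofReal_le_ofReal hx

end Modular

lemma vpNorm_indicator_one (q : ℝ → ℝ) (E : Set ℝ) :
    vpNorm q (E.indicator fun _ => 1) =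
      sInf {l | ∃ r : ℝ, 0 < r ∧ l = ENNReal.ofReal r ∧
        vpModular (volume.restrict (Icc 0 1)) q (E.indicator fun _ => r⁻¹) ≤ 1} := by
  have habs : ∀ r : ℝ, 0 < r → ∀ x,
      |E.indicator (fun _ => (1 : ℝ)) x| / r = |E.indicator (fun _ => r⁻¹) x| := by
    intro r hr x
    by_cases hx : x ∈ E <;> simp [hx, abs_of_pos hr]
  unfold vpNorm vpModular
  congr! 5 with l r
  refine and_congr_right fun hr => ?_
  simp only [habs r hr]

lemma inv_exp_mul_rpow_le_inv {C m q : ℝ} (hm : 0 < m) (hme : m < Real.exp 1) (hq1 : 1 ≤ q)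
    (hq : q ≤ 1 + C / Real.log (Real.exp 1 / m)) :
    (Real.exp C * m)⁻¹ ^ q ≤ m⁻¹ := by
  have hlog : Real.log (Real.exp 1 / m) = 1 - Real.log m := by
    rw [Real.log_div (Real.exp_ne_zero 1) hm.ne', Real.log_exp]
  have hlogm : 0 < 1 - Real.log m := sub_pos.mpr ((Real.log_lt_iff_lt_exp hm).mpr hme)
  have hqC : (q - 1) * (1 - Real.log m) ≤ C := by
    rwa [hlog, ← sub_le_iff_le_add', le_div_iff₀ hlogm] at hq
  have hC : 0 ≤ C := (mul_nonneg (sub_nonneg.mpr hq1) hlogm.le).trans hqC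
  have hqC_nonneg : 0 ≤ (q - 1) * C := mul_nonneg (sub_nonneg.mpr hq1) hC
  rw [← Real.log_le_log_iff (by positivity) (by positivity), Real.log_rpow (by positivity),
    Real.log_inv, Real.log_inv, Real.log_mul (Real.exp_ne_zero C) hm.ne', Real.log_exp]
  linarith

section Indicator

variable {E : Set ℝ} {p : ℝ → ℝ}

lemma volume_le_vpNorm_indicator_one (hE : NullMeasurableSet E) (hE01 : E ⊆ Icc 0 1)
    (hp1 : ∀ᵐ x ∂volume.restrict E, 1 ≤ p x) :
    volume E ≤ vpNorm p (E.indicator fun _ => 1) := by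
  rw [vpNorm_indicator_one]
  refine le_sInf ?_
  rintro _ ⟨r, hr, rfl, hmod⟩
  obtain hr1 | hr1 := le_total 1 r
  · calc volume E ≤ volume (Icc (0 : ℝ) 1) := measure_mono hE01
      _ = 1 := by simp
      _ ≤ ENNReal.ofReal r := ENNReal.one_le_ofReal.mpr hr1
  · have hrpow : ∀ᵐ x ∂(volume.restrict (Icc 0 1)).restrict E, r⁻¹ ≤ |r⁻¹| ^ p x := by
      rw [Measure.restrict_restrict_of_subset hE01]
      filter_upwards [hp1] with x hx
      rw [abs_of_pos (inv_pos.mpr hr)]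
      exact Real.self_le_rpow_of_one_le ((one_le_inv₀ hr).mpr hr1) hx
    have hle : ENNReal.ofReal r⁻¹ * volume.restrict (Icc 0 1) E ≤ 1 :=
      (le_vpModular_indicator_const (hE.mono Measure.restrict_le_self) hrpow).trans hmod
    rwa [Measure.restrict_eq_self _ hE01, ENNReal.ofReal_inv_of_pos hr,
      ENNReal.inv_mul_le_iff (ENNReal.ofReal_pos.mpr hr).ne' ENNReal.ofReal_ne_top,
      mul_one] at hle

lemma vpNorm_indicator_one_le {C : ℝ} (hE : NullMeasurableSet E) (hE01 : E ⊆ Icc 0 1)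
    (hEpos : 0 < volume E) (hp1 : ∀ᵐ x ∂volume.restrict (Icc 0 1), 1 ≤ p x)
    (hpe : ∀ᵐ x ∂volume.restrict E, p x ≤ 1 + C / Real.log (Real.exp 1 / (volume E).toReal)) :
    vpNorm p (E.indicator fun _ => 1) ≤ ENNReal.ofReal (Real.exp C * (volume E).toReal) := by
  have hE1 : volume E ≤ 1 := (measure_mono hE01).trans (by simp)
  have hEtop : volume E ≠ ⊤ := (hE1.trans_lt ENNReal.one_lt_top).ne
  have hm : 0 < (volume E).toReal := ENNReal.toReal_pos hEpos.ne' hEtop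
  have hme : (volume E).toReal < Real.exp 1 :=
    (ENNReal.toReal_mono ENNReal.one_ne_top hE1).trans_lt (Real.one_lt_exp_iff.mpr one_pos)
  have hrpow : ∀ᵐ x ∂(volume.restrict (Icc 0 1)).restrict E,
      |(Real.exp C * (volume E).toReal)⁻¹| ^ p x ≤ (volume E).toReal⁻¹ := by
    rw [Measure.restrict_restrict_of_subset hE01]
    filter_upwards [ae_restrict_of_ae_restrict_of_subset hE01 hp1, hpe] with x hx1 hxC
    rw [abs_of_pos (by positivity)]
    exact inv_exp_mul_rpow_le_inv hm hme hx1 hxC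
  rw [vpNorm_indicator_one]
  refine sInf_le ⟨_, by positivity, rfl, ?_⟩
  calc vpModular (volume.restrict (Icc 0 1)) p
        (E.indicator fun _ => (Real.exp C * (volume E).toReal)⁻¹)
    _ ≤ ENNReal.ofReal (volume E).toReal⁻¹ * volume.restrict (Icc 0 1) E :=
        vpModular_indicator_const_le (hE.mono Measure.restrict_le_self)
          (hp1.mono fun _ hx => (zero_lt_one.trans_le hx).ne') hrpow
    _ = (volume E)⁻¹ * volume E := by
        rw [Measure.restrict_eq_self _ hE01, ENNReal.ofReal_inv_of_pos hm,
          ENNReal.ofReal_toReal hEtop]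
    _ ≤ 1 := ENNReal.inv_mul_le_one _

theorem indicator_norm_two_sided_bound_general {C : ℝ} (hE : NullMeasurableSet E)
    (hE01 : E ⊆ Icc 0 1) (hEpos : 0 < volume E)
    (hp1 : ∀ᵐ x ∂volume.restrict (Icc 0 1), 1 ≤ p x)
    (hpe : ∀ᵐ x ∂volume.restrict E, p x ≤ 1 + C / Real.log (Real.exp 1 / (volume E).toReal)) :
    volume E ≤ vpNorm p (E.indicator fun _ => 1) ∧
      vpNorm p (E.indicator fun _ => 1) ≤ ENNReal.ofReal (Real.exp C * (volume E).toReal) :=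
  ⟨volume_le_vpNorm_indicator_one hE hE01 (ae_restrict_of_ae_restrict_of_subset hE01 hp1),
    vpNorm_indicator_one_le hE hE01 hEpos hp1 hpe⟩

end Indicator

/-- If the exponent `p` satisfies `1 ≤ p(x) ≤ 1 + C/ln(e/m(E))` a.e. on `E`, then
`(1/2)·m(E) ≤ ‖χ_E‖_{p(·)} ≤ 2e^C·m(E)`. -/
theorem indicator_norm_two_sided_bound (C : ℝ) (hC : 0 < C)
    (E : Set ℝ) (hE : MeasurableSet E) (hE01 : E ⊆ Set.Icc (0:ℝ) 1)
    (hEpos : 0 < volume E)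
    (p : ℝ → ℝ) (hpm : Measurable p) (hp1 : ∀ x ∈ Set.Icc (0:ℝ) 1, 1 ≤ p x)
    (hpe : ∀ᵐ x ∂(volume.restrict E),
      p x ≤ 1 + C / Real.log (Real.exp 1 / (volume E).toReal)) :
    ENNReal.ofReal ((volume E).toReal / 2) ≤
        vpNorm p (E.indicator fun _ => (1:ℝ)) ∧
      vpNorm p (E.indicator fun _ => (1:ℝ)) ≤
        ENNReal.ofReal (2 * Real.exp C * (volume E).toReal) := by
  have h := indicator_norm_two_sided_bound_general hE.nullMeasurableSet hE01 hEpos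
    (ae_restrict_of_forall_mem measurableSet_Icc hp1) hpe
  exact ⟨(ENNReal.ofReal_le_of_le_toReal (half_le_self ENNReal.toReal_nonneg)).trans h.1,
    h.2.trans (ENNReal.ofReal_le_ofReal (by gcongr; linarith [Real.exp_pos C]))⟩
end

section
/- For every p ∈ P_ln there exist a measure preserving transformation ω : [0,1] → [0,1] and a constant δ > 0 such that ‖χ_{(a,b)}‖_{p'(ω(·))} ≥ δ for every interval (a,b) ⊆ (0,1), where p'(t) = p(t)/(p(t) − 1) is the conjugate exponent and χ_{(a,b)} is the characteristic function of (a,b). -/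
open MeasureTheory Set Filter

/-- `ω : [0,1] → [0,1]` is a measure preserving transformation. -/
def MeasurePreserving01 (ω : ℝ → ℝ) : Prop :=
  Set.MapsTo ω (Set.Icc (0:ℝ) 1) (Set.Icc (0:ℝ) 1) ∧
    MeasurePreserving ω (volume.restrict (Set.Icc (0:ℝ) 1))
      (volume.restrict (Set.Icc (0:ℝ) 1))

/-- `p ∈ P_ln`: `p : [0,1] → [1,∞)` is increasing, `p(0) = 1`, `p(t) > 1` for `t ∈ (0,1]`
and `liminf_{t→0+} (p(t)-1) ln(e/t) < ∞` (i.e. the quantity is frequently bounded near `0+`). -/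
def MemPln (p : ℝ → ℝ) : Prop :=
  MonotoneOn p (Set.Icc (0:ℝ) 1) ∧ p 0 = 1 ∧ (∀ t ∈ Set.Ioc (0:ℝ) 1, 1 < p t) ∧
    ∃ C : ℝ, ∃ᶠ t in nhdsWithin 0 (Set.Ioi (0:ℝ)),
      (p t - 1) * Real.log (Real.exp 1 / t) ≤ C


/-! The transformation `ω` does not depend on `p`. Let `g(x) = inf_k 2^k |x - c_k|` for a dense
sequence `(c_k)`. The sublevel set `{g < s}` has measure `O(s)`, yet it contains an interval of
length comparable to `s` around each `c_k`. The level sets of `g` are null, so composing `g` with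
its own distribution function gives a measure preserving `ω`, and every interval `I ⊆ (0,1)`
satisfies `|I ∩ {ω ≤ t}| ≥ κ_I t` for all small `t`.

If moreover `(p(t) - 1) ln(e/t) ≤ C`, then `p'(ω) ≥ ln(e/t) / C` on `{0 < ω ≤ t}`. Dividing `χ_I`
by `r < e^{-2C}` therefore yields a modular of at least `(e/t)^2 κ_I t = e^2 κ_I / t`, which exceeds
`1` once `t` is small. -/

open ProbabilityTheory Topology

section ProbabilityIntegralTransform

variable (ν : Measure ℝ) [IsProbabilityMeasure ν] [NullSingletonClass ν]

theorem continuous_cdf : Continuous (cdf ν) := by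
  refine continuous_iff_continuousAt.2 fun x => ?_
  rw [(monotone_cdf ν).continuousAt_iff_leftLim_eq_rightLim, StieltjesFunction.rightLim_eq]
  have hjump : ENNReal.ofReal (cdf ν x - Function.leftLim (cdf ν) x) = 0 := by
    rw [← StieltjesFunction.measure_singleton, measure_cdf, measure_singleton]
  exact le_antisymm ((monotone_cdf ν).leftLim_le le_rfl)
    (sub_nonpos.1 (ENNReal.ofReal_eq_zero.1 hjump))

theorem Ioo_subset_range_cdf : Ioo 0 1 ⊆ range (cdf ν) := fun _ hu =>
  mem_range_of_exists_le_of_exists_ge (continuous_cdf ν)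
    ((tendsto_cdf_atBot ν).eventually (eventually_le_nhds hu.1)).exists
    ((tendsto_cdf_atTop ν).eventually (eventually_ge_nhds hu.2)).exists

theorem measure_setOf_cdf_le {u : ℝ} (hu : u ∈ Ico 0 1) :
    ν {x | cdf ν x ≤ u} = ENNReal.ofReal u := by
  apply le_antisymm
  · have hle : ∀ v ∈ Ioo u 1, ν {x | cdf ν x ≤ u} ≤ ENNReal.ofReal v := fun v hv => by
      obtain ⟨s, rfl⟩ := Ioo_subset_range_cdf ν ⟨hu.1.trans_lt hv.1, hv.2⟩
      rw [ofReal_cdf]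
      exact measure_mono fun x hx => ((monotone_cdf ν).reflect_lt (hx.trans_lt hv.1)).le
    have hlim : Tendsto ENNReal.ofReal (𝓝[>] u) (𝓝 (ENNReal.ofReal u)) :=
      (ENNReal.continuous_ofReal.tendsto u).mono_left nhdsWithin_le_nhds
    exact ge_of_tendsto hlim (Filter.mem_of_superset (Ioo_mem_nhdsGT hu.2) hle)
  · rcases hu.1.eq_or_lt with rfl | hu0
    · simp
    obtain ⟨s, rfl⟩ := Ioo_subset_range_cdf ν ⟨hu0, hu.2⟩
    rw [ofReal_cdf]
    exact measure_mono fun x hx => monotone_cdf ν hx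

theorem measurePreserving_cdf : MeasurePreserving (cdf ν) ν (volume.restrict (Icc 0 1)) := by
  have hmeas : Measurable (cdf ν) := (monotone_cdf ν).measurable
  have := Measure.isProbabilityMeasure_map (μ := ν) hmeas.aemeasurable
  refine ⟨hmeas, Measure.ext_of_Iic _ _ fun u => ?_⟩
  have hIic : Iic u ∩ Icc 0 1 = Icc 0 (min u 1) := by
    ext x
    simp only [mem_inter_iff, mem_Iic, mem_Icc, le_min_iff]
    tauto
  rw [Measure.map_apply hmeas measurableSet_Iic, Measure.restrict_apply measurableSet_Iic, hIic,
    Real.volume_Icc, sub_zero]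
  change ν {x | cdf ν x ≤ u} = _
  rcases lt_or_ge u 0 with hu0 | hu0
  · have hempty : {x | cdf ν x ≤ u} = ∅ :=
      eq_empty_of_forall_notMem fun x => (hu0.trans_le (cdf_nonneg ν x)).not_ge
    rw [hempty, measure_empty, ENNReal.ofReal_of_nonpos ((min_le_left u 1).trans hu0.le)]
  rcases lt_or_ge u 1 with hu1 | hu1
  · rw [min_eq_left hu1.le, measure_setOf_cdf_le ν ⟨hu0, hu1⟩]
  · have huniv : {x | cdf ν x ≤ u} = univ := eq_univ_of_forall fun x => (cdf_le_one ν x).trans hu1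
    rw [huniv, measure_univ, min_eq_right hu1, ENNReal.ofReal_one]

end ProbabilityIntegralTransform

/-- The infimum over `k` of the distance from `x` to the point `c k`, measured in units of `r k`.
For positive radii, its sublevel sets are unions of balls with radii proportional to `r`. -/
noncomputable def weightedInfDist (c r : ℕ → ℝ) (x : ℝ) : ℝ :=
  ⨅ k, |x - c k| / r k

section WeightedInfDist

variable {c r : ℕ → ℝ}

theorem measurable_weightedInfDist : Measurable (weightedInfDist c r) :=
  Measurable.iInf fun _ => by fun_prop

theorem setOf_weightedInfDist_lt (hr : ∀ k, 0 < r k) (s : ℝ) :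
    {x | weightedInfDist c r x < s} = ⋃ k, Metric.ball (c k) (s * r k) := by
  ext x
  have hbdd : BddBelow (range fun k => |x - c k| / r k) :=
    ⟨0, forall_mem_range.2 fun k => div_nonneg (abs_nonneg _) (hr k).le⟩
  simp only [weightedInfDist, mem_ofPred_eq, ciInf_lt_iff hbdd, mem_iUnion, Metric.mem_ball,
    Real.dist_eq, div_lt_iff₀ (hr _)]

theorem tsum_volume_ball_mul (hr : ∀ k, 0 ≤ r k) (hsum : Summable r) {s : ℝ} (hs : 0 ≤ s) :
    ∑' k, volume (Metric.ball (c k) (s * r k)) = ENNReal.ofReal (2 * s * ∑' k, r k) := by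
  simp only [Real.volume_ball, ← mul_assoc]
  rw [← tsum_mul_left, ENNReal.ofReal_tsum_of_nonneg
    (fun k => mul_nonneg (by positivity) (hr k)) (hsum.mul_left _)]

theorem volume_setOf_weightedInfDist_lt_le (hr : ∀ k, 0 < r k) (hsum : Summable r) {s : ℝ}
    (hs : 0 ≤ s) :
    volume {x | weightedInfDist c r x < s} ≤ ENNReal.ofReal (2 * s * ∑' k, r k) := by
  rw [setOf_weightedInfDist_lt hr, ← tsum_volume_ball_mul (c := c) (fun k => (hr k).le) hsum hs]
  exact measure_iUnion_le _

theorem ae_tendsto_abs_sub_div_atTop (hr : ∀ k, 0 < r k) (hsum : Summable r) :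
    ∀ᵐ x, Tendsto (fun k => |x - c k| / r k) atTop atTop := by
  have hBorelCantelli : ∀ M : ℕ, ∀ᵐ x, ∀ᶠ k in atTop, x ∉ Metric.ball (c k) (M * r k) := fun M =>
    ae_eventually_notMem <| by
      rw [tsum_volume_ball_mul (fun k => (hr k).le) hsum M.cast_nonneg]
      exact ENNReal.ofReal_ne_top
  filter_upwards [ae_all_iff.2 hBorelCantelli] with x hx
  refine tendsto_atTop.2 fun b => ?_
  obtain ⟨M, hM⟩ := exists_nat_ge b
  filter_upwards [hx M] with k hk
  rw [Metric.mem_ball, not_lt, Real.dist_eq] at hk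
  exact hM.trans ((le_div_iff₀ (hr k)).2 hk)

theorem volume_setOf_weightedInfDist_eq (hr : ∀ k, 0 < r k) (hsum : Summable r) (s : ℝ) :
    volume {x | weightedInfDist c r x = s} = 0 := by
  -- The infimum is attained almost everywhere, so up to a null set a level set is countable.
  have hattained : ∀ᵐ x, ∃ k, |x - c k| / r k = weightedInfDist c r x := by
    filter_upwards [ae_tendsto_abs_sub_div_atTop (c := c) hr hsum] with x hx
    rw [← Nat.cofinite_eq_atTop] at hx
    obtain ⟨k, hk⟩ := hx.exists_forall_le
    exact ⟨k, le_antisymm (le_ciInf hk) (ciInf_le ⟨_, forall_mem_range.2 hk⟩ k)⟩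
  have hcountable : (⋃ k, {c k + s * r k, c k - s * r k}).Countable :=
    countable_iUnion fun k => ((finite_singleton _).insert _).countable
  refine measure_mono_null_ae ?_ (hcountable.measure_zero volume)
  filter_upwards [hattained] with x ⟨k, hk⟩ hx
  rw [show weightedInfDist c r x = s from hx, div_eq_iff (hr k).ne'] at hk
  refine mem_iUnion.2 ⟨k, ?_⟩
  rcases abs_choice (x - c k) with h | h
  · exact Or.inl (by linarith)
  · exact Or.inr (show x = c k - s * r k by linarith)

end WeightedInfDist

theorem MeasurePreserving01.ae_pos {ω : ℝ → ℝ} (hω : MeasurePreserving01 ω) :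
    ∀ᵐ x ∂volume.restrict (Icc (0 : ℝ) 1), 0 < ω x := by
  have hpos : ∀ᵐ y ∂volume.restrict (Icc (0 : ℝ) 1), 0 < y := by
    filter_upwards [ae_restrict_mem measurableSet_Icc,
      compl_mem_ae_iff.2 (measure_singleton (0 : ℝ))] with y hy hy0
    exact hy.1.lt_of_ne' hy0
  exact hω.2.quasiMeasurePreserving.ae hpos

theorem exists_measurePreserving01_le_measure {g : ℝ → ℝ} (hg : Measurable g)
    (hlevel : ∀ s, volume {x | g x = s} = 0) :
    ∃ ω : ℝ → ℝ, MeasurePreserving01 ω ∧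
      ∀ x, ENNReal.ofReal (ω x) ≤ volume {y | g y ≤ g x} := by
  set μ := volume.restrict (Icc (0 : ℝ) 1)
  have : IsProbabilityMeasure μ := ⟨by simp [μ]⟩
  have := Measure.isProbabilityMeasure_map (μ := μ) hg.aemeasurable
  have : NullSingletonClass (μ.map g) := ⟨fun s => by
    rw [Measure.map_apply hg (measurableSet_singleton s)]
    exact Measure.absolutelyContinuous_of_le Measure.restrict_le_self (hlevel s)⟩
  refine ⟨cdf (μ.map g) ∘ g, ⟨fun _ _ => ⟨cdf_nonneg _ _, cdf_le_one _ _⟩,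
    (measurePreserving_cdf (μ.map g)).comp ⟨hg, rfl⟩⟩, fun x => ?_⟩
  rw [Function.comp_apply, ofReal_cdf, Measure.map_apply hg measurableSet_Iic]
  exact Measure.restrict_apply_le _ _

theorem exists_measurePreserving01_le_on_balls (c : ℕ → ℝ) {r : ℕ → ℝ} (hr : ∀ k, 0 < r k)
    (hsum : Summable r) :
    ∃ ω : ℝ → ℝ, MeasurePreserving01 ω ∧ ∀ k, ∀ s ≥ 0,
      ∀ x ∈ Metric.ball (c k) (s * r k), ω x ≤ 2 * s * ∑' j, r j := by
  obtain ⟨ω, hω, hωle⟩ := exists_measurePreserving01_le_measure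
    (measurable_weightedInfDist (c := c) (r := r)) (volume_setOf_weightedInfDist_eq hr hsum)
  refine ⟨ω, hω, fun k s hs x hx => ?_⟩
  have hxs : weightedInfDist c r x < s :=
    (setOf_weightedInfDist_lt hr s).ge (mem_iUnion.2 ⟨k, hx⟩)
  have hnonneg : 0 ≤ 2 * s * ∑' j, r j :=
    mul_nonneg (by positivity) (tsum_nonneg fun j => (hr j).le)
  refine (ENNReal.ofReal_le_ofReal_iff hnonneg).1 ?_
  calc ENNReal.ofReal (ω x)
      ≤ volume {y | weightedInfDist c r y ≤ weightedInfDist c r x} := hωle x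
    _ ≤ volume {y | weightedInfDist c r y < s} := measure_mono fun y (hy : _ ≤ _) => hy.trans_lt hxs
    _ ≤ ENNReal.ofReal (2 * s * ∑' j, r j) := volume_setOf_weightedInfDist_lt_le hr hsum hs

theorem exists_measurePreserving01_volume_inter_preimage_ge :
    ∃ ω : ℝ → ℝ, MeasurePreserving01 ω ∧ ∀ a b : ℝ, 0 ≤ a → a < b → b ≤ 1 →
      ∃ κ : ℝ, 0 < κ ∧ ∀ᶠ t in 𝓝[>] 0,
        ENNReal.ofReal (κ * t) ≤ volume (Ioo a b ∩ ω ⁻¹' Ioc 0 t) := by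
  let c := TopologicalSpace.denseSeq ℝ
  let r : ℕ → ℝ := fun k => (1 / 2) ^ k
  have hr : ∀ k, 0 < r k := fun k => by positivity
  obtain ⟨ω, hω, hωball⟩ := exists_measurePreserving01_le_on_balls c hr summable_geometric_two
  refine ⟨ω, hω, fun a b ha hab hb => ?_⟩
  obtain ⟨k, hk⟩ := (TopologicalSpace.denseRange_denseSeq ℝ).exists_mem_open isOpen_Ioo
    (nonempty_Ioo.2 hab)
  obtain ⟨ε, hε, hball⟩ := Metric.isOpen_iff.1 isOpen_Ioo _ hk
  refine ⟨r k / 2, half_pos (hr k), ?_⟩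
  filter_upwards [Ioo_mem_nhdsGT (div_pos (mul_pos four_pos hε) (hr k))] with t ⟨ht0, htε⟩
  have hradius : t / 4 * r k ≤ ε := by linarith [(lt_div_iff₀ (hr k)).1 htε]
  have hsubset : Metric.ball (c k) (t / 4 * r k) ⊆ Ioo a b :=
    (Metric.ball_subset_ball hradius).trans hball
  have hpos : ∀ᵐ x, x ∈ Icc (0 : ℝ) 1 → 0 < ω x := (ae_restrict_iff' measurableSet_Icc).1 hω.ae_pos
  calc ENNReal.ofReal (r k / 2 * t) = volume (Metric.ball (c k) (t / 4 * r k)) := by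
        rw [Real.volume_ball]
        ring_nf
    _ ≤ volume (Ioo a b ∩ ω ⁻¹' Ioc 0 t) := measure_mono_ae <| by
        filter_upwards [hpos] with x hx0 hx
        have hxab := hsubset hx
        refine ⟨hxab, hx0 (Icc_subset_Icc ha hb (Ioo_subset_Icc_self hxab)), ?_⟩
        refine (hωball k (t / 4) (by positivity) x hx).trans_eq ?_
        rw [tsum_geometric_two]
        ring

theorem ofReal_le_vpNorm {q f : ℝ → ℝ} {δ : ℝ}
    (h : ∀ r, 0 < r → r < δ → 1 < ∫⁻ x in Icc (0 : ℝ) 1, ENNReal.ofReal ((|f x| / r) ^ q x)) :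
    ENNReal.ofReal δ ≤ vpNorm q f := by
  refine le_sInf ?_
  rintro _ ⟨r, hr, rfl, hmodular⟩
  exact ENNReal.ofReal_le_ofReal (le_of_not_gt fun hlt => (h r hr hlt).not_ge hmodular)

theorem ofReal_le_vpNorm_indicator {q : ℝ → ℝ} {A S : Set ℝ} {δ Q : ℝ} (hδ0 : 0 < δ) (hδ1 : δ ≤ 1)
    (hS : MeasurableSet S) (hSA : S ⊆ A) (hSI : S ⊆ Icc 0 1) (hQ : 0 ≤ Q) (hq : ∀ x ∈ S, Q ≤ q x)
    (hvol : 1 < ENNReal.ofReal (δ⁻¹ ^ Q) * volume S) :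
    ENNReal.ofReal δ ≤ vpNorm q (A.indicator fun _ => 1) := by
  refine ofReal_le_vpNorm fun r hr hrδ => hvol.trans_le ?_
  have hinv : δ⁻¹ ≤ r⁻¹ := inv_anti₀ hr hrδ.le
  have hbound : ∀ x ∈ S, ENNReal.ofReal (δ⁻¹ ^ Q) ≤
      ENNReal.ofReal ((|A.indicator (fun _ => (1 : ℝ)) x| / r) ^ q x) := fun x hx => by
    rw [indicator_of_mem (hSA hx), abs_one, one_div]
    refine ENNReal.ofReal_le_ofReal ?_
    calc δ⁻¹ ^ Q ≤ r⁻¹ ^ Q := Real.rpow_le_rpow (by positivity) hinv hQ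
      _ ≤ r⁻¹ ^ q x :=
        Real.rpow_le_rpow_of_exponent_le (((one_le_inv₀ hδ0).2 hδ1).trans hinv) (hq x hx)
  calc ENNReal.ofReal (δ⁻¹ ^ Q) * volume S
      = ∫⁻ _ in S, ENNReal.ofReal (δ⁻¹ ^ Q) := (setLIntegral_const _ _).symm
    _ ≤ ∫⁻ x in S, ENNReal.ofReal ((|A.indicator (fun _ => (1 : ℝ)) x| / r) ^ q x) :=
        setLIntegral_mono' hS hbound
    _ ≤ _ := lintegral_mono_set hSI

theorem log_exp_one_div_pos {t : ℝ} (ht0 : 0 < t) (ht1 : t ≤ 1) :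
    0 < Real.log (Real.exp 1 / t) :=
  Real.log_pos <| (one_lt_div ht0).2 <| ht1.trans_lt <| Real.one_lt_exp_iff.2 one_pos

theorem MemPln.log_div_le_conjExponent {p : ℝ → ℝ} (hp : MemPln p) {C s t : ℝ} (hC : 0 < C)
    (hs : s ∈ Ioc 0 t) (ht1 : t ≤ 1) (hCt : (p t - 1) * Real.log (Real.exp 1 / t) ≤ C) :
    Real.log (Real.exp 1 / t) / C ≤ p s / (p s - 1) := by
  obtain ⟨hmono, -, hone, -⟩ := hp
  have hps : 1 < p s := hone s ⟨hs.1, hs.2.trans ht1⟩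
  have hlog := log_exp_one_div_pos (hs.1.trans_le hs.2) ht1
  have hpst : p s ≤ p t :=
    hmono ⟨hs.1.le, hs.2.trans ht1⟩ ⟨hs.1.le.trans hs.2, ht1⟩ hs.2
  rw [div_le_div_iff₀ hC (sub_pos.2 hps)]
  calc Real.log (Real.exp 1 / t) * (p s - 1)
      ≤ (p t - 1) * Real.log (Real.exp 1 / t) := by rw [mul_comm]; gcongr
    _ ≤ C := hCt
    _ ≤ p s * C := le_mul_of_one_le_left hC.le hps.le

theorem exp_two_mul_rpow_log_div {C y : ℝ} (hC : C ≠ 0) (hy : 0 < y) :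
    Real.exp (2 * C) ^ (Real.log y / C) = y ^ 2 := by
  rw [← Real.exp_mul, show 2 * C * (Real.log y / C) = Real.log y + Real.log y by field_simp; ring,
    Real.exp_add, Real.exp_log hy, sq]

theorem MemPln.ofReal_exp_le_vpNorm_indicator {p ω : ℝ → ℝ} (hp : MemPln p) (hω : Measurable ω)
    {A : Set ℝ} (hA : MeasurableSet A) (hAI : A ⊆ Icc 0 1) {C t κ : ℝ} (hC : 0 < C) (ht0 : 0 < t)
    (ht1 : t ≤ 1) (htκ : t ≤ κ) (hCt : (p t - 1) * Real.log (Real.exp 1 / t) ≤ C)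
    (hvol : ENNReal.ofReal (κ * t) ≤ volume (A ∩ ω ⁻¹' Ioc 0 t)) :
    ENNReal.ofReal (Real.exp (-(2 * C))) ≤
      vpNorm (fun x => p (ω x) / (p (ω x) - 1)) (A.indicator fun _ => 1) := by
  refine ofReal_le_vpNorm_indicator (Real.exp_pos _) (Real.exp_le_one_iff.2 (by linarith))
    (hA.inter (hω measurableSet_Ioc)) inter_subset_left (inter_subset_left.trans hAI)
    (div_pos (log_exp_one_div_pos ht0 ht1) hC).le
    (fun x hx => hp.log_div_le_conjExponent hC hx.2 ht1 hCt) ?_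
  rw [Real.exp_neg, inv_inv, exp_two_mul_rpow_log_div hC.ne' (by positivity)]
  calc (1 : ENNReal) < ENNReal.ofReal ((Real.exp 1 / t) ^ 2 * (κ * t)) := by
        rw [ENNReal.one_lt_ofReal, show (Real.exp 1 / t) ^ 2 * (κ * t) =
          Real.exp 1 ^ 2 * (κ / t) by field_simp]
        exact one_lt_mul_of_lt_of_le
          (one_lt_pow₀ (Real.one_lt_exp_iff.2 one_pos) two_ne_zero) ((one_le_div ht0).2 htκ)
    _ = ENNReal.ofReal ((Real.exp 1 / t) ^ 2) * ENNReal.ofReal (κ * t) :=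
        ENNReal.ofReal_mul (by positivity)
    _ ≤ ENNReal.ofReal ((Real.exp 1 / t) ^ 2) * volume (A ∩ ω ⁻¹' Ioc 0 t) := by gcongr

theorem indicator_intervals_uniformly_bounded_below_general :
    ∃ ω : ℝ → ℝ, MeasurePreserving01 ω ∧ ∀ p : ℝ → ℝ, MemPln p → ∃ δ : ℝ, 0 < δ ∧
      ∀ a b : ℝ, 0 ≤ a → a < b → b ≤ 1 →
        ENNReal.ofReal δ ≤
          vpNorm (fun t => p (ω t) / (p (ω t) - 1)) ((Ioo a b).indicator fun _ => 1) := by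
  obtain ⟨ω, hω, hvol⟩ := exists_measurePreserving01_volume_inter_preimage_ge
  refine ⟨ω, hω, fun p hp => ?_⟩
  obtain ⟨C, hC⟩ := hp.2.2.2
  refine ⟨Real.exp (-(2 * max C 1)), Real.exp_pos _, fun a b ha hab hb => ?_⟩
  obtain ⟨κ, hκ, hκvol⟩ := hvol a b ha hab hb
  obtain ⟨t, hCt, htvol, ht0, htlt⟩ :=
    (hC.and_eventually (hκvol.and (Ioo_mem_nhdsGT (lt_min one_pos hκ)))).exists
  exact hp.ofReal_exp_le_vpNorm_indicator hω.2.measurable measurableSet_Ioo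
    (Ioo_subset_Icc_self.trans (Icc_subset_Icc ha hb)) (lt_max_of_lt_right one_pos) ht0
    (htlt.le.trans (min_le_left _ _)) (htlt.le.trans (min_le_right _ _))
    (hCt.trans (le_max_left _ _)) htvol

/-- For `p ∈ P_ln` there are a measure preserving `ω : [0,1] → [0,1]` and `δ > 0` with
`‖χ_{(a,b)}‖_{p'(ω(·))} ≥ δ` for every interval `(a,b) ⊆ (0,1)`. -/
theorem indicator_intervals_uniformly_bounded_below (p : ℝ → ℝ) (hp : MemPln p) :
    ∃ ω : ℝ → ℝ, MeasurePreserving01 ω ∧ ∃ δ : ℝ, 0 < δ ∧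
      ∀ a b : ℝ, 0 ≤ a → a < b → b ≤ 1 →
        ENNReal.ofReal δ ≤
          vpNorm (fun t => p (ω t) / (p (ω t) - 1))
            ((Set.Ioo a b).indicator fun _ => (1:ℝ)) := by
  obtain ⟨ω, hω, hbound⟩ := indicator_intervals_uniformly_bounded_below_general
  exact ⟨ω, hω, hbound p hp⟩
end

section
/- For every f ∈ L¹[0,1] there exists a measurable function p : [0,1] → (1,∞) (i.e. p(x) > 1 everywhere) such that ∫_0^1 |f(x)|^{p(x)} dx < ∞; equivalently, L¹[0,1] = ⋃ L^{p(·)}[0,1], where the union is taken over all measurable exponents p with p(x) > 1 a.e. -/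
open MeasureTheory Set Filter

/-!
For `t > 0` the bound `t ^ δ ≤ e` means `δ * log t ≤ 1`, so `δ = 1 / (1 + |log t|)` is a positive
power whose effect on `t` is a factor of at most `e`. With `δ` taken at `t = |f x|`, the exponent
`p x = 1 + δ` satisfies `|f x| ^ p x ≤ e * |f x|` pointwise, and the right-hand side is integrable.
-/

open scoped ENNReal

/-- The exponent `1 + 1 / (1 + |log a|)`, which exceeds `1` by so little that raising `a` to it
costs at most a factor `e`. Both `0` and `∞` receive the exponent `2`, as `log 0 = 0` and
`ENNReal.toReal ∞ = 0`. -/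
noncomputable def logExponent (a : ℝ≥0∞) : ℝ :=
  1 + (1 + |Real.log a.toReal|)⁻¹

theorem one_lt_logExponent (a : ℝ≥0∞) : 1 < logExponent a :=
  lt_add_of_pos_right 1 (by positivity)

theorem measurable_logExponent : Measurable logExponent := by
  unfold logExponent
  fun_prop

theorem rpow_inv_one_add_abs_log_le_exp_one {t : ℝ} (ht : 0 < t) :
    t ^ (1 + |Real.log t|)⁻¹ ≤ Real.exp 1 := by
  rw [Real.rpow_def_of_pos ht, Real.exp_le_exp, ← div_eq_mul_inv, div_le_one (by positivity)]
  linarith [le_abs_self (Real.log t)]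

theorem rpow_logExponent_le (a : ℝ≥0∞) :
    a ^ logExponent a ≤ ENNReal.ofReal (Real.exp 1) * a := by
  rcases eq_or_ne a 0 with rfl | ha₀
  · simp [zero_lt_one.trans (one_lt_logExponent 0)]
  rcases eq_or_ne a ∞ with rfl | ha
  · simp [ENNReal.mul_top, Real.exp_pos]
  have ht : 0 < a.toReal := ENNReal.toReal_pos ha₀ ha
  calc a ^ logExponent a = a ^ (1 + |Real.log a.toReal|)⁻¹ * a := by
        rw [logExponent, ENNReal.rpow_add _ _ ha₀ ha, ENNReal.rpow_one, mul_comm]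
    _ ≤ ENNReal.ofReal (Real.exp 1) * a := by
        gcongr
        rw [← ENNReal.ofReal_toReal ha, ENNReal.ofReal_rpow_of_pos ht, ENNReal.toReal_ofReal ht.le]
        exact ENNReal.ofReal_le_ofReal (rpow_inv_one_add_abs_log_le_exp_one ht)

theorem lintegral_rpow_logExponent_le {α : Type*} [MeasurableSpace α] (μ : Measure α)
    (g : α → ℝ≥0∞) :
    ∫⁻ x, g x ^ logExponent (g x) ∂μ ≤ ENNReal.ofReal (Real.exp 1) * ∫⁻ x, g x ∂μ :=
  calc ∫⁻ x, g x ^ logExponent (g x) ∂μ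
      ≤ ∫⁻ x, ENNReal.ofReal (Real.exp 1) * g x ∂μ :=
        lintegral_mono fun x ↦ rpow_logExponent_le (g x)
    _ = ENNReal.ofReal (Real.exp 1) * ∫⁻ x, g x ∂μ :=
        lintegral_const_mul' _ _ ENNReal.ofReal_ne_top

theorem L1_is_union_of_variable_exponent_spaces_general {α ε : Type*} [MeasurableSpace α]
    {μ : Measure α} [TopologicalSpace ε] [ContinuousENorm ε] {f : α → ε} (hf : Integrable f μ) :
    ∃ p : α → ℝ, Measurable p ∧ (∀ x, 1 < p x) ∧ ∫⁻ x, ‖f x‖ₑ ^ p x ∂μ < ∞ := by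
  obtain ⟨g, hg, hfg⟩ := hf.aestronglyMeasurable.enorm
  refine ⟨fun x ↦ logExponent (g x), measurable_logExponent.comp hg,
    fun x ↦ one_lt_logExponent (g x), ?_⟩
  calc ∫⁻ x, ‖f x‖ₑ ^ logExponent (g x) ∂μ
      = ∫⁻ x, ‖f x‖ₑ ^ logExponent ‖f x‖ₑ ∂μ :=
        lintegral_congr_ae (hfg.mono fun x hx ↦ by simp only [hx])
    _ ≤ ENNReal.ofReal (Real.exp 1) * ∫⁻ x, ‖f x‖ₑ ∂μ := lintegral_rpow_logExponent_le μ _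
    _ < ∞ := ENNReal.mul_lt_top ENNReal.ofReal_lt_top hf.hasFiniteIntegral

/-- Every `f ∈ L¹[0,1]` lies in some variable exponent space `L^{p(·)}[0,1]` with
`p(x) > 1` everywhere: there is a measurable `p : [0,1] → (1,∞)` with
`∫_0^1 |f(x)|^{p(x)} dx < ∞`. -/
theorem L1_is_union_of_variable_exponent_spaces (f : ℝ → ℝ)
    (hfm : Measurable f) (hfi : IntegrableOn f (Set.Icc (0:ℝ) 1)) :
    ∃ p : ℝ → ℝ, Measurable p ∧ (∀ x, 1 < p x) ∧
      (∫⁻ x in Set.Icc (0:ℝ) 1, ENNReal.ofReal (|f x| ^ (p x))) < ⊤ := by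
  obtain ⟨p, hpm, hp, hfp⟩ := L1_is_union_of_variable_exponent_spaces_general hfi
  refine ⟨p, hpm, hp, ?_⟩
  simpa only [Real.enorm_eq_ofReal_abs,
    ENNReal.ofReal_rpow_of_nonneg (abs_nonneg _) (zero_le_one.trans (hp _).le)] using hfp
end
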